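/- arXiv:1404.5683 — 3 statements merged into one kernel-verified Lean document; each statement's English description precedes it below -/
import Mathlib

section
/- (Soft-covering lemma.) Let X and Y be finite sets and let P_{XY} be a joint probability mass function on X × Y with marginals P_X and P_Y, and conditional pmf P_{X|Y}(x|y) = P_{XY}(x,y)/P_Y(y) for y with P_Y(y) > 0. Fix R > I(X;Y), where I(X;Y) = ∑_{x,y} P_{XY}(x,y) log₂( P_{XY}(x,y) / (P_X(x) P_Y(y)) ). For each n, let the random codebook C^{(n)} consist of M_n = ⌈2^{nR}⌉ codewords Y^n(1), …, Y^n(M_n), where the codewords are mutually independent and each Y^n(m) has i.i.d. coordinates distributed according to P_Y. Let the induced output distribution on X^n be P^{C}_{X^n}(x^n) = (1/M_n) ∑_{m=1}^{M_n} ∏_{t=1}^{n} P_{X|Y}(x_t | Y_t(m)). Then the expectation over the random codebook of the total variation distance to the i.i.d. distribution vanishes: E_{C^{(n)}}[ ‖P^{C}_{X^n} − ∏_{t=1}^n P_X‖_TV ] → 0 as n → ∞. -/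
open Finset

/-- Total variation distance between two pmfs on a finite set,
`‖P − Q‖_TV = (1/2) ∑ₓ |P x − Q x|`. -/
noncomputable def tvDist {S : Type*} [Fintype S] (P Q : S → ℝ) : ℝ :=
  (1 / 2) * ∑ s, |P s - Q s|

/-- Mutual information (in bits) of a joint pmf given as `P : A → B → ℝ`:
`I = ∑_{a,b} P(a,b) log₂( P(a,b) / (P_A(a) P_B(b)) )`. -/
noncomputable def mutInf {A B : Type*} [Fintype A] [Fintype B] (P : A → B → ℝ) : ℝ :=
  ∑ a, ∑ b, P a b * Real.logb 2 (P a b / ((∑ b', P a b') * (∑ a', P a' b)))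

/-!
For a single use of the channel, split the joint distribution according to whether the information
density exceeds a threshold `γ`. Below the threshold, the conditional probabilities `P(x|y)` are at
most `2 ^ γ * P(x)`, so their average over `M` independent codewords has standard deviation at most
`√(2 ^ γ / M) * P(x)`; above the threshold, the triangle inequality costs twice the discarded
mass. Hence the expected total variation distance is at most
`√(2 ^ γ / M) / 2` plus the probability that the information density exceeds `γ`.

For `n` independent copies the information density is a sum of `n` i.i.d. terms with mean `I(X;Y)`.
With `γ = n * r` and `I(X;Y) < r < R` the first term decays exponentially, and by
Chebyshev's inequality the second is `O(1 / n)`.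
-/

section WeightedSums

variable {A : Type*} [Fintype A] {w : A → ℝ}

theorem sum_mul_abs_le_sqrt (hw : w ∈ stdSimplex ℝ A) (f : A → ℝ) :
    ∑ a, w a * |f a| ≤ √(∑ a, w a * f a ^ 2) := by
  apply Real.le_sqrt_of_sq_le
  simpa only [sq_abs] using Real.pow_arith_mean_le_arith_mean_pow univ w (fun a => |f a|)
    (fun a _ => hw.1 a) hw.2 (fun a _ => abs_nonneg (f a)) 2

theorem sum_mul_sub_mean_eq_zero (hw : ∑ a, w a = 1) (f : A → ℝ) :
    ∑ a, w a * (f a - ∑ b, w b * f b) = 0 := by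
  simp only [mul_sub, sum_sub_distrib, ← sum_mul, hw, one_mul, sub_self]

theorem sum_mul_sub_mean_sq_le (hw : ∑ a, w a = 1) (f : A → ℝ) :
    ∑ a, w a * (f a - ∑ b, w b * f b) ^ 2 ≤ ∑ a, w a * f a ^ 2 := by
  set μ := ∑ b, w b * f b with hμ
  calc ∑ a, w a * (f a - μ) ^ 2
      = ∑ a, (w a * f a ^ 2 - 2 * μ * (w a * f a) + μ ^ 2 * w a) :=
        sum_congr rfl fun a _ => by ring
    _ = ∑ a, w a * f a ^ 2 - μ ^ 2 := by
        rw [sum_add_distrib, sum_sub_distrib, ← mul_sum, ← mul_sum, hw, ← hμ]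
        ring
    _ ≤ ∑ a, w a * f a ^ 2 := sub_le_self _ (sq_nonneg μ)

theorem sum_filter_lt_le_sum_mul_sq_div (hw : ∀ a, 0 ≤ w a) (f : A → ℝ) {ε : ℝ} (hε : 0 < ε) :
    ∑ a with ε < f a, w a ≤ (∑ a, w a * f a ^ 2) / ε ^ 2 := by
  rw [sum_filter, sum_div]
  refine sum_le_sum fun a _ => ?_
  have := hw a
  split_ifs with h
  · rw [le_div_iff₀ (by positivity)]
    gcongr
  · positivity

theorem sum_mul_tvDist {S : Type*} [Fintype S] (w : A → ℝ) (F : A → S → ℝ) (Q : S → ℝ) :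
    ∑ a, w a * tvDist (F a) Q = 1 / 2 * ∑ s, ∑ a, w a * |F a s - Q s| := by
  simp only [tvDist, mul_left_comm _ (1 / 2 : ℝ), mul_sum]
  exact sum_comm

end WeightedSums

section Iid

open scoped BigOperators

variable {ι A : Type*} [Fintype ι]

/-- The law of an `ι`-indexed family of independent random variables with common probability mass
function `w`. -/
noncomputable def iidPMF (w : A → ℝ) (s : ι → A) : ℝ :=
  ∏ i, w (s i)

variable [DecidableEq ι] [Fintype A] {w : A → ℝ}

theorem sum_iidPMF_mul_prod (w : A → ℝ) (h : ι → A → ℝ) :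
    ∑ s, iidPMF w s * ∏ i, h i (s i) = ∏ i, ∑ a, w a * h i a := by
  simp only [iidPMF, ← prod_mul_distrib, Fintype.prod_sum]

theorem sum_iidPMF (w : A → ℝ) : ∑ s : ι → A, iidPMF w s = (∑ a, w a) ^ Fintype.card ι := by
  simpa using sum_iidPMF_mul_prod (ι := ι) w fun _ _ => 1

theorem iidPMF_mem_stdSimplex (hw : w ∈ stdSimplex ℝ A) :
    (iidPMF w : (ι → A) → ℝ) ∈ stdSimplex ℝ (ι → A) :=
  ⟨fun s => prod_nonneg fun i _ => hw.1 (s i), by rw [sum_iidPMF, hw.2, one_pow]⟩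

theorem sum_iidPMF_mul_apply (hw : ∑ a, w a = 1) (f : A → ℝ) (j : ι) :
    ∑ s, iidPMF w s * f (s j) = ∑ a, w a * f a := by
  have h := sum_iidPMF_mul_prod w fun (i : ι) a => if i = j then f a else 1
  rw [Fintype.prod_eq_single j fun i hi => by simp [hi, hw]] at h
  simpa using h

theorem sum_iidPMF_mul_apply_mul_apply (hw : ∑ a, w a = 1) (f g : A → ℝ) {j k : ι}
    (hjk : j ≠ k) :
    ∑ s, iidPMF w s * (f (s j) * g (s k)) = (∑ a, w a * f a) * ∑ a, w a * g a := by
  have h := sum_iidPMF_mul_prod w fun (i : ι) a =>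
    (if i = j then f a else 1) * (if i = k then g a else 1)
  rw [Fintype.prod_eq_mul j k hjk fun i hi => by simp [hi.1, hi.2, hw]] at h
  simpa only [prod_mul_distrib, prod_ite_eq', mem_univ, if_true, if_neg hjk, if_neg hjk.symm,
    one_mul, mul_one] using h

theorem sum_iidPMF_mul_sum_sq_of_centered (hw : ∑ a, w a = 1) {f : A → ℝ}
    (hf : ∑ a, w a * f a = 0) :
    ∑ s : ι → A, iidPMF w s * (∑ i, f (s i)) ^ 2 = Fintype.card ι * ∑ a, w a * f a ^ 2 := by
  have row_sum (j : ι) :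
      ∑ k, ∑ s, iidPMF w s * (f (s j) * f (s k)) = ∑ a, w a * f a ^ 2 := by
    rw [Fintype.sum_eq_single j fun k hk => by
      rw [sum_iidPMF_mul_apply_mul_apply hw f f hk.symm, hf, zero_mul]]
    simpa only [sq] using sum_iidPMF_mul_apply hw (fun a => f a * f a) j
  calc ∑ s : ι → A, iidPMF w s * (∑ i, f (s i)) ^ 2
      = ∑ s : ι → A, ∑ j, ∑ k, iidPMF w s * (f (s j) * f (s k)) := by
        simp_rw [sq, sum_mul_sum, mul_sum]
    _ = ∑ j : ι, ∑ k, ∑ s, iidPMF w s * (f (s j) * f (s k)) := by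
        rw [sum_comm]
        exact sum_congr rfl fun j _ => sum_comm
    _ = Fintype.card ι * ∑ a, w a * f a ^ 2 := by
        simp only [row_sum, sum_const, card_univ, nsmul_eq_mul]

variable [Nonempty ι]

theorem sum_iidPMF_mul_expect (hw : ∑ a, w a = 1) (f : A → ℝ) :
    ∑ s : ι → A, iidPMF w s * 𝔼 i, f (s i) = ∑ a, w a * f a := by
  simp only [mul_expect]
  rw [← expect_sum_comm]
  simp only [sum_iidPMF_mul_apply hw, Fintype.expect_const]

theorem sum_iidPMF_mul_expect_sub_mean_sq (hw : ∑ a, w a = 1) (f : A → ℝ) :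
    ∑ s : ι → A, iidPMF w s * (𝔼 i, f (s i) - ∑ a, w a * f a) ^ 2 =
      (∑ a, w a * (f a - ∑ b, w b * f b) ^ 2) / Fintype.card ι := by
  set μ := ∑ a, w a * f a
  have deviation (s : ι → A) :
      (𝔼 i, f (s i) - μ) ^ 2 = (∑ i, (f (s i) - μ)) ^ 2 / (Fintype.card ι : ℝ) ^ 2 := by
    rw [← div_pow, ← Fintype.expect_eq_sum_div_card, expect_sub_distrib, Fintype.expect_const]
  simp only [deviation, ← mul_div_assoc, ← sum_div]
  rw [sum_iidPMF_mul_sum_sq_of_centered hw (sum_mul_sub_mean_eq_zero hw f)]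
  change _ * (∑ a, w a * (f a - μ) ^ 2) / _ = _
  field_simp

theorem sum_iidPMF_mul_abs_expect_sub_mean_le_sqrt (hw : w ∈ stdSimplex ℝ A) (f : A → ℝ) :
    ∑ s : ι → A, iidPMF w s * |𝔼 i, f (s i) - ∑ a, w a * f a| ≤
      √((∑ a, w a * f a ^ 2) / Fintype.card ι) := by
  refine (sum_mul_abs_le_sqrt (iidPMF_mem_stdSimplex hw) _).trans ?_
  rw [sum_iidPMF_mul_expect_sub_mean_sq hw.2]
  exact Real.sqrt_le_sqrt <|
    div_le_div_of_nonneg_right (sum_mul_sub_mean_sq_le hw.2 f) (Nat.cast_nonneg _)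

theorem sum_iidPMF_mul_abs_expect_sub_mean_le_two_mul (hw : w ∈ stdSimplex ℝ A) (f : A → ℝ) :
    ∑ s : ι → A, iidPMF w s * |𝔼 i, f (s i) - ∑ a, w a * f a| ≤ 2 * ∑ a, w a * |f a| := by
  have hiid := iidPMF_mem_stdSimplex (ι := ι) hw
  have abs_mean_le : |∑ a, w a * f a| ≤ ∑ a, w a * |f a| :=
    (abs_sum_le_sum_abs _ _).trans_eq <|
      sum_congr rfl fun a _ => by rw [abs_mul, abs_of_nonneg (hw.1 a)]
  calc ∑ s : ι → A, iidPMF w s * |𝔼 i, f (s i) - ∑ a, w a * f a|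
      ≤ ∑ s : ι → A, iidPMF w s * (𝔼 i, |f (s i)| + ∑ a, w a * |f a|) :=
        sum_le_sum fun s _ => mul_le_mul_of_nonneg_left
          ((abs_sub _ _).trans (add_le_add (abs_expect_le _ _) abs_mean_le)) (hiid.1 s)
    _ = 2 * ∑ a, w a * |f a| := by
        simp only [mul_add, sum_add_distrib, ← sum_mul]
        rw [sum_iidPMF_mul_expect hw.2 fun a => |f a|, hiid.2]
        ring

theorem sum_iidPMF_mul_abs_expect_sub_mean_le_of_truncation (hw : w ∈ stdSimplex ℝ A)
    (f : A → ℝ) (p : A → Prop) [DecidablePred p] :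
    ∑ s : ι → A, iidPMF w s * |𝔼 i, f (s i) - ∑ a, w a * f a| ≤
      √((∑ a with p a, w a * f a ^ 2) / Fintype.card ι) + 2 * ∑ a with ¬p a, w a * |f a| := by
  let g a := if p a then f a else 0
  let h a := if p a then 0 else f a
  have split (a : A) : f a = g a + h a := by by_cases ha : p a <;> simp [g, h, ha]
  calc ∑ s : ι → A, iidPMF w s * |𝔼 i, f (s i) - ∑ a, w a * f a|
      ≤ ∑ s : ι → A, (iidPMF w s * |𝔼 i, g (s i) - ∑ a, w a * g a| +
          iidPMF w s * |𝔼 i, h (s i) - ∑ a, w a * h a|) := by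
        refine sum_le_sum fun s _ => ?_
        rw [← mul_add]
        refine mul_le_mul_of_nonneg_left ?_ ((iidPMF_mem_stdSimplex hw).1 s)
        simp only [split, mul_add, sum_add_distrib, expect_add_distrib, add_sub_add_comm]
        exact abs_add_le _ _
    _ ≤ √((∑ a, w a * g a ^ 2) / Fintype.card ι) + 2 * ∑ a, w a * |h a| := by
        rw [sum_add_distrib]
        exact add_le_add (sum_iidPMF_mul_abs_expect_sub_mean_le_sqrt hw g)
          (sum_iidPMF_mul_abs_expect_sub_mean_le_two_mul hw h)
    _ = _ := by simp [g, h, sum_filter, apply_ite]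

end Iid

section JointPMF

variable {X Y : Type*}

/-- The marginal `P_X` of a joint probability mass function. -/
noncomputable def fstMarginal [Fintype Y] (P : X × Y → ℝ) (x : X) : ℝ :=
  ∑ y, P (x, y)

/-- The marginal `P_Y` of a joint probability mass function. -/
noncomputable def sndMarginal [Fintype X] (P : X × Y → ℝ) (y : Y) : ℝ :=
  ∑ x, P (x, y)

/-- The conditional probability mass function `P_{X|Y}`, as a channel from `Y` to `X`; it is zero
at inputs of probability zero. -/
noncomputable def condPMF [Fintype X] (P : X × Y → ℝ) (y : Y) (x : X) : ℝ :=
  P (x, y) / sndMarginal P y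

/-- The information density in bits, whose mean is the mutual information. -/
noncomputable def infoDensity [Fintype X] [Fintype Y] (P : X × Y → ℝ) (z : X × Y) : ℝ :=
  Real.logb 2 (P z / (fstMarginal P z.1 * sndMarginal P z.2))

/-- The variance of the information density, which governs its concentration for i.i.d. copies. -/
noncomputable def infoVariance [Fintype X] [Fintype Y] (P : X × Y → ℝ) : ℝ :=
  ∑ z, P z * (infoDensity P z - mutInf fun x y => P (x, y)) ^ 2

variable {P : X × Y → ℝ}

theorem sum_fstMarginal [Fintype X] [Fintype Y] (P : X × Y → ℝ) :
    ∑ x, fstMarginal P x = ∑ z, P z :=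
  (Fintype.sum_prod_type P).symm

theorem sum_sndMarginal [Fintype X] [Fintype Y] (P : X × Y → ℝ) :
    ∑ y, sndMarginal P y = ∑ z, P z :=
  (Fintype.sum_prod_type_right P).symm

theorem fstMarginal_nonneg [Fintype Y] (hP : ∀ z, 0 ≤ P z) (x : X) : 0 ≤ fstMarginal P x :=
  sum_nonneg fun y _ => hP (x, y)

theorem sndMarginal_nonneg [Fintype X] (hP : ∀ z, 0 ≤ P z) (y : Y) : 0 ≤ sndMarginal P y :=
  sum_nonneg fun x _ => hP (x, y)

theorem le_fstMarginal [Fintype Y] (hP : ∀ z, 0 ≤ P z) (z : X × Y) : P z ≤ fstMarginal P z.1 :=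
  single_le_sum (f := fun y => P (z.1, y)) (fun y _ => hP (z.1, y)) (mem_univ z.2)

theorem le_sndMarginal [Fintype X] (hP : ∀ z, 0 ≤ P z) (z : X × Y) : P z ≤ sndMarginal P z.2 :=
  single_le_sum (f := fun x => P (x, z.2)) (fun x _ => hP (x, z.2)) (mem_univ z.1)

theorem condPMF_nonneg [Fintype X] (hP : ∀ z, 0 ≤ P z) (y : Y) (x : X) : 0 ≤ condPMF P y x :=
  div_nonneg (hP (x, y)) (sndMarginal_nonneg hP y)

theorem sndMarginal_mul_condPMF [Fintype X] (hP : ∀ z, 0 ≤ P z) (y : Y) (x : X) :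
    sndMarginal P y * condPMF P y x = P (x, y) :=
  mul_div_cancel_of_imp' fun hy => le_antisymm (hy ▸ le_sndMarginal hP (x, y)) (hP (x, y))

variable [Fintype X] [Fintype Y]

theorem sndMarginal_mem_stdSimplex (hP : P ∈ stdSimplex ℝ (X × Y)) :
    sndMarginal P ∈ stdSimplex ℝ Y :=
  ⟨sndMarginal_nonneg hP.1, (sum_sndMarginal P).trans hP.2⟩

theorem sum_mul_infoDensity (P : X × Y → ℝ) :
    ∑ z, P z * infoDensity P z = mutInf fun x y => P (x, y) :=
  Fintype.sum_prod_type _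

theorem condPMF_le_of_infoDensity_le (hP : ∀ z, 0 ≤ P z) {x : X} {y : Y} {γ : ℝ}
    (h : infoDensity P (x, y) ≤ γ) : condPMF P y x ≤ 2 ^ γ * fstMarginal P x := by
  rcases (hP (x, y)).eq_or_lt with hxy | hxy
  · rw [condPMF, ← hxy, zero_div]
    exact mul_nonneg (by positivity) (fstMarginal_nonneg hP x)
  · have hX : 0 < fstMarginal P x := hxy.trans_le (le_fstMarginal hP (x, y))
    have hY : 0 < sndMarginal P y := hxy.trans_le (le_sndMarginal hP (x, y))
    rw [infoDensity, Real.logb_le_iff_le_rpow one_lt_two (by positivity)] at h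
    rwa [condPMF, ← div_le_iff₀ hX, div_div, mul_comm]

end JointPMF

section OneShot

open scoped BigOperators

variable {X Y κ : Type*} [Fintype κ]

/-- The output law of the channel `W` when its input is a uniformly chosen codeword of the
codebook `C`. -/
noncomputable def inducedPMF (W : Y → X → ℝ) (C : κ → Y) (x : X) : ℝ :=
  𝔼 m, W (C m) x

theorem inducedPMF_eq (W : Y → X → ℝ) (C : κ → Y) :
    inducedPMF W C = fun x => (Fintype.card κ : ℝ)⁻¹ * ∑ m, W (C m) x :=
  funext fun _ => (Fintype.expect_eq_sum_div_card _).trans (div_eq_inv_mul _ _)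

variable [Fintype X] [Fintype Y] {P : X × Y → ℝ}

theorem sum_sndMarginal_mul_condPMF_sq_le (hP : ∀ z, 0 ≤ P z) (γ : ℝ) (x : X) :
    ∑ y with infoDensity P (x, y) ≤ γ, sndMarginal P y * condPMF P y x ^ 2 ≤
      2 ^ γ * fstMarginal P x ^ 2 := by
  calc ∑ y with infoDensity P (x, y) ≤ γ, sndMarginal P y * condPMF P y x ^ 2
      ≤ ∑ y with infoDensity P (x, y) ≤ γ, 2 ^ γ * fstMarginal P x * P (x, y) := by
        refine sum_le_sum fun y hy => ?_
        rw [sq, ← mul_assoc, sndMarginal_mul_condPMF hP, mul_comm]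
        exact mul_le_mul_of_nonneg_right
          (condPMF_le_of_infoDensity_le hP (mem_filter.1 hy).2) (hP (x, y))
    _ ≤ ∑ y, 2 ^ γ * fstMarginal P x * P (x, y) :=
        sum_le_sum_of_subset_of_nonneg (filter_subset _ _) fun y _ _ =>
          mul_nonneg (mul_nonneg (by positivity) (fstMarginal_nonneg hP x)) (hP (x, y))
    _ = 2 ^ γ * fstMarginal P x ^ 2 := by
        rw [← mul_sum, ← fstMarginal]
        ring

variable [DecidableEq κ] [Nonempty κ]

theorem sum_iidPMF_mul_abs_inducedPMF_sub_le (hP : P ∈ stdSimplex ℝ (X × Y)) (γ : ℝ) (x : X) :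
    ∑ C : κ → Y, iidPMF (sndMarginal P) C * |inducedPMF (condPMF P) C x - fstMarginal P x| ≤
      √(2 ^ γ / Fintype.card κ) * fstMarginal P x +
        2 * ∑ y with γ < infoDensity P (x, y), P (x, y) := by
  have bound := sum_iidPMF_mul_abs_expect_sub_mean_le_of_truncation (ι := κ)
    (sndMarginal_mem_stdSimplex hP) (fun y => condPMF P y x) (fun y => infoDensity P (x, y) ≤ γ)
  simp only [not_le, abs_of_nonneg (condPMF_nonneg hP.1 _ _), sndMarginal_mul_condPMF hP.1] at bound
  refine bound.trans (add_le_add_left ?_ _)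
  calc √((∑ y with infoDensity P (x, y) ≤ γ, sndMarginal P y * condPMF P y x ^ 2) /
          Fintype.card κ)
      ≤ √(2 ^ γ * fstMarginal P x ^ 2 / Fintype.card κ) := Real.sqrt_le_sqrt <|
        div_le_div_of_nonneg_right (sum_sndMarginal_mul_condPMF_sq_le hP.1 γ x)
          (Nat.cast_nonneg _)
    _ = √(2 ^ γ / Fintype.card κ) * fstMarginal P x := by
        rw [mul_div_right_comm, Real.sqrt_mul (by positivity),
          Real.sqrt_sq (fstMarginal_nonneg hP.1 x)]

theorem sum_iidPMF_mul_tvDist_inducedPMF_le (hP : P ∈ stdSimplex ℝ (X × Y)) (γ : ℝ) :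
    ∑ C : κ → Y, iidPMF (sndMarginal P) C * tvDist (inducedPMF (condPMF P) C) (fstMarginal P) ≤
      √(2 ^ γ / Fintype.card κ) / 2 + ∑ z with γ < infoDensity P z, P z := by
  calc _ = 1 / 2 * ∑ x, ∑ C : κ → Y, iidPMF (sndMarginal P) C *
          |inducedPMF (condPMF P) C x - fstMarginal P x| := sum_mul_tvDist _ _ _
    _ ≤ 1 / 2 * ∑ x, (√(2 ^ γ / Fintype.card κ) * fstMarginal P x +
          2 * ∑ y with γ < infoDensity P (x, y), P (x, y)) := by
        gcongr with x
        exact sum_iidPMF_mul_abs_inducedPMF_sub_le hP γ x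
    _ = √(2 ^ γ / Fintype.card κ) / 2 + ∑ z with γ < infoDensity P z, P z := by
        rw [sum_add_distrib, ← mul_sum, ← mul_sum, sum_fstMarginal, hP.2]
        simp only [sum_filter, Fintype.sum_prod_type]
        ring

end OneShot

section Block

variable {ι X Y : Type*} [Fintype ι]

/-- The joint law of `ι`-indexed i.i.d. copies of a pair, regarded as the law of a pair of
sequences. -/
noncomputable def iidJointPMF (P : X × Y → ℝ) (z : (ι → X) × (ι → Y)) : ℝ :=
  ∏ t, P (z.1 t, z.2 t)

/-- The memoryless extension of the channel `W` to `ι`-indexed sequences. -/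
noncomputable def memorylessChannel (W : Y → X → ℝ) (y : ι → Y) (x : ι → X) : ℝ :=
  ∏ t, W (y t) (x t)

variable {P : X × Y → ℝ}

theorem iidJointPMF_nonneg (hP : ∀ z, 0 ≤ P z) (z : (ι → X) × (ι → Y)) : 0 ≤ iidJointPMF P z :=
  prod_nonneg fun t _ => hP (z.1 t, z.2 t)

variable [DecidableEq ι]

theorem fstMarginal_iidJointPMF [Fintype Y] (P : X × Y → ℝ) :
    fstMarginal (iidJointPMF P) = (iidPMF (fstMarginal P) : (ι → X) → ℝ) :=
  funext fun x => (Fintype.prod_sum fun t y => P (x t, y)).symm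

variable [Fintype X]

theorem sndMarginal_iidJointPMF (P : X × Y → ℝ) :
    sndMarginal (iidJointPMF P) = (iidPMF (sndMarginal P) : (ι → Y) → ℝ) :=
  funext fun y => (Fintype.prod_sum fun t x => P (x, y t)).symm

theorem condPMF_iidJointPMF (P : X × Y → ℝ) :
    condPMF (iidJointPMF P) = (memorylessChannel (condPMF P) : (ι → Y) → (ι → X) → ℝ) := by
  ext y x
  rw [condPMF, sndMarginal_iidJointPMF]
  exact (prod_div_distrib _ _).symm

variable [Fintype Y]

theorem sum_iidJointPMF_mul (P : X × Y → ℝ) (F : (ι → X × Y) → ℝ) :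
    ∑ z, iidJointPMF P z * F (fun t => (z.1 t, z.2 t)) = ∑ s, iidPMF P s * F s :=
  (Equiv.arrowProdEquivProdArrow ι (fun _ => X) (fun _ => Y)).symm.sum_comp
    fun s => iidPMF P s * F s

theorem iidJointPMF_mem_stdSimplex (hP : P ∈ stdSimplex ℝ (X × Y)) :
    iidJointPMF P ∈ stdSimplex ℝ ((ι → X) × (ι → Y)) :=
  ⟨iidJointPMF_nonneg hP.1, by
    simpa [(iidPMF_mem_stdSimplex hP).2] using sum_iidJointPMF_mul (ι := ι) P fun _ => 1⟩

theorem infoDensity_iidJointPMF (hP : ∀ z, 0 ≤ P z) {z : (ι → X) × (ι → Y)}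
    (hz : iidJointPMF P z ≠ 0) :
    infoDensity (iidJointPMF P) z = ∑ t, infoDensity P (z.1 t, z.2 t) := by
  have hpos (t : ι) : 0 < P (z.1 t, z.2 t) :=
    (hP _).lt_of_ne' (prod_ne_zero_iff.1 hz t (mem_univ t))
  have ratio_ne (t : ι) :
      P (z.1 t, z.2 t) / (fstMarginal P (z.1 t) * sndMarginal P (z.2 t)) ≠ 0 :=
    (div_pos (hpos t) (mul_pos ((hpos t).trans_le (le_fstMarginal hP _))
      ((hpos t).trans_le (le_sndMarginal hP _)))).ne'
  rw [infoDensity, fstMarginal_iidJointPMF, sndMarginal_iidJointPMF]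
  simp only [infoDensity, iidJointPMF, iidPMF, ← prod_mul_distrib, ← prod_div_distrib]
  exact Real.logb_prod _ _ fun t _ => ratio_ne t

variable [Nonempty ι]

theorem sum_iidJointPMF_filter_lt_infoDensity_le (hP : P ∈ stdSimplex ℝ (X × Y)) {r : ℝ}
    (hr : mutInf (fun x y => P (x, y)) < r) :
    ∑ z : (ι → X) × (ι → Y) with Fintype.card ι * r < infoDensity (iidJointPMF P) z,
      iidJointPMF P z ≤ infoVariance P / (r - mutInf fun x y => P (x, y)) ^ 2 / Fintype.card ι := by
  set I := mutInf fun x y => P (x, y)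
  have hgap : 0 < r - I := sub_pos.2 hr
  let f z := infoDensity P z - I
  have centered : ∑ z, P z * f z = 0 := by
    simpa only [sum_mul_infoDensity] using sum_mul_sub_mean_eq_zero hP.2 (infoDensity P)
  have deviation {z : (ι → X) × (ι → Y)} (hz : iidJointPMF P z ≠ 0) :
      infoDensity (iidJointPMF P) z = ∑ t, f (z.1 t, z.2 t) + Fintype.card ι * I := by
    simp [f, infoDensity_iidJointPMF hP.1 hz]
  calc _ ≤ ∑ z : (ι → X) × (ι → Y) with Fintype.card ι * (r - I) < ∑ t, f (z.1 t, z.2 t),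
          iidJointPMF P z := by
        simp only [sum_filter]
        refine sum_le_sum fun z _ => ?_
        by_cases hz : iidJointPMF P z = 0
        · simp [hz]
        · simp only [deviation hz, mul_sub, sub_lt_iff_lt_add, le_refl]
    _ ≤ (∑ z, iidJointPMF P z * (∑ t, f (z.1 t, z.2 t)) ^ 2) / (Fintype.card ι * (r - I)) ^ 2 :=
        sum_filter_lt_le_sum_mul_sq_div (iidJointPMF_nonneg hP.1) _ (by positivity)
    _ = Fintype.card ι * infoVariance P / (Fintype.card ι * (r - I)) ^ 2 := by
        rw [sum_iidJointPMF_mul P fun s => (∑ t, f (s t)) ^ 2,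
          sum_iidPMF_mul_sum_sq_of_centered hP.2 centered, infoVariance]
    _ = infoVariance P / (r - I) ^ 2 / Fintype.card ι := by field_simp

theorem sum_iidPMF_mul_tvDist_inducedPMF_memorylessChannel_le {κ : Type*} [Fintype κ]
    [DecidableEq κ] [Nonempty κ] (hP : P ∈ stdSimplex ℝ (X × Y)) {r : ℝ}
    (hr : mutInf (fun x y => P (x, y)) < r) :
    ∑ C : κ → ι → Y, iidPMF (iidPMF (sndMarginal P)) C *
        tvDist (inducedPMF (memorylessChannel (condPMF P)) C) (iidPMF (fstMarginal P)) ≤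
      √(2 ^ (Fintype.card ι * r) / Fintype.card κ) / 2 +
        infoVariance P / (r - mutInf fun x y => P (x, y)) ^ 2 / Fintype.card ι := by
  rw [← fstMarginal_iidJointPMF, ← sndMarginal_iidJointPMF, ← condPMF_iidJointPMF]
  exact (sum_iidPMF_mul_tvDist_inducedPMF_le (iidJointPMF_mem_stdSimplex hP) _).trans
    (add_le_add_right (sum_iidJointPMF_filter_lt_infoDensity_le hP hr) _)

end Block

theorem tvDist_nonneg {S : Type*} [Fintype S] (P Q : S → ℝ) : 0 ≤ tvDist P Q :=
  mul_nonneg (by norm_num) (sum_nonneg fun s _ => abs_nonneg (P s - Q s))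

theorem tendsto_rpow_mul_div_ceil_rpow_mul {a b c : ℝ} (hc : 1 < c) (hab : a < b) :
    Filter.Tendsto (fun n : ℕ => c ^ (n * a) / ⌈c ^ (n * b)⌉₊) Filter.atTop (nhds 0) := by
  have hc0 : 0 < c := one_pos.trans hc
  refine squeeze_zero (fun n => by positivity) (fun n => ?_)
    (tendsto_pow_atTop_nhds_zero_of_lt_one (r := c ^ (a - b)) (by positivity)
      (Real.rpow_lt_one_of_one_lt_of_neg hc (sub_neg.2 hab)))
  calc c ^ (n * a) / ⌈c ^ (n * b)⌉₊ ≤ c ^ (n * a) / c ^ (n * b) := by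
        gcongr
        exact Nat.le_ceil _
    _ = (c ^ (a - b)) ^ n := by
        rw [← Real.rpow_sub hc0, ← Real.rpow_mul_natCast hc0.le]
        ring_nf

/-- Soft-covering lemma: Let `P_{XY}` be a joint pmf on the finite
set `X × Y` and let `R > I(X;Y)`.  For each `n`, draw a random codebook of
`⌈2^{nR}⌉` codewords in `Yⁿ`, mutually independent with i.i.d. coordinates of
law `P_Y`.  Then the expected total variation distance between the output
distribution on `Xⁿ` (select a codeword uniformly and pass it through the
memoryless channel `P_{X|Y}`) and the i.i.d. distribution `∏ₜ P_X` vanishes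
as `n → ∞`.  Here the expectation over the random codebook is written as the
finite sum over all codebooks `C : Fin ⌈2^{nR}⌉ → (Fin n → Y)` weighted by
`∏_{m,t} P_Y(C m t)`, and `P_{X|Y}(x|y) = P_{XY}(x,y)/P_Y(y)`. -/
theorem soft_covering_lemma {X Y : Type*} [Fintype X] [Fintype Y]
    (P : X × Y → ℝ)
    (hP0 : ∀ p, 0 ≤ P p) (hP1 : ∑ p, P p = 1)
    (R : ℝ)
    (hR : R > mutInf (fun x y => P (x, y))) :
    Filter.Tendsto
      (fun n : ℕ =>
        ∑ C : Fin (Nat.ceil ((2 : ℝ) ^ ((n : ℝ) * R))) → (Fin n → Y),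
          (∏ m, ∏ t, ∑ x', P (x', C m t)) *
            tvDist
              (fun xn : Fin n → X =>
                ((Nat.ceil ((2 : ℝ) ^ ((n : ℝ) * R)) : ℝ))⁻¹ *
                  ∑ m, ∏ t, P (xn t, C m t) / (∑ x', P (x', C m t)))
              (fun xn : Fin n → X => ∏ t, ∑ y', P (xn t, y')))
      Filter.atTop (nhds 0) := by
  set I := mutInf fun x y => P (x, y)
  obtain ⟨r, hIr, hrR⟩ := exists_between hR
  have hP : P ∈ stdSimplex ℝ (X × Y) := ⟨hP0, hP1⟩
  have hlim : Filter.Tendsto (fun n : ℕ =>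
      √(2 ^ (n * r) / ⌈(2 : ℝ) ^ (n * R)⌉₊) / 2 + infoVariance P / (r - I) ^ 2 / n)
      Filter.atTop (nhds 0) := by
    simpa using ((tendsto_rpow_mul_div_ceil_rpow_mul one_lt_two hrR).sqrt.div_const 2).add
      (tendsto_const_div_atTop_nhds_zero_nat (infoVariance P / (r - I) ^ 2))
  refine squeeze_zero' (Filter.Eventually.of_forall fun n => sum_nonneg fun C _ =>
    mul_nonneg (prod_nonneg fun m _ => prod_nonneg fun t _ => sndMarginal_nonneg hP0 (C m t))
      (tvDist_nonneg _ _)) ?_ hlim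
  filter_upwards [Filter.eventually_gt_atTop 0] with n hn
  have : NeZero n := ⟨hn.ne'⟩
  have : NeZero ⌈(2 : ℝ) ^ (n * R)⌉₊ := ⟨(Nat.ceil_pos.2 (by positivity)).ne'⟩
  have bound := sum_iidPMF_mul_tvDist_inducedPMF_memorylessChannel_le
    (ι := Fin n) (κ := Fin ⌈(2 : ℝ) ^ (n * R)⌉₊) hP hIr
  simp only [inducedPMF_eq, Fintype.card_fin] at bound
  exact bound
end

section
/- (Wyner-Ziv achievability via the likelihood encoder.) Let X, B, Y, V be finite sets, let P̄_{XB} be a joint pmf on X × B, and let d : X × Y → ℝ≥0 be a distortion measure. Suppose P̄_{V|X} is a conditional pmf and φ : V × B → Y is a function such that, for the joint pmf P̄(v,x,b) = P̄_{XB}(x,b) P̄_{V|X}(v|x) (so that V − X − B forms a Markov chain), E_{P̄}[ d(X, φ(V,B)) ] ≤ D. Then every rate R > I_{P̄}(X; V | B) is achievable for distortion D: there exists a sequence of (possibly stochastic) encoders f_n mapping X^n to a message set M_n with |M_n| ≤ ⌈2^{nR}⌉ and (possibly stochastic) decoders g_n mapping M_n × B^n to Y^n such that, for the i.i.d. source (X_t,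 B_t) ~ P̄_{XB}, lim sup_{n→∞} E[ (1/n) ∑_{t=1}^n d(X_t, Y_t) ] ≤ D, where Y^n = g_n(f_n(X^n), B^n). -/
open Finset

/-- Conditional mutual information (in bits) of a joint pmf `P : A → B → C → ℝ`:
`I(A;B|C) = ∑_{a,b,c} P(a,b,c) log₂( P(a,b,c) P_C(c) / (P_{AC}(a,c) P_{BC}(b,c)) )`. -/
noncomputable def condMutInf {A B C : Type*} [Fintype A] [Fintype B] [Fintype C]
    (P : A → B → C → ℝ) : ℝ :=
  ∑ a, ∑ b, ∑ c, P a b c *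
    Real.logb 2 ((P a b c * ∑ a', ∑ b', P a' b' c) /
      ((∑ b', P a b' c) * (∑ a', P a' b c)))

/-!
Draw a codebook `c : M × K → V` with independent entries from the law of `V`. The encoder picks an
index `(m, k)` and sends only `m`; the decoder recovers the bin index `k` from its side information
by looking for a codeword whose density `P(v, b) / (P(v) P(b))` with the observed `b` is large.

Picking the index with probability proportional to `P(x | c l)`, as the likelihood encoder does, is
the same as weighting it with `P(c l | x) / P(c l)`. The average weight over the codebook has mean
one, and a truncated second moment shows that it concentrates once `log |M × K|` exceeds `I(X; V)`
(soft covering). The expected cost of the weighted codebook is then, up to a small error, the cost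
of the test channel, and an encoder which chooses the best index does no worse than the weighted
average. By Markov's inequality a wrong bin index passes the decoder's threshold with small total
probability as long as `log |K|` is below `I(V; B)` (packing).

For blocks of length `n` the weak law of large numbers concentrates both log densities around
`n * I(X; V)` and `n * I(V; B)`, and the Markov chain `V - X - B` gives
`I(X; V | B) = I(X; V) - I(V; B)`, which is the rate left for `M`.
-/

open Filter
open scoped BigOperators Topology

section Expectation

variable {Ω Ω' : Type*} [Fintype Ω] [Fintype Ω'] {p : Ω → ℝ}

/-- Expectation of `F` under the mass function `p`. That `p` is nonnegative and sums to one is not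
built in; lemmas needing it assume `p ∈ stdSimplex ℝ Ω`. -/
def expectation (p F : Ω → ℝ) : ℝ := ∑ ω, p ω * F ω

/-- Probability of the event `A` under the mass function `p`. -/
noncomputable def prob (p : Ω → ℝ) (A : Set Ω) : ℝ := expectation p (A.indicator 1)

lemma expectation_add (F G : Ω → ℝ) :
    expectation p (fun ω => F ω + G ω) = expectation p F + expectation p G := by
  simp only [expectation, mul_add, sum_add_distrib]

lemma expectation_sub (F G : Ω → ℝ) :
    expectation p (fun ω => F ω - G ω) = expectation p F - expectation p G := by
  simp only [expectation, mul_sub, sum_sub_distrib]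

lemma expectation_const_mul (a : ℝ) (F : Ω → ℝ) :
    expectation p (fun ω => a * F ω) = a * expectation p F := by
  simp only [expectation, mul_sum, mul_left_comm]

lemma expectation_sum {κ : Type*} (s : Finset κ) (F : κ → Ω → ℝ) :
    expectation p (fun ω => ∑ k ∈ s, F k ω) = ∑ k ∈ s, expectation p (F k) := by
  simp only [expectation, mul_sum]
  exact sum_comm

lemma expectation_expect {κ : Type*} (s : Finset κ) (F : κ → Ω → ℝ) :
    expectation p (fun ω => 𝔼 k ∈ s, F k ω) = 𝔼 k ∈ s, expectation p (F k) := by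
  simp only [expectation, mul_expect]
  exact (expect_sum_comm _ _ _).symm

lemma expectation_comm (q : Ω' → ℝ) (F : Ω → Ω' → ℝ) :
    expectation p (fun ω => expectation q (F ω)) =
      expectation q (fun ω' => expectation p fun ω => F ω ω') := by
  simp only [expectation, mul_sum]
  rw [sum_comm]
  simp only [mul_left_comm]

lemma expectation_const (hp : p ∈ stdSimplex ℝ Ω) (a : ℝ) : expectation p (fun _ => a) = a := by
  rw [expectation, ← sum_mul, hp.2, one_mul]

lemma expectation_nonneg (hp : 0 ≤ p) {F : Ω → ℝ} (hF : 0 ≤ F) : 0 ≤ expectation p F :=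
  sum_nonneg fun ω _ => mul_nonneg (hp ω) (hF ω)

lemma expectation_mono_of_pos (hp : 0 ≤ p) {F G : Ω → ℝ} (h : ∀ ω, 0 < p ω → F ω ≤ G ω) :
    expectation p F ≤ expectation p G := by
  refine sum_le_sum fun ω _ => ?_
  rcases (hp ω).eq_or_lt' with h0 | hpos
  · simp [h0]
  · exact mul_le_mul_of_nonneg_left (h ω hpos) (hp ω)

lemma expectation_mono (hp : 0 ≤ p) {F G : Ω → ℝ} (h : ∀ ω, F ω ≤ G ω) :
    expectation p F ≤ expectation p G :=
  expectation_mono_of_pos hp fun ω _ => h ω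

lemma exists_le_expectation (hp : p ∈ stdSimplex ℝ Ω) (F : Ω → ℝ) : ∃ ω, F ω ≤ expectation p F := by
  have : Nonempty Ω := univ_nonempty_iff.1 (nonempty_of_sum_ne_zero (hp.2.trans_ne one_ne_zero))
  obtain ⟨ω, hω⟩ := Finite.exists_min F
  exact ⟨ω, (expectation_const hp (F ω)).symm.trans_le (expectation_mono hp.1 hω)⟩

lemma expectation_le_sqrt (hp : p ∈ stdSimplex ℝ Ω) (F : Ω → ℝ) :
    expectation p F ≤ √(expectation p fun ω => F ω ^ 2) :=
  Real.le_sqrt_of_sq_le <| Real.pow_arith_mean_le_arith_mean_pow_of_even univ p F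
    (fun ω _ => hp.1 ω) hp.2 even_two

lemma expectation_sq_sub_expectation_le (hp : p ∈ stdSimplex ℝ Ω) (F : Ω → ℝ) :
    expectation p (fun ω => (F ω - expectation p F) ^ 2) ≤ expectation p fun ω => F ω ^ 2 := by
  set μ := expectation p F
  have variance_eq : expectation p (fun ω => (F ω - μ) ^ 2)
      = expectation p (fun ω => F ω ^ 2) - μ ^ 2 := by
    have expand (ω : Ω) : (F ω - μ) ^ 2 = F ω ^ 2 - 2 * μ * F ω + μ ^ 2 := by ring
    simp only [expand, expectation_add, expectation_sub, expectation_const_mul,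
      expectation_const hp]
    ring
  linarith [sq_nonneg μ]

lemma prob_nonneg (hp : 0 ≤ p) (A : Set Ω) : 0 ≤ prob p A :=
  expectation_nonneg hp (Set.indicator_nonneg fun _ _ => zero_le_one)

lemma prob_mono_of_pos (hp : 0 ≤ p) {A A' : Set Ω} (h : ∀ ω, 0 < p ω → ω ∈ A → ω ∈ A') :
    prob p A ≤ prob p A' := by
  refine expectation_mono_of_pos hp fun ω hω => ?_
  by_cases hA : ω ∈ A
  · simp [hA, h ω hω hA]
  · rw [Set.indicator_of_notMem hA]
    exact Set.indicator_nonneg (fun _ _ => zero_le_one) ω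

lemma prob_compl (hp : p ∈ stdSimplex ℝ Ω) (A : Set Ω) : prob p Aᶜ = 1 - prob p A := by
  simp only [prob, Set.indicator_compl, Pi.sub_def, Pi.one_apply]
  rw [expectation_sub, expectation_const hp]

lemma prob_le_expectation_div (hp : 0 ≤ p) {F : Ω → ℝ} (hF : 0 ≤ F) {a : ℝ} (ha : 0 < a) :
    prob p {ω | a ≤ F ω} ≤ expectation p F / a := by
  rw [div_eq_inv_mul, ← expectation_const_mul]
  refine expectation_mono hp <| Set.indicator_le' (g := fun ω => a⁻¹ * F ω) (fun ω hω => ?_)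
    fun ω _ => mul_nonneg (inv_nonneg.2 ha.le) (hF ω)
  rwa [Pi.one_apply, inv_mul_eq_div, one_le_div₀ ha]

end Expectation

section Iid

variable {ι V : Type*} [Fintype ι]

/-- Law of a family indexed by `ι` of independent variables, each with mass function `q`. -/
def iid (ι : Type*) [Fintype ι] (q : V → ℝ) : (ι → V) → ℝ := fun c => ∏ i, q (c i)

lemma iid_nonneg {q : V → ℝ} (hq : 0 ≤ q) : 0 ≤ iid ι q := fun _ => prod_nonneg fun _ _ => hq _

lemma pos_of_iid_pos {q : V → ℝ} (hq : 0 ≤ q) {c : ι → V} (h : 0 < iid ι q c) (i : ι) :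
    0 < q (c i) :=
  (hq _).lt_of_ne' fun h0 => h.ne' (prod_eq_zero (mem_univ i) h0)

variable [DecidableEq ι] [Fintype V] {q : V → ℝ}

lemma iid_mem_stdSimplex (hq : q ∈ stdSimplex ℝ V) : iid ι q ∈ stdSimplex ℝ (ι → V) :=
  ⟨iid_nonneg hq.1, by simp [iid, ← Fintype.prod_sum fun _ : ι => q, hq.2]⟩

lemma expectation_iid_prod (hq : q ∈ stdSimplex ℝ V) (s : Finset ι) (h : ι → V → ℝ) :
    expectation (iid ι q) (fun c => ∏ i ∈ s, h i (c i)) = ∏ i ∈ s, expectation q (h i) := by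
  have factor (i : ι) : expectation q (fun v => if i ∈ s then h i v else 1) =
      if i ∈ s then expectation q (h i) else 1 := by
    split_ifs
    exacts [rfl, expectation_const hq 1]
  calc expectation (iid ι q) (fun c => ∏ i ∈ s, h i (c i))
      = expectation (iid ι q) (fun c => ∏ i, if i ∈ s then h i (c i) else 1) := by
        simp only [Fintype.prod_ite_mem]
    _ = ∏ i, expectation q (fun v => if i ∈ s then h i v else 1) := by
        simp only [expectation, iid, ← prod_mul_distrib, Fintype.prod_sum]
    _ = ∏ i ∈ s, expectation q (h i) := by
        simp only [factor, Fintype.prod_ite_mem]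

lemma expectation_iid_apply (hq : q ∈ stdSimplex ℝ V) (i : ι) (f : V → ℝ) :
    expectation (iid ι q) (fun c => f (c i)) = expectation q f := by
  simpa only [prod_singleton] using expectation_iid_prod hq {i} fun _ => f

lemma expectation_iid_apply_mul_apply (hq : q ∈ stdSimplex ℝ V) {i j : ι} (hij : i ≠ j)
    (f g : V → ℝ) :
    expectation (iid ι q) (fun c => f (c i) * g (c j)) = expectation q f * expectation q g := by
  simpa [prod_pair hij, hij.symm] using
    expectation_iid_prod hq {i, j} fun l => if l = i then f else g

lemma expectation_iid_expect_apply [Nonempty ι] (hq : q ∈ stdSimplex ℝ V) (f : V → ℝ) :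
    expectation (iid ι q) (fun c => 𝔼 i, f (c i)) = expectation q f := by
  simp only [expectation_expect, expectation_iid_apply hq, Fintype.expect_const]

lemma expectation_iid_sq_expect_of_centered [Nonempty ι] (hq : q ∈ stdSimplex ℝ V) {g : V → ℝ}
    (hg : expectation q g = 0) :
    expectation (iid ι q) (fun c => (𝔼 i, g (c i)) ^ 2) =
      expectation q (fun v => g v ^ 2) / Fintype.card ι := by
  have covariance (i j : ι) : expectation (iid ι q) (fun c => g (c i) * g (c j)) =
      if i = j then expectation q (fun v => g v ^ 2) else 0 := by
    split_ifs with hij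
    · simp only [hij, ← sq, expectation_iid_apply hq j fun v => g v ^ 2]
    · rw [expectation_iid_apply_mul_apply hq hij, hg, zero_mul]
  have row (i : ι) : 𝔼 j, (if i = j then expectation q (fun v => g v ^ 2) else 0) =
      expectation q (fun v => g v ^ 2) / Fintype.card ι := by
    simp only [Fintype.expect_eq_sum_div_card, sum_ite_eq, mem_univ, if_true]
  simp only [sq (expect univ _), expect_mul_expect, expectation_expect, covariance, row,
    Fintype.expect_const]

lemma expectation_iid_sq_expect_sub_le [Nonempty ι] (hq : q ∈ stdSimplex ℝ V) (f : V → ℝ) :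
    expectation (iid ι q) (fun c => (𝔼 i, f (c i) - expectation q f) ^ 2) ≤
      expectation q (fun v => f v ^ 2) / Fintype.card ι := by
  set μ := expectation q f
  have centered : expectation q (fun v => f v - μ) = 0 := by
    rw [expectation_sub, expectation_const hq, sub_self]
  calc expectation (iid ι q) (fun c => (𝔼 i, f (c i) - μ) ^ 2)
      = expectation (iid ι q) (fun c => (𝔼 i, (f (c i) - μ)) ^ 2) := by
        simp only [expect_sub_distrib, Fintype.expect_const]
    _ = expectation q (fun v => (f v - μ) ^ 2) / Fintype.card ι :=
        expectation_iid_sq_expect_of_centered hq centered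
    _ ≤ expectation q (fun v => f v ^ 2) / Fintype.card ι := by
        gcongr
        exact expectation_sq_sub_expectation_le hq f

lemma prob_iid_add_le_expect_le [Nonempty ι] (hq : q ∈ stdSimplex ℝ V) (f : V → ℝ) {ε : ℝ}
    (hε : 0 < ε) :
    prob (iid ι q) {c | expectation q f + ε ≤ 𝔼 i, f (c i)} ≤
      expectation q (fun v => f v ^ 2) / Fintype.card ι / ε ^ 2 := by
  calc prob (iid ι q) {c | expectation q f + ε ≤ 𝔼 i, f (c i)}
      ≤ prob (iid ι q) {c | ε ^ 2 ≤ (𝔼 i, f (c i) - expectation q f) ^ 2} :=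
        prob_mono_of_pos (iid_nonneg hq.1) fun c _ (hc : _ ≤ _) =>
          pow_le_pow_left₀ hε.le (le_sub_iff_add_le'.2 hc) 2
    _ ≤ expectation (iid ι q) (fun c => (𝔼 i, f (c i) - expectation q f) ^ 2) / ε ^ 2 :=
        prob_le_expectation_div (iid_nonneg hq.1) (fun _ => sq_nonneg _) (by positivity)
    _ ≤ expectation q (fun v => f v ^ 2) / Fintype.card ι / ε ^ 2 := by
        gcongr
        exact expectation_iid_sq_expect_sub_le hq f

theorem tendsto_prob_iid_add_le_expect (hq : q ∈ stdSimplex ℝ V) (f : V → ℝ) {ε : ℝ} (hε : 0 < ε) :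
    Tendsto (fun n : ℕ => prob (iid (Fin n) q) {c | expectation q f + ε ≤ 𝔼 t, f (c t)})
      atTop (𝓝 0) := by
  have bound_tendsto : Tendsto (fun n : ℕ => expectation q (fun v => f v ^ 2) / n / ε ^ 2)
      atTop (𝓝 0) := by
    simpa using (tendsto_const_div_atTop_nhds_zero_nat _).div_const (ε ^ 2)
  refine squeeze_zero' (.of_forall fun n => ?_) ?_ bound_tendsto
  · exact prob_nonneg (iid_nonneg hq.1) _
  · filter_upwards [eventually_gt_atTop 0] with n hn
    have : NeZero n := ⟨hn.ne'⟩
    simpa using prob_iid_add_le_expect_le (ι := Fin n) hq f hε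

lemma two_rpow_le_prod_iff {n : ℕ} [NeZero n] {r : Fin n → ℝ} (hr : ∀ t, 0 < r t) (a : ℝ) :
    (2 : ℝ) ^ (n * a) ≤ ∏ t, r t ↔ a ≤ 𝔼 t, Real.logb 2 (r t) := by
  have n_pos : (0 : ℝ) < n := Nat.cast_pos.2 (NeZero.pos n)
  rw [← Real.le_logb_iff_rpow_le one_lt_two (prod_pos fun t _ => hr t),
    Real.logb_prod _ _ fun t _ => (hr t).ne', Fintype.expect_eq_sum_div_card, Fintype.card_fin,
    le_div_iff₀' n_pos]

theorem tendsto_prob_iid_two_rpow_le_prod (hq : q ∈ stdSimplex ℝ V) {r : V → ℝ}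
    (hr : ∀ v, 0 < q v → 0 < r v) {ε : ℝ} (hε : 0 < ε) :
    Tendsto (fun n : ℕ => prob (iid (Fin n) q)
        {c | (2 : ℝ) ^ (n * (expectation q (fun v => Real.logb 2 (r v)) + ε)) ≤ ∏ t, r (c t)})
      atTop (𝓝 0) := by
  refine squeeze_zero' (.of_forall fun n => prob_nonneg (iid_nonneg hq.1) _) ?_
    (tendsto_prob_iid_add_le_expect hq (fun v => Real.logb 2 (r v)) hε)
  filter_upwards [eventually_gt_atTop 0] with n hn
  have : NeZero n := ⟨hn.ne'⟩
  exact prob_mono_of_pos (iid_nonneg hq.1) fun c hc =>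
    (two_rpow_le_prod_iff (fun t => hr _ (pos_of_iid_pos hq.1 hc t)) _).1

theorem tendsto_prob_iid_prod_le_two_rpow (hq : q ∈ stdSimplex ℝ V) {r : V → ℝ}
    (hr : ∀ v, 0 < q v → 0 < r v) {ε : ℝ} (hε : 0 < ε) :
    Tendsto (fun n : ℕ => prob (iid (Fin n) q)
        {c | ∏ t, r (c t) ≤ (2 : ℝ) ^ (n * (expectation q (fun v => Real.logb 2 (r v)) - ε))})
      atTop (𝓝 0) := by
  refine squeeze_zero (fun n => prob_nonneg (iid_nonneg hq.1) _)
    (fun n => prob_mono_of_pos (iid_nonneg hq.1) fun c hc hle => ?_)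
    (tendsto_prob_iid_two_rpow_le_prod hq (r := fun v => (r v)⁻¹)
      (fun v hv => inv_pos.2 (hr v hv)) hε)
  have prod_pos : 0 < ∏ t, r (c t) := prod_pos fun t _ => hr _ (pos_of_iid_pos hq.1 hc t)
  have exponent : n * (expectation q (fun v => Real.logb 2 (r v)⁻¹) + ε) =
      -(n * (expectation q (fun v => Real.logb 2 (r v)) - ε)) := by
    simp only [Real.logb_inv, expectation, mul_neg, sum_neg_distrib]
    ring
  rw [Set.mem_ofPred_eq, exponent, Real.rpow_neg zero_le_two, prod_inv_distrib]
  exact inv_anti₀ prod_pos hle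

end Iid

section RandomCodebook

lemma exists_le_expect_mul_add {ι : Type*} [Fintype ι] [Nonempty ι] {u f : ι → ℝ} {Δ : ℝ}
    (hu : 0 ≤ u) (hf : 0 ≤ f) (hfΔ : ∀ i, f i ≤ Δ) :
    ∃ i, f i ≤ (𝔼 j, u j * f j) + Δ * max 0 (1 - 𝔼 j, u j) := by
  obtain ⟨i, hi⟩ := Finite.exists_min f
  refine ⟨i, ?_⟩
  calc f i = (𝔼 j, u j) * f i + f i * (1 - 𝔼 j, u j) := by ring
    _ ≤ (𝔼 j, u j * f j) + Δ * max 0 (1 - 𝔼 j, u j) := by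
      rw [expect_mul]
      refine add_le_add (expect_le_expect fun j _ => ?_) ?_
      · exact mul_le_mul_of_nonneg_left (hi j) (hu j)
      · exact (mul_le_mul_of_nonneg_left (le_max_right 0 _) (hf i)).trans
          (mul_le_mul_of_nonneg_right (hfΔ i) (le_max_left _ _))

variable {M K V : Type*} [Fintype K] [DecidableEq K]

/-- Union bound on the event that a decoder which is told the message `l.1`, and which looks for a
bin index `k` such that `c (l.1, k)` lies in the acceptance region `A`, does not recover `l.2`. -/
noncomputable def failureBound (A : Set V) (c : M × K → V) (l : M × K) : ℝ :=
  Aᶜ.indicator 1 (c l) + ∑ k ∈ univ.erase l.2, A.indicator 1 (c (l.1, k))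

lemma failureBound_nonneg (A : Set V) (c : M × K → V) (l : M × K) : 0 ≤ failureBound A c l :=
  add_nonneg (Set.indicator_nonneg (fun _ _ => zero_le_one) _)
    (sum_nonneg fun _ _ => Set.indicator_nonneg (fun _ _ => zero_le_one) _)

lemma exists_forall_ne_one_le_failureBound [Nonempty K] (A : Set V) (c : M × K → V) (m : M) :
    ∃ k', ∀ k, k' ≠ k → 1 ≤ failureBound A c (m, k) := by
  have indicator_nonneg (A' : Set V) (v : V) : (0 : ℝ) ≤ A'.indicator 1 v :=
    Set.indicator_nonneg (fun _ _ => zero_le_one) v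
  by_cases h : ∃ k, c (m, k) ∈ A
  · obtain ⟨k', hk'⟩ := h
    refine ⟨k', fun k hk => le_add_of_nonneg_of_le (indicator_nonneg _ _) ?_⟩
    calc (1 : ℝ) = A.indicator 1 (c (m, k')) := by simp [hk']
      _ ≤ ∑ j ∈ univ.erase k, A.indicator 1 (c (m, j)) :=
        single_le_sum (f := fun j => A.indicator (1 : V → ℝ) (c (m, j)))
          (fun j _ => indicator_nonneg A _) (mem_erase.2 ⟨hk, mem_univ _⟩)
  · push Not at h
    refine ⟨Classical.arbitrary K, fun k _ =>
      le_add_of_le_of_nonneg ?_ (sum_nonneg fun _ _ => indicator_nonneg A _)⟩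
    simp [h k]

lemma exists_code_of_codebook {X B : Type*} [Fintype X] [Fintype B] [Fintype M] [Nonempty M]
    [Nonempty K] {P : X × B → ℝ} (hP : 0 ≤ P) {ρ : X × B × V → ℝ} {Δ : ℝ} (hρ : 0 ≤ ρ)
    (hρΔ : ∀ z, ρ z ≤ Δ) {r : X → V → ℝ} (hr : ∀ x v, 0 ≤ r x v) (A : B → Set V)
    (c : M × K → V) :
    ∃ (enc : X → M) (dec : M → B → V),
      expectation P (fun p => ρ (p.1, p.2, dec (enc p.1) p.2)) ≤
        expectation P fun p =>
          (𝔼 l, r p.1 (c l) * (ρ (p.1, p.2, c l) + Δ * failureBound (A p.2) c l)) +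
            Δ * max 0 (1 - 𝔼 l, r p.1 (c l)) := by
  choose bin hbin using fun b => exists_forall_ne_one_le_failureBound (A b) c
  have decoded_le (x : X) (b : B) (l : M × K) :
      ρ (x, b, c (l.1, bin b l.1)) ≤ ρ (x, b, c l) + Δ * failureBound (A b) c l := by
    obtain ⟨m, k⟩ := l
    have Δ_nonneg : 0 ≤ Δ := (hρ _).trans (hρΔ (x, b, c (m, k)))
    by_cases hk : bin b m = k
    · simpa [hk] using mul_nonneg Δ_nonneg (failureBound_nonneg (A b) c (m, k))
    · exact le_add_of_nonneg_of_le (hρ _)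
        ((hρΔ _).trans (le_mul_of_one_le_right Δ_nonneg (hbin b m k hk)))
  let cost (x : X) (l : M × K) : ℝ := ∑ b, P (x, b) * ρ (x, b, c (l.1, bin b l.1))
  have exists_index (x : X) := exists_le_expect_mul_add (f := cost x) (u := fun l => r x (c l))
    (Δ := ∑ b, P (x, b) * Δ) (fun _ => hr x _)
    (fun _ => sum_nonneg fun b _ => mul_nonneg (hP _) (hρ _))
    (fun _ => sum_le_sum fun b _ => mul_le_mul_of_nonneg_left (hρΔ _) (hP _))
  choose index hindex using exists_index
  refine ⟨fun x => (index x).1, fun m b => c (m, bin b m), ?_⟩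
  simp only [expectation, Fintype.sum_prod_type]
  refine sum_le_sum fun x _ => (hindex x).trans ?_
  calc (𝔼 l, r x (c l) * cost x l) + (∑ b, P (x, b) * Δ) * max 0 (1 - 𝔼 l, r x (c l))
      = ∑ b, P (x, b) * ((𝔼 l, r x (c l) * ρ (x, b, c (l.1, bin b l.1))) +
          Δ * max 0 (1 - 𝔼 l, r x (c l))) := by
        simp only [cost, mul_add, sum_add_distrib, sum_mul, mul_sum, mul_expect, mul_assoc,
          expect_sum_comm, mul_left_comm (r _ _)]
    _ ≤ _ := by
        gcongr with b _ l
        · exact hP _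
        · exact hr x _
        · exact decoded_le x b l

variable [Fintype V] {q : V → ℝ}

lemma expectation_iid_mul_failureBound_le [Fintype M] [DecidableEq M] (hq : q ∈ stdSimplex ℝ V)
    {r : V → ℝ} (hr1 : expectation q r ≤ 1) (A : Set V) (l : M × K) :
    expectation (iid (M × K) q) (fun c => r (c l) * failureBound A c l) ≤
      expectation q (fun v => r v * Aᶜ.indicator 1 v) + (Fintype.card K - 1) * prob q A := by
  have accept (k : K) (hk : k ∈ univ.erase l.2) :
      expectation (iid (M × K) q) (fun c => r (c l) * A.indicator 1 (c (l.1, k))) =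
        expectation q r * prob q A :=
    expectation_iid_apply_mul_apply hq (fun h => ne_of_mem_erase hk (congrArg Prod.snd h).symm) _ _
  have reject := expectation_iid_apply hq l fun v => r v * Aᶜ.indicator 1 v
  have card_pos : 0 < Fintype.card K := Fintype.card_pos_iff.2 ⟨l.2⟩
  have card_erase_nonneg : (0 : ℝ) ≤ Fintype.card K - 1 := sub_nonneg.2 (Nat.one_le_cast.2 card_pos)
  simp only [failureBound, mul_add, mul_sum, expectation_add, expectation_sum, reject]
  rw [sum_congr rfl accept, sum_const, card_erase_of_mem (mem_univ _), card_univ, nsmul_eq_mul,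
    Nat.cast_pred card_pos]
  gcongr
  exact mul_le_of_le_one_left (prob_nonneg hq.1 A) hr1

lemma expectation_iid_max_one_sub_expect_le {ι : Type*} [Fintype ι] [DecidableEq ι] [Nonempty ι]
    (hq : q ∈ stdSimplex ℝ V) {r : V → ℝ} (hr : 0 ≤ r) (hr1 : expectation q r ≤ 1) {G : ℝ}
    (hG : 0 ≤ G) :
    expectation (iid ι q) (fun c => max 0 (1 - 𝔼 i, r (c i))) ≤
      1 - expectation q (fun v => r v * {v | r v < G}.indicator 1 v) + √(G / Fintype.card ι) := by
  set f : V → ℝ := fun v => r v * {v | r v < G}.indicator 1 v with hf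
  set a := expectation q f
  have f_le_r : f ≤ r := fun v =>
    mul_le_of_le_one_right (hr v) (Set.indicator_le_self' (fun _ _ => zero_le_one) v)
  have a_le_one : a ≤ 1 := (expectation_mono hq.1 f_le_r).trans hr1
  have sq_le (v : V) : f v ^ 2 ≤ G * r v := by
    by_cases hv : r v < G
    · simpa [hf, hv, sq] using mul_le_mul_of_nonneg_right hv.le (hr v)
    · simpa [hf, hv] using mul_nonneg hG (hr v)
  have second_moment_le : expectation q (fun v => f v ^ 2) ≤ G :=
    calc expectation q (fun v => f v ^ 2) ≤ expectation q (fun v => G * r v) :=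
          expectation_mono hq.1 sq_le
      _ ≤ G := by
          rw [expectation_const_mul]
          exact mul_le_of_le_one_right hG hr1
  have shortfall_le (c : ι → V) :
      max 0 (1 - 𝔼 i, r (c i)) ≤ 1 - a + |𝔼 i, f (c i) - a| := by
    have expect_le : 𝔼 i, f (c i) ≤ 𝔼 i, r (c i) := expect_le_expect fun i _ => f_le_r _
    exact max_le (add_nonneg (sub_nonneg.2 a_le_one) (abs_nonneg _))
      (by linarith [neg_abs_le (𝔼 i, f (c i) - a)])
  have iid_mem := iid_mem_stdSimplex (ι := ι) hq
  calc expectation (iid ι q) (fun c => max 0 (1 - 𝔼 i, r (c i)))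
      ≤ expectation (iid ι q) (fun c => 1 - a + |𝔼 i, f (c i) - a|) :=
        expectation_mono iid_mem.1 shortfall_le
    _ = 1 - a + expectation (iid ι q) (fun c => |𝔼 i, f (c i) - a|) := by
        rw [expectation_add, expectation_const iid_mem]
    _ ≤ 1 - a + √(G / Fintype.card ι) := by
        gcongr
        refine (expectation_le_sqrt iid_mem _).trans (Real.sqrt_le_sqrt ?_)
        simp only [sq_abs]
        exact (expectation_iid_sq_expect_sub_le hq f).trans (by gcongr)

lemma expectation_iid_codebook_cost_le [Fintype M] [DecidableEq M] [Nonempty M] [Nonempty K]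
    (hq : q ∈ stdSimplex ℝ V) {r : V → ℝ} (hr : 0 ≤ r) (hr1 : expectation q r ≤ 1)
    (f : V → ℝ) {Δ : ℝ} (hΔ : 0 ≤ Δ) (A : Set V) {G : ℝ} (hG : 0 ≤ G) :
    expectation (iid (M × K) q) (fun c =>
        (𝔼 l, r (c l) * (f (c l) + Δ * failureBound A c l)) + Δ * max 0 (1 - 𝔼 l, r (c l))) ≤
      expectation q (fun v => r v * f v) +
        Δ * (expectation q (fun v => r v * Aᶜ.indicator 1 v) + (Fintype.card K - 1) * prob q A +
          (1 - expectation q (fun v => r v * {v | r v < G}.indicator 1 v) +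
            √(G / (Fintype.card M * Fintype.card K)))) := by
  have shortfall := expectation_iid_max_one_sub_expect_le (ι := M × K) hq hr hr1 hG
  rw [Fintype.card_prod, Nat.cast_mul] at shortfall
  have index_le (l : M × K) :
      expectation (iid (M × K) q) (fun c => r (c l) * (f (c l) + Δ * failureBound A c l)) ≤
        expectation q (fun v => r v * f v) +
          Δ * (expectation q (fun v => r v * Aᶜ.indicator 1 v) +
            (Fintype.card K - 1) * prob q A) := by
    simp only [mul_add (r _), mul_left_comm (r _) Δ, expectation_add, expectation_const_mul]
    rw [expectation_iid_apply hq l fun v => r v * f v]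
    gcongr
    exact expectation_iid_mul_failureBound_le hq hr1 A l
  rw [expectation_add, expectation_expect, expectation_const_mul, mul_add Δ (_ + _), ← add_assoc]
  gcongr
  exact expect_le univ_nonempty fun l _ => index_le l

end RandomCodebook

section TestChannel

variable {X B V : Type*} [Fintype X] [Fintype B] {P : X × B → ℝ} {W : V → X → ℝ}

/-- Joint law of source, side information and auxiliary variable, the last one being drawn from the
channel `W` (`W v x` is the probability of `v` given `x`) independently of the side information. -/
def jointLaw (P : X × B → ℝ) (W : V → X → ℝ) : X × B × V → ℝ :=
  fun z => P (z.1, z.2.1) * W z.2.2 z.1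

/-- Marginal law of the auxiliary variable, from which the codewords are drawn. -/
def outputLaw (P : X × B → ℝ) (W : V → X → ℝ) : V → ℝ :=
  fun v => expectation P fun p => W v p.1

/-- The density `P(v|x) / P(v)`, with the convention that it is `0` where `P(v) = 0`. -/
noncomputable def channelDensity (P : X × B → ℝ) (W : V → X → ℝ) (x : X) (v : V) : ℝ :=
  W v x / outputLaw P W v

/-- The density `P(v,b) / (P(v) P(b))`, with the convention that it is `0` where the denominator
vanishes. -/
noncomputable def sideInfoDensity (P : X × B → ℝ) (W : V → X → ℝ) (b : B) (v : V) : ℝ :=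
  (∑ x, P (x, b) * W v x) / (outputLaw P W v * ∑ x, P (x, b))

lemma outputLaw_nonneg (hP : 0 ≤ P) (hW : ∀ x, 0 ≤ fun v => W v x) : 0 ≤ outputLaw P W :=
  fun v => expectation_nonneg hP fun p => hW p.1 v

lemma mul_le_outputLaw (hP : 0 ≤ P) (hW : ∀ x, 0 ≤ fun v => W v x) (x : X) (b : B) (v : V) :
    P (x, b) * W v x ≤ outputLaw P W v :=
  single_le_sum (f := fun p => P p * W v p.1) (fun p _ => mul_nonneg (hP p) (hW p.1 v))
    (mem_univ (x, b))

lemma channelDensity_nonneg (hP : 0 ≤ P) (hW : ∀ x, 0 ≤ fun v => W v x) (x : X) (v : V) :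
    0 ≤ channelDensity P W x v :=
  div_nonneg (hW x v) (outputLaw_nonneg hP hW v)

lemma sideInfoDensity_nonneg (hP : 0 ≤ P) (hW : ∀ x, 0 ≤ fun v => W v x) (b : B) (v : V) :
    0 ≤ sideInfoDensity P W b v :=
  div_nonneg (sum_nonneg fun x _ => mul_nonneg (hP _) (hW x v))
    (mul_nonneg (outputLaw_nonneg hP hW v) (sum_nonneg fun _ _ => hP _))

lemma channelDensity_pos (hP : 0 ≤ P) (hW : ∀ x, 0 ≤ fun v => W v x) {z : X × B × V}
    (hz : 0 < jointLaw P W z) : 0 < channelDensity P W z.1 z.2.2 :=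
  div_pos (pos_of_mul_pos_right hz (hP _)) (hz.trans_le (mul_le_outputLaw hP hW _ _ _))

lemma sideInfoDensity_pos (hP : 0 ≤ P) (hW : ∀ x, 0 ≤ fun v => W v x) {z : X × B × V}
    (hz : 0 < jointLaw P W z) : 0 < sideInfoDensity P W z.2.1 z.2.2 := by
  obtain ⟨x, b, v⟩ := z
  have side_pos : 0 < ∑ x', P (x', b) * W v x' := hz.trans_le <|
    single_le_sum (f := fun x' => P (x', b) * W v x')
      (fun x' _ => mul_nonneg (hP _) (hW x' v)) (mem_univ x)
  have marginal_pos : 0 < ∑ x', P (x', b) := (pos_of_mul_pos_left hz (hW x v)).trans_le <|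
    single_le_sum (f := fun x' => P (x', b)) (fun x' _ => hP _) (mem_univ x)
  exact div_pos side_pos (mul_pos (hz.trans_le (mul_le_outputLaw hP hW x b v)) marginal_pos)

variable [Fintype V]

lemma jointLaw_mem_stdSimplex (hP : P ∈ stdSimplex ℝ (X × B))
    (hW : ∀ x, (fun v => W v x) ∈ stdSimplex ℝ V) : jointLaw P W ∈ stdSimplex ℝ (X × B × V) := by
  refine ⟨fun z => mul_nonneg (hP.1 _) ((hW _).1 _), ?_⟩
  calc ∑ z, jointLaw P W z = ∑ x, ∑ b, P (x, b) * ∑ v, W v x := by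
        simp only [jointLaw, Fintype.sum_prod_type, mul_sum]
    _ = 1 := by simp only [(hW _).2, mul_one, ← Fintype.sum_prod_type, hP.2]

lemma outputLaw_mem_stdSimplex (hP : P ∈ stdSimplex ℝ (X × B))
    (hW : ∀ x, (fun v => W v x) ∈ stdSimplex ℝ V) : outputLaw P W ∈ stdSimplex ℝ V := by
  refine ⟨outputLaw_nonneg hP.1 fun x => (hW x).1, ?_⟩
  simp only [outputLaw, ← expectation_sum, (hW _).2, expectation_const hP]

lemma expectation_outputLaw_channelDensity_le (hW : ∀ x, (fun v => W v x) ∈ stdSimplex ℝ V)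
    (x : X) : expectation (outputLaw P W) (channelDensity P W x) ≤ 1 := by
  rw [← (hW x).2]
  refine sum_le_sum fun v _ => ?_
  rw [channelDensity, mul_div_left_comm]
  exact mul_le_of_le_one_right ((hW x).1 v) (div_self_le_one _)

lemma expectation_outputLaw_channelDensity_mul (hP : 0 ≤ P) (hW : ∀ x, 0 ≤ fun v => W v x)
    (F : X × B × V → ℝ) :
    expectation P (fun p =>
        expectation (outputLaw P W) fun v => channelDensity P W p.1 v * F (p.1, p.2, v)) =
      expectation (jointLaw P W) F := by
  simp only [expectation, Fintype.sum_prod_type, mul_sum, jointLaw]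
  refine sum_congr rfl fun x _ => sum_congr rfl fun b _ => sum_congr rfl fun v _ => ?_
  rcases eq_or_ne (outputLaw P W v) 0 with h0 | h0
  · have : P (x, b) * W v x = 0 :=
      le_antisymm ((mul_le_outputLaw hP hW x b v).trans_eq h0) (mul_nonneg (hP _) (hW x v))
    rw [h0, this, zero_mul, zero_mul, mul_zero]
  · rw [channelDensity, ← mul_assoc (outputLaw P W v), mul_div_cancel₀ _ h0, mul_assoc]

lemma expectation_outputLaw_channelDensity_mul_indicator (hP : 0 ≤ P)
    (hW : ∀ x, 0 ≤ fun v => W v x) (S : Set (X × B × V)) :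
    expectation P (fun p => expectation (outputLaw P W) fun v =>
        channelDensity P W p.1 v * {v | (p.1, p.2, v) ∈ S}.indicator 1 v) =
      prob (jointLaw P W) S :=
  expectation_outputLaw_channelDensity_mul hP hW (S.indicator 1)

lemma expectation_outputLaw_sideInfoDensity_le (hP : 0 ≤ P)
    (hW : ∀ x, (fun v => W v x) ∈ stdSimplex ℝ V) (b : B) :
    expectation (outputLaw P W) (sideInfoDensity P W b) ≤ 1 := by
  calc expectation (outputLaw P W) (sideInfoDensity P W b)
      ≤ ∑ v, (∑ x, P (x, b) * W v x) / ∑ x, P (x, b) := by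
        refine sum_le_sum fun v _ => ?_
        calc outputLaw P W v * ((∑ x, P (x, b) * W v x) / (outputLaw P W v * ∑ x, P (x, b)))
            = (∑ x, P (x, b) * W v x) / (∑ x, P (x, b)) * (outputLaw P W v / outputLaw P W v) := by
              ring
          _ ≤ (∑ x, P (x, b) * W v x) / ∑ x, P (x, b) :=
            mul_le_of_le_one_right
              (div_nonneg (sum_nonneg fun x _ => mul_nonneg (hP _) ((hW x).1 v))
                (sum_nonneg fun _ _ => hP _))
              (div_self_le_one _)
    _ = (∑ x, P (x, b)) / ∑ x, P (x, b) := by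
        rw [← sum_div, sum_comm]
        simp only [← mul_sum, (hW _).2, mul_one]
    _ ≤ 1 := div_self_le_one _

lemma prob_outputLaw_lt_sideInfoDensity_le (hP : 0 ≤ P)
    (hW : ∀ x, (fun v => W v x) ∈ stdSimplex ℝ V) {G : ℝ} (hG : 0 < G) (b : B) :
    prob (outputLaw P W) {v | G < sideInfoDensity P W b v} ≤ 1 / G := by
  have W_nonneg (x : X) := (hW x).1
  have out_nonneg := outputLaw_nonneg hP W_nonneg
  calc prob (outputLaw P W) {v | G < sideInfoDensity P W b v}
      ≤ prob (outputLaw P W) {v | G ≤ sideInfoDensity P W b v} :=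
        prob_mono_of_pos out_nonneg fun v _ (hv : G < _) => hv.le
    _ ≤ expectation (outputLaw P W) (sideInfoDensity P W b) / G :=
        prob_le_expectation_div out_nonneg (sideInfoDensity_nonneg hP W_nonneg b) hG
    _ ≤ 1 / G := by
        gcongr
        exact expectation_outputLaw_sideInfoDensity_le hP hW b

lemma condMutInf_eq_expectation_sub (hP : P ∈ stdSimplex ℝ (X × B))
    (hW : ∀ x, (fun v => W v x) ∈ stdSimplex ℝ V) :
    condMutInf (fun x v b => P (x, b) * W v x) =
      expectation (jointLaw P W) (fun z => Real.logb 2 (channelDensity P W z.1 z.2.2)) -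
        expectation (jointLaw P W) fun z => Real.logb 2 (sideInfoDensity P W z.2.1 z.2.2) := by
  have W_nonneg (x : X) := (hW x).1
  rw [← expectation_sub]
  simp only [condMutInf, expectation, Fintype.sum_prod_type]
  refine sum_congr rfl fun x _ => sum_comm.trans <| sum_congr rfl fun b _ =>
    sum_congr rfl fun v _ => ?_
  rcases (jointLaw_mem_stdSimplex hP hW).1 (x, b, v) |>.eq_or_lt' with h0 | hpos
  · rw [h0, zero_mul, show P (x, b) * W v x = 0 from h0, zero_mul]
  have channel_pos := channelDensity_pos hP.1 W_nonneg hpos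
  have sideInfo_pos := sideInfoDensity_pos hP.1 W_nonneg hpos
  rw [← Real.logb_div channel_pos.ne' sideInfo_pos.ne']
  have out_ne := (hpos.trans_le (mul_le_outputLaw hP.1 W_nonneg x b v)).ne'
  have P_ne : P (x, b) ≠ 0 := left_ne_zero_of_mul hpos.ne'
  simp only [← mul_sum, (hW _).2, mul_one, channelDensity, sideInfoDensity, jointLaw]
  congr 2
  field_simp

end TestChannel

section OneShot

variable {X B V M K : Type*} [Fintype X] [Fintype B] [Fintype V] [Fintype M] [Fintype K]
  [Nonempty M] [Nonempty K] {P : X × B → ℝ} {W : V → X → ℝ}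

lemma expectation_iid_expectation_codebook_cost_le [DecidableEq M] [DecidableEq K]
    (hP : P ∈ stdSimplex ℝ (X × B)) (hW : ∀ x, (fun v => W v x) ∈ stdSimplex ℝ V)
    (ρ : X × B × V → ℝ) {Δ : ℝ} (hΔ : 0 ≤ Δ) {G₁ G₂ : ℝ} (hG₁ : 0 ≤ G₁) (hG₂ : 0 < G₂) :
    expectation (iid (M × K) (outputLaw P W)) (fun c => expectation P fun p =>
        (𝔼 l, channelDensity P W p.1 (c l) * (ρ (p.1, p.2, c l) +
          Δ * failureBound {v | G₂ < sideInfoDensity P W p.2 v} c l)) +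
            Δ * max 0 (1 - 𝔼 l, channelDensity P W p.1 (c l))) ≤
      expectation (jointLaw P W) ρ +
        Δ * (prob (jointLaw P W) {z | G₁ ≤ channelDensity P W z.1 z.2.2} +
          prob (jointLaw P W) {z | sideInfoDensity P W z.2.1 z.2.2 ≤ G₂} +
          √(G₁ / (Fintype.card M * Fintype.card K)) + (Fintype.card K - 1) / G₂) := by
  set q := outputLaw P W
  set J := jointLaw P W
  set r := channelDensity P W
  let accept (b : B) : Set V := {v | G₂ < sideInfoDensity P W b v}
  have W_nonneg (x : X) := (hW x).1
  have change_of_measure := expectation_outputLaw_channelDensity_mul_indicator hP.1 W_nonneg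
  have reject : expectation P (fun p => expectation q fun v =>
      r p.1 v * (accept p.2)ᶜ.indicator 1 v) =
        prob J {z | sideInfoDensity P W z.2.1 z.2.2 ≤ G₂} := by
    rw [← change_of_measure]
    simp only [accept, Set.compl_ofPred, Set.mem_ofPred_eq, not_lt, q, r]
  have atypical : 1 - expectation P (fun p => expectation q fun v =>
      r p.1 v * {v | r p.1 v < G₁}.indicator 1 v) = prob J {z | G₁ ≤ r z.1 z.2.2} := by
    rw [show {z : X × B × V | G₁ ≤ r z.1 z.2.2} = {z | r z.1 z.2.2 < G₁}ᶜ by ext; simp,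
      prob_compl (jointLaw_mem_stdSimplex hP hW), ← change_of_measure]
    rfl
  have card_sub_one_nonneg : (0 : ℝ) ≤ Fintype.card K - 1 :=
    sub_nonneg.2 (Nat.one_le_cast.2 Fintype.card_pos)
  rw [expectation_comm]
  calc _ ≤ expectation P fun p => expectation q (fun v => r p.1 v * ρ (p.1, p.2, v)) +
          Δ * (expectation q (fun v => r p.1 v * (accept p.2)ᶜ.indicator 1 v) +
            (Fintype.card K - 1) * (1 / G₂) +
            (1 - expectation q (fun v => r p.1 v * {v | r p.1 v < G₁}.indicator 1 v) +
              √(G₁ / (Fintype.card M * Fintype.card K)))) := by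
        refine expectation_mono hP.1 fun p => ?_
        have cost_le := expectation_iid_codebook_cost_le (M := M) (K := K)
          (outputLaw_mem_stdSimplex hP hW) (channelDensity_nonneg hP.1 W_nonneg p.1)
          (expectation_outputLaw_channelDensity_le hW p.1) (fun v => ρ (p.1, p.2, v)) hΔ
          (accept p.2) hG₁
        refine cost_le.trans ?_
        gcongr
        exact prob_outputLaw_lt_sideInfoDensity_le hP.1 hW hG₂ p.2
    _ = _ := by
        simp only [expectation_add, expectation_const_mul, expectation_sub, expectation_const hP]
        rw [reject, atypical, expectation_outputLaw_channelDensity_mul hP.1 W_nonneg]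
        ring

lemma exists_code_of_nonneg (hP : P ∈ stdSimplex ℝ (X × B))
    (hW : ∀ x, (fun v => W v x) ∈ stdSimplex ℝ V) {ρ : X × B × V → ℝ} {Δ : ℝ} (hρ : 0 ≤ ρ)
    (hρΔ : ∀ z, ρ z ≤ Δ) (hΔ : 0 ≤ Δ) {G₁ G₂ : ℝ} (hG₁ : 0 ≤ G₁) (hG₂ : 0 < G₂) :
    ∃ (enc : X → M) (dec : M → B → V),
      expectation P (fun p => ρ (p.1, p.2, dec (enc p.1) p.2)) ≤
        expectation (jointLaw P W) ρ +
          Δ * (prob (jointLaw P W) {z | G₁ ≤ channelDensity P W z.1 z.2.2} +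
            prob (jointLaw P W) {z | sideInfoDensity P W z.2.1 z.2.2 ≤ G₂} +
            √(G₁ / (Fintype.card M * Fintype.card K)) + (Fintype.card K - 1) / G₂) := by
  classical
  obtain ⟨c, hc⟩ := exists_le_expectation
    (iid_mem_stdSimplex (ι := M × K) (outputLaw_mem_stdSimplex hP hW)) _
  obtain ⟨enc, dec, hcode⟩ := exists_code_of_codebook hP.1 hρ hρΔ
    (channelDensity_nonneg hP.1 fun x => (hW x).1) (fun b => {v | G₂ < sideInfoDensity P W b v}) c
  exact ⟨enc, dec, hcode.trans <| hc.trans <|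
    expectation_iid_expectation_codebook_cost_le hP hW ρ hΔ hG₁ hG₂⟩

theorem exists_code_of_abs_le (hP : P ∈ stdSimplex ℝ (X × B))
    (hW : ∀ x, (fun v => W v x) ∈ stdSimplex ℝ V) {ρ : X × B × V → ℝ} {Δ : ℝ}
    (hρ : ∀ z, |ρ z| ≤ Δ) (hΔ : 0 ≤ Δ) {G₁ G₂ : ℝ} (hG₁ : 0 ≤ G₁) (hG₂ : 0 < G₂) :
    ∃ (enc : X → M) (dec : M → B → V),
      expectation P (fun p => ρ (p.1, p.2, dec (enc p.1) p.2)) ≤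
        expectation (jointLaw P W) ρ +
          2 * Δ * (prob (jointLaw P W) {z | G₁ ≤ channelDensity P W z.1 z.2.2} +
            prob (jointLaw P W) {z | sideInfoDensity P W z.2.1 z.2.2 ≤ G₂} +
            √(G₁ / (Fintype.card M * Fintype.card K)) + (Fintype.card K - 1) / G₂) := by
  obtain ⟨enc, dec, hcode⟩ := exists_code_of_nonneg (M := M) (K := K) hP hW
    (ρ := fun z => ρ z + Δ) (Δ := 2 * Δ) (fun z => neg_le_iff_add_nonneg.1 (abs_le.1 (hρ z)).1)
    (fun z => by linarith [(abs_le.1 (hρ z)).2]) (by positivity) hG₁ hG₂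
  refine ⟨enc, dec, ?_⟩
  rw [expectation_add, expectation_add, expectation_const hP,
    expectation_const (jointLaw_mem_stdSimplex hP hW)] at hcode
  linarith

end OneShot

section Block

variable {ι X B V : Type*} [Fintype ι] {P : X × B → ℝ} {W : V → X → ℝ}

/-- Law of `X^ι` and `B^ι` when the pairs `(X_t, B_t)` are independent with law `P`: this is
`iid ι P`, read on pairs of sequences instead of sequences of pairs. -/
def blockSource (ι : Type*) [Fintype ι] (P : X × B → ℝ) : (ι → X) × (ι → B) → ℝ :=
  fun p => ∏ t, P (p.1 t, p.2 t)

/-- Memoryless use of the channel `W` at every time `t : ι`. -/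
def blockChannel (ι : Type*) [Fintype ι] (W : V → X → ℝ) : (ι → V) → (ι → X) → ℝ :=
  fun v x => ∏ t, W (v t) (x t)

variable [DecidableEq ι]

lemma blockChannel_mem_stdSimplex [Fintype V] (hW : ∀ x, (fun v => W v x) ∈ stdSimplex ℝ V)
    (x : ι → X) : (fun v => blockChannel ι W v x) ∈ stdSimplex ℝ (ι → V) := by
  refine ⟨fun v => prod_nonneg fun t _ => (hW (x t)).1 (v t), ?_⟩
  simp only [blockChannel, ← Fintype.prod_sum fun t v => W v (x t), (hW _).2, prod_const_one]

variable [Fintype X] [Fintype B]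

lemma expectation_blockSource (F : (ι → X) × (ι → B) → ℝ) :
    expectation (blockSource ι P) F =
      expectation (iid ι P) fun z => F (fun t => (z t).1, fun t => (z t).2) :=
  ((Equiv.arrowProdEquivProdArrow ι _ _).sum_comp fun p => blockSource ι P p * F p).symm

lemma blockSource_mem_stdSimplex (hP : P ∈ stdSimplex ℝ (X × B)) :
    blockSource ι P ∈ stdSimplex ℝ ((ι → X) × (ι → B)) := by
  refine ⟨fun p => prod_nonneg fun t _ => hP.1 _, ?_⟩
  simpa [expectation, (iid_mem_stdSimplex hP).2] using
    expectation_blockSource (ι := ι) (P := P) fun _ => 1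

lemma expectation_jointLaw_block [Fintype V] (F : (ι → X) × (ι → B) × (ι → V) → ℝ) :
    expectation (jointLaw (blockSource ι P) (blockChannel ι W)) F =
      expectation (iid ι (jointLaw P W))
        fun z => F (fun t => (z t).1, fun t => (z t).2.1, fun t => (z t).2.2) := by
  let split : (ι → X × B × V) ≃ (ι → X) × (ι → B) × (ι → V) :=
    (Equiv.arrowProdEquivProdArrow ι _ _).trans
      ((Equiv.refl _).prodCongr (Equiv.arrowProdEquivProdArrow ι _ _))
  refine (split.sum_comp _).symm.trans (sum_congr rfl fun z _ => congrArg (· * _) ?_)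
  exact prod_mul_distrib.symm

lemma prob_jointLaw_block [Fintype V] (S : Set ((ι → X) × (ι → B) × (ι → V))) :
    prob (jointLaw (blockSource ι P) (blockChannel ι W)) S =
      prob (iid ι (jointLaw P W))
        {z | (fun t => (z t).1, fun t => (z t).2.1, fun t => (z t).2.2) ∈ S} :=
  expectation_jointLaw_block (S.indicator 1)

lemma outputLaw_block (hP : P ∈ stdSimplex ℝ (X × B)) (v : ι → V) :
    outputLaw (blockSource ι P) (blockChannel ι W) v = ∏ t, outputLaw P W (v t) :=
  (expectation_blockSource _).trans (expectation_iid_prod hP univ fun t p => W (v t) p.1)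

lemma channelDensity_block (hP : P ∈ stdSimplex ℝ (X × B)) (x : ι → X) (v : ι → V) :
    channelDensity (blockSource ι P) (blockChannel ι W) x v =
      ∏ t, channelDensity P W (x t) (v t) := by
  simp only [channelDensity, outputLaw_block hP, prod_div_distrib, blockChannel]

lemma sideInfoDensity_block (hP : P ∈ stdSimplex ℝ (X × B)) (b : ι → B) (v : ι → V) :
    sideInfoDensity (blockSource ι P) (blockChannel ι W) b v =
      ∏ t, sideInfoDensity P W (b t) (v t) := by
  simp only [sideInfoDensity, outputLaw_block hP, prod_div_distrib, prod_mul_distrib,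
    blockChannel, blockSource, Fintype.prod_sum]

end Block

section Exponents

lemma sqrt_two_rpow_div_ceil_mul_ceil_le {a b c e : ℝ} (h : a + 2 * e ≤ b + c) :
    √((2 : ℝ) ^ a / (⌈(2 : ℝ) ^ b⌉₊ * ⌈(2 : ℝ) ^ c⌉₊)) ≤ (2 : ℝ) ^ (-e) := by
  refine Real.sqrt_le_iff.2 ⟨by positivity, ?_⟩
  calc (2 : ℝ) ^ a / (⌈(2 : ℝ) ^ b⌉₊ * ⌈(2 : ℝ) ^ c⌉₊) ≤ 2 ^ a / (2 ^ b * 2 ^ c) := by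
        gcongr <;> exact Nat.le_ceil _
    _ = 2 ^ (a - (b + c)) := by rw [← Real.rpow_add two_pos, ← Real.rpow_sub two_pos]
    _ ≤ 2 ^ (-e * 2) := by
        gcongr
        · exact one_le_two
        · linarith
    _ = ((2 : ℝ) ^ (-e)) ^ 2 := by rw [Real.rpow_mul zero_le_two, Real.rpow_two]

lemma ceil_two_rpow_sub_one_div_le (a b : ℝ) :
    ((⌈(2 : ℝ) ^ a⌉₊ : ℝ) - 1) / 2 ^ b ≤ 2 ^ (a - b) := by
  rw [Real.rpow_sub two_pos]
  gcongr
  exact sub_le_iff_le_add.2 (Nat.ceil_lt_add_one (by positivity)).le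

end Exponents

section WynerZiv

variable {X B V : Type*} [Fintype X] [Fintype B] [Fintype V] {P : X × B → ℝ} {W : V → X → ℝ}

lemma abs_expect_le_of_forall_abs_le {ι : Type*} (s : Finset ι) {f : ι → ℝ} {a : ℝ} (ha : 0 ≤ a)
    (hf : ∀ i, |f i| ≤ a) : |𝔼 i ∈ s, f i| ≤ a := by
  refine (abs_expect_le s f).trans ?_
  rcases s.eq_empty_or_nonempty with rfl | hs
  · rwa [expect_empty]
  · exact expect_le hs fun i _ => hf i

/-- Upper bound on the expected distortion of a code of block length `n`: the distortion `ρ` that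
the test channel achieves, plus `2 * Δ` times the failure probability of random coding with
slack `ε`. -/
noncomputable def blockCostBound (P : X × B → ℝ) (W : V → X → ℝ) (ρ : X × B × V → ℝ) (Δ ε : ℝ)
    (n : ℕ) : ℝ :=
  expectation (iid (Fin n) (jointLaw P W)) (fun z => 𝔼 t, ρ (z t)) +
    2 * Δ * (prob (iid (Fin n) (jointLaw P W))
        {z | (2 : ℝ) ^ (n * (expectation (jointLaw P W)
            (fun z => Real.logb 2 (channelDensity P W z.1 z.2.2)) + ε)) ≤
          ∏ t, channelDensity P W (z t).1 (z t).2.2} +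
      prob (iid (Fin n) (jointLaw P W))
        {z | ∏ t, sideInfoDensity P W (z t).2.1 (z t).2.2 ≤
          (2 : ℝ) ^ (n * (expectation (jointLaw P W)
            (fun z => Real.logb 2 (sideInfoDensity P W z.2.1 z.2.2)) - ε))} +
      (2 : ℝ) ^ (-(n * ε)) + (2 : ℝ) ^ (-(n * ε)))

lemma exists_block_code (hP : P ∈ stdSimplex ℝ (X × B))
    (hW : ∀ x, (fun v => W v x) ∈ stdSimplex ℝ V) {ρ : X × B × V → ℝ} {Δ : ℝ} (hΔ : 0 ≤ Δ)
    (hρ : ∀ z, |ρ z| ≤ Δ) {ε R : ℝ}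
    (hR : condMutInf (fun x v b => P (x, b) * W v x) + 5 * ε ≤ R) (n : ℕ) :
    ∃ (enc : (Fin n → X) → Fin ⌈(2 : ℝ) ^ (n * R)⌉₊)
      (dec : Fin ⌈(2 : ℝ) ^ (n * R)⌉₊ → (Fin n → B) → Fin n → V),
      expectation (blockSource (Fin n) P)
        (fun p => 𝔼 t, ρ (p.1 t, p.2 t, dec (enc p.1) p.2 t)) ≤ blockCostBound P W ρ Δ ε n := by
  rw [condMutInf_eq_expectation_sub hP hW] at hR
  set Ir := expectation (jointLaw P W) fun z => Real.logb 2 (channelDensity P W z.1 z.2.2) with hIr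
  set Is := expectation (jointLaw P W) fun z => Real.logb 2 (sideInfoDensity P W z.2.1 z.2.2)
    with hIs
  have nonempty_fin_ceil (a : ℝ) : Nonempty (Fin ⌈(2 : ℝ) ^ a⌉₊) :=
    Fin.pos_iff_nonempty.1 (Nat.ceil_pos.2 (by positivity))
  have := nonempty_fin_ceil (n * R)
  have := nonempty_fin_ceil (n * (Is - 2 * ε))
  obtain ⟨enc, dec, hcode⟩ := exists_code_of_abs_le (M := Fin ⌈(2 : ℝ) ^ (n * R)⌉₊)
    (K := Fin ⌈(2 : ℝ) ^ (n * (Is - 2 * ε))⌉₊) (G₁ := 2 ^ (n * (Ir + ε)))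
    (G₂ := 2 ^ (n * (Is - ε))) (ρ := fun z => 𝔼 t, ρ (z.1 t, z.2.1 t, z.2.2 t))
    (blockSource_mem_stdSimplex (ι := Fin n) hP) (blockChannel_mem_stdSimplex hW)
    (fun z => abs_expect_le_of_forall_abs_le univ hΔ fun t => hρ _) hΔ
    (by positivity) (by positivity)
  refine ⟨enc, dec, hcode.trans ?_⟩
  have covering_exponent : n * (Ir + ε) + 2 * (n * ε) ≤ n * R + n * (Is - 2 * ε) := by
    linarith [mul_le_mul_of_nonneg_left hR (Nat.cast_nonneg n)]
  have packing := ceil_two_rpow_sub_one_div_le (n * (Is - 2 * ε)) (n * (Is - ε))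
  rw [show n * (Is - 2 * ε) - n * (Is - ε) = -(n * ε) by ring] at packing
  simp only [expectation_jointLaw_block, prob_jointLaw_block, channelDensity_block hP,
    sideInfoDensity_block hP, Set.mem_ofPred_eq, Fintype.card_fin, blockCostBound, ← hIr, ← hIs]
  gcongr
  exact sqrt_two_rpow_div_ceil_mul_ceil_le covering_exponent

lemma tendsto_two_rpow_neg_mul_atTop {ε : ℝ} (hε : 0 < ε) :
    Tendsto (fun n : ℕ => (2 : ℝ) ^ (-(n * ε))) atTop (𝓝 0) :=
  (tendsto_rpow_atBot_of_base_gt_one 2 one_lt_two).comp <|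
    tendsto_neg_atTop_atBot.comp (tendsto_natCast_atTop_atTop.atTop_mul_const hε)

lemma tendsto_blockCostBound (hP : P ∈ stdSimplex ℝ (X × B))
    (hW : ∀ x, (fun v => W v x) ∈ stdSimplex ℝ V) (ρ : X × B × V → ℝ) (Δ : ℝ) {ε : ℝ}
    (hε : 0 < ε) :
    Tendsto (blockCostBound P W ρ Δ ε) atTop (𝓝 (expectation (jointLaw P W) ρ)) := by
  have W_nonneg (x : X) := (hW x).1
  have hJ := jointLaw_mem_stdSimplex hP hW
  have distortion : Tendsto
      (fun n => expectation (iid (Fin n) (jointLaw P W)) (fun z => 𝔼 t, ρ (z t))) atTop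
      (𝓝 (expectation (jointLaw P W) ρ)) := by
    refine tendsto_const_nhds.congr' ?_
    filter_upwards [eventually_gt_atTop 0] with n hn
    have : NeZero n := ⟨hn.ne'⟩
    exact (expectation_iid_expect_apply hJ ρ).symm
  have channel := tendsto_prob_iid_two_rpow_le_prod hJ
    (fun z hz => channelDensity_pos hP.1 W_nonneg hz) hε
  have sideInfo := tendsto_prob_iid_prod_le_two_rpow hJ
    (fun z hz => sideInfoDensity_pos hP.1 W_nonneg hz) hε
  have coding := tendsto_two_rpow_neg_mul_atTop hε
  have failure := ((channel.add sideInfo).add coding).add coding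
  have total := distortion.add (failure.const_mul (2 * Δ))
  simp only [add_zero, mul_zero] at total
  exact total

theorem wyner_ziv_achievability_general {Y : Type*} (hP : P ∈ stdSimplex ℝ (X × B))
    (hW : ∀ x, (fun v => W v x) ∈ stdSimplex ℝ V) (φ : V → B → Y) (d : X → Y → ℝ) {D : ℝ}
    (hD : expectation (jointLaw P W) (fun z => d z.1 (φ z.2.2 z.2.1)) ≤ D) {R : ℝ}
    (hR : condMutInf (fun x v b => P (x, b) * W v x) < R) :
    ∃ (enc : ∀ n : ℕ, (Fin n → X) → Fin ⌈(2 : ℝ) ^ (n * R)⌉₊)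
      (dec : ∀ n : ℕ, Fin ⌈(2 : ℝ) ^ (n * R)⌉₊ → (Fin n → B) → Fin n → Y),
      atTop.limsup (fun n => expectation (blockSource (Fin n) P)
        fun p => 𝔼 t, d (p.1 t) (dec n (enc n p.1) p.2 t)) ≤ D := by
  let ρ (z : X × B × V) : ℝ := d z.1 (φ z.2.2 z.2.1)
  obtain ⟨Δ, hΔ, hρ⟩ : ∃ Δ, 0 ≤ Δ ∧ ∀ z, |ρ z| ≤ Δ :=
    ⟨∑ z, |ρ z|, sum_nonneg fun _ _ => abs_nonneg _,
      fun z => single_le_sum (f := fun z => |ρ z|) (fun _ _ => abs_nonneg _) (mem_univ z)⟩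
  obtain ⟨ε, hε, hεR⟩ : ∃ ε, 0 < ε ∧ condMutInf (fun x v b => P (x, b) * W v x) + 5 * ε ≤ R :=
    ⟨(R - condMutInf fun x v b => P (x, b) * W v x) / 5, by linarith, by linarith⟩
  choose enc dec hcode using exists_block_code hP hW hΔ hρ hεR
  refine ⟨enc, fun n m b t => φ (dec n m b t) (b t), ?_⟩
  have cost_ge (n : ℕ) : -Δ ≤ expectation (blockSource (Fin n) P) fun p =>
      𝔼 t, ρ (p.1 t, p.2 t, dec n (enc n p.1) p.2 t) := by
    have hB := blockSource_mem_stdSimplex (ι := Fin n) hP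
    rw [← expectation_const hB (-Δ)]
    exact expectation_mono hB.1 fun p =>
      (abs_le.1 (abs_expect_le_of_forall_abs_le univ hΔ fun t => hρ _)).1
  have bound_tendsto := tendsto_blockCostBound hP hW ρ Δ hε
  calc _ ≤ atTop.limsup (blockCostBound P W ρ Δ ε) :=
        limsup_le_limsup (.of_forall hcode)
          (isBoundedUnder_of ⟨-Δ, cost_ge⟩).isCoboundedUnder_le bound_tendsto.isBoundedUnder_le
    _ = expectation (jointLaw P W) ρ := bound_tendsto.limsup_eq
    _ ≤ D := hD

end WynerZiv

/-- Wyner–Ziv achievability: Let `P̄_{XB}` be a joint source pmf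
on the finite set `X × B`, `d : X × Y → ℝ≥0` a distortion measure, `P̄_{V|X}` a
test channel and `φ : V × B → Y` a reconstruction function such that under the
joint pmf `P̄(v,x,b) = P̄_{XB}(x,b) P̄_{V|X}(v|x)` (so `V − X − B` is Markov) we
have `E_{P̄}[d(X, φ(V,B))] ≤ D`.  Then every rate `R > I_{P̄}(X;V|B)` is
achievable for distortion `D`: there are message-set sizes `Msize n ≤ ⌈2^{nR}⌉`,
stochastic encoders `enc n : Xⁿ → Fin (Msize n)` and stochastic decoders
`dec n : Fin (Msize n) × Bⁿ → Yⁿ` (given as Markov kernels) with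
`limsup_n E[(1/n) ∑ₜ d(Xₜ,Yₜ)] ≤ D` for the i.i.d. source `(Xₜ,Bₜ) ∼ P̄_{XB}`. -/
theorem wyner_ziv_achievability
    {X B Y V : Type*} [Fintype X] [Fintype B] [Fintype Y] [Fintype V]
    (Pxb : X × B → ℝ)
    (hPxb0 : ∀ p, 0 ≤ Pxb p) (hPxb1 : ∑ p, Pxb p = 1)
    (W : V → X → ℝ)
    (hW0 : ∀ v x, 0 ≤ W v x) (hW1 : ∀ x, ∑ v, W v x = 1)
    (φ : V → B → Y) (d : X → Y → ℝ) (hd : ∀ x y, 0 ≤ d x y)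
    (D : ℝ)
    (hD : ∑ v, ∑ x, ∑ b, Pxb (x, b) * W v x * d x (φ v b) ≤ D)
    (R : ℝ)
    (hR : R > condMutInf (fun x v b => Pxb (x, b) * W v x)) :
    ∃ Msize : ℕ → ℕ,
      (∀ n, Msize n ≤ Nat.ceil ((2 : ℝ) ^ ((n : ℝ) * R))) ∧
      ∃ (enc : ∀ n : ℕ, (Fin n → X) → Fin (Msize n) → ℝ)
        (dec : ∀ n : ℕ, Fin (Msize n) → (Fin n → B) → (Fin n → Y) → ℝ),
        (∀ n xn, (∀ m, 0 ≤ enc n xn m) ∧ ∑ m, enc n xn m = 1) ∧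
        (∀ n m bn, (∀ yn, 0 ≤ dec n m bn yn) ∧ ∑ yn, dec n m bn yn = 1) ∧
        Filter.atTop.limsup
          (fun n : ℕ =>
            ∑ xn : Fin n → X, ∑ bn : Fin n → B,
              (∏ t, Pxb (xn t, bn t)) *
                ∑ m, enc n xn m *
                  ∑ yn : Fin n → Y, dec n m bn yn *
                    ((n : ℝ)⁻¹ * ∑ t, d (xn t) (yn t)))
          ≤ D := by
  classical
  have hD' : expectation (jointLaw Pxb W) (fun z => d z.1 (φ z.2.2 z.2.1)) ≤ D := by
    simp only [expectation, jointLaw, Fintype.sum_prod_type]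
    rw [sum_comm] at hD
    simpa only [sum_comm (γ := V)] using hD
  obtain ⟨enc, dec, hlimsup⟩ := wyner_ziv_achievability_general
    ⟨hPxb0, hPxb1⟩ (fun x => ⟨fun v => hW0 v x, hW1 x⟩) φ d hD' hR
  refine ⟨_, fun _ => le_rfl, fun n x => Pi.single (enc n x) 1,
    fun n m b => Pi.single (dec n m b) 1, fun _ _ => single_mem_stdSimplex ℝ _,
    fun _ _ _ => single_mem_stdSimplex ℝ _, ?_⟩
  simpa [expectation, blockSource, Fintype.sum_prod_type, Fintype.expect_eq_sum_div_card,
    div_eq_inv_mul, Pi.single_apply] using hlimsup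
end

section
/- (Berger-Tung corner point achievability.) Let X₁, X₂, U₁, U₂, Y₁, Y₂ be finite sets, let P̄_{X₁X₂} be a joint pmf, let P̄_{U₁|X₁} and P̄_{U₂|X₂} be conditional pmfs, and define the joint pmf P̄(u₁, x₁, x₂, u₂) = P̄_{X₁X₂}(x₁,x₂) P̄_{U₁|X₁}(u₁|x₁) P̄_{U₂|X₂}(u₂|x₂) (so that U₁ − X₁ − X₂ − U₂ forms a Markov chain). Let d_k : X_k × Y_k → ℝ≥0 (k = 1, 2) be distortion measures and φ_k : U₁ × U₂ → Y_k functions with E_{P̄}[ d_k(X_k, φ_k(U₁, U₂)) ] ≤ D_k for k = 1, 2. Then any rate pair (R₁, R₂) with R₁ > I_{P̄}(X₁; U₁) and R₂ > I_{P̄}(X₂; U₂ | U₁) is achievable under distortion levels (D₁, D₂): there exist sequences of (possibly stochastic) encoders f₁ₙ : X₁^n → M₁ with |M₁| ≤ ⌈2^{nR₁}⌉ and f₂ₙ : X₂^n → M₂ with |M₂| ≤ ⌈2^{nR₂}⌉, and a (possibly stochastic) decoder gₙ : M₁ × M₂ → Y₁^n × Y₂^n, such that for the i.i.d. sources (X₁ₜ,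 X₂ₜ) ~ P̄_{X₁X₂}, lim sup_n E[ (1/n) ∑_{t=1}^n d_k(X_{k,t}, Y_{k,t}) ] ≤ D_k for k = 1, 2. -/
open Finset

/-!
The rate pair is the corner point of the Berger-Tung region at which the first source is decoded on
its own and then serves as side information for the second. Each encoder draws a codeword from a
random codebook with probability proportional to the likelihood of its source block given that
codeword. By soft covering, such an encoder behaves like the test channel as soon as the codebook
has rate above `I(X;U)`. The codebook of the second source is binned and only the bin index is sent;
the decoder looks in the bin for the codeword whose likelihood ratio against the decoded first
codeword exceeds a threshold, which is reliable when the bins have rate below `I(U₁;U₂)`. Along the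
Markov chain `U₁ - X₁ - X₂ - U₂` one has `I(X₂;U₂|U₁) = I(X₂;U₂) - I(U₁;U₂)`, which is the rate left
for the bin index. The code is derandomized against the bounded loss
`∑ₖ |E dₖ - (1/n) ∑ₜ dₖ|`, whose mean under the test-channel law vanishes by the weak law of large
numbers, so a single code serves both distortion constraints.
-/

namespace BergerTung

open Filter Topology
open scoped BigOperators

section Mean

variable {A B : Type*} [Fintype A] [Fintype B]

/-- The expectation of `f` under the pmf `p`. -/
noncomputable def mean (p f : A → ℝ) : ℝ := ∑ a, p a * f a

/-- The probability of the event `s` under the pmf `p`. -/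
noncomputable def prob (p : A → ℝ) (s : Set A) : ℝ := mean p (s.indicator 1)

/-- The output pmf of the channel `W` under the input pmf `p`. -/
noncomputable def output (p : A → ℝ) (W : A → B → ℝ) (b : B) : ℝ := mean p fun a => W a b

/-- The law of an input-output pair of the channel `W` under the input pmf `p`. -/
def joint (p : A → ℝ) (W : A → B → ℝ) (c : A × B) : ℝ := p c.1 * W c.1 c.2

lemma mean_add (p f g : A → ℝ) : mean p (fun a => f a + g a) = mean p f + mean p g := by
  simp only [mean, mul_add, sum_add_distrib]

lemma mean_sub (p f g : A → ℝ) : mean p (fun a => f a - g a) = mean p f - mean p g := by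
  simp only [mean, mul_sub, sum_sub_distrib]

lemma mean_const_mul (p : A → ℝ) (r : ℝ) (f : A → ℝ) :
    mean p (fun a => r * f a) = r * mean p f := by
  simp only [mean, mul_sum, mul_left_comm]

lemma mean_sum {ι : Type*} (s : Finset ι) (p : A → ℝ) (f : ι → A → ℝ) :
    mean p (fun a => ∑ i ∈ s, f i a) = ∑ i ∈ s, mean p (f i) := by
  simp only [mean, mul_sum]
  exact sum_comm

lemma mean_expect {ι : Type*} [Fintype ι] (p : A → ℝ) (f : ι → A → ℝ) :
    mean p (fun a => 𝔼 i, f i a) = 𝔼 i, mean p (f i) := by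
  simp only [mean, mul_expect]
  exact (expect_sum_comm univ univ _).symm

lemma mean_comm (p : A → ℝ) (q : B → ℝ) (f : A → B → ℝ) :
    mean p (fun a => mean q (f a)) = mean q fun b => mean p fun a => f a b := by
  simp only [mean, mul_sum, mul_left_comm]
  exact sum_comm

lemma mean_joint (p : A → ℝ) (W : A → B → ℝ) (f : A × B → ℝ) :
    mean (joint p W) f = mean p fun a => mean (W a) fun b => f (a, b) := by
  simp only [mean, joint, Fintype.sum_prod_type, mul_sum, mul_assoc]

lemma mean_output (p : A → ℝ) (W : A → B → ℝ) (f : B → ℝ) :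
    mean (output p W) f = mean p fun a => mean (W a) f := by
  simp only [mean, output, sum_mul, mul_sum, mul_assoc]
  exact sum_comm

section Pmf

variable {p : A → ℝ} (hp : p ∈ stdSimplex ℝ A)
include hp

lemma nonempty_of_mem_stdSimplex : Nonempty A := by
  by_contra hA
  rw [not_nonempty_iff] at hA
  simp only [stdSimplex_of_isEmpty_index, Set.mem_empty_iff_false] at hp

lemma mean_const (r : ℝ) : mean p (fun _ => r) = r := by
  simp only [mean, ← sum_mul, hp.2, one_mul]

lemma mean_nonneg {f : A → ℝ} (hf : ∀ a, 0 ≤ f a) : 0 ≤ mean p f :=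
  sum_nonneg fun a _ => mul_nonneg (hp.1 a) (hf a)

lemma mean_mono {f g : A → ℝ} (h : ∀ a, f a ≤ g a) : mean p f ≤ mean p g :=
  sum_le_sum fun a _ => mul_le_mul_of_nonneg_left (h a) (hp.1 a)

lemma prob_le_inv_mul_mean {f : A → ℝ} (hf : ∀ a, 0 ≤ f a) {δ : ℝ} (hδ : 0 < δ) {s : Set A}
    (h : ∀ a ∈ s, 0 < p a → δ ≤ f a) : prob p s ≤ δ⁻¹ * mean p f := by
  have pointwise (a : A) : p a * s.indicator 1 a ≤ p a * (δ⁻¹ * f a) := by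
    rcases (hp.1 a).eq_or_lt with h0 | hpos
    · rw [← h0, zero_mul, zero_mul]
    · refine mul_le_mul_of_nonneg_left (Set.indicator_apply_le' (fun ha => ?_) fun _ => ?_) hpos.le
      · exact (le_inv_mul_iff₀ hδ).2 (by simpa using h a ha hpos)
      · exact mul_nonneg (inv_nonneg.2 hδ.le) (hf a)
  rw [← mean_const_mul]
  exact sum_le_sum fun a _ => pointwise a

lemma prob_nonneg (s : Set A) : 0 ≤ prob p s :=
  mean_nonneg hp fun _ => Set.indicator_nonneg (fun _ _ => zero_le_one) _

lemma exists_le_of_mean_le {f : A → ℝ} {r : ℝ} (h : mean p f ≤ r) : ∃ a, f a ≤ r := by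
  by_contra! hlt
  obtain ⟨a, -, ha⟩ : ∃ a ∈ univ, 0 < p a := by
    by_contra! hle
    linarith [hp.2, sum_nonpos hle]
  have : r < mean p f := by
    conv_lhs => rw [← mean_const hp r]
    exact sum_lt_sum (fun b _ => mul_le_mul_of_nonneg_left (hlt b).le (hp.1 b))
      ⟨a, mem_univ a, mul_lt_mul_of_pos_left (hlt a) ha⟩
  linarith

lemma mean_abs_le_sqrt (f : A → ℝ) : mean p (fun a => |f a|) ≤ √(mean p fun a => f a ^ 2) := by
  refine Real.le_sqrt_of_sq_le ?_
  simpa only [mean, sq_abs, smul_eq_mul] using (even_two.convexOn_pow (𝕜 := ℝ)).map_sum_le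
    (fun a _ => hp.1 a) hp.2 (fun a _ => Set.mem_univ |f a|)

lemma mean_sq_sub_le (f : A → ℝ) :
    mean p (fun a => (mean p f - f a) ^ 2) ≤ mean p fun a => f a ^ 2 := by
  have expand : mean p (fun a => (mean p f - f a) ^ 2)
      = mean p (fun a => f a ^ 2) - mean p f ^ 2 := by
    have h (a : A) : (mean p f - f a) ^ 2 = mean p f ^ 2 + f a ^ 2 - 2 * mean p f * f a := by ring
    simp only [h, mean_sub, mean_add, mean_const_mul, mean_const hp]
    ring
  linarith [sq_nonneg (mean p f)]

lemma output_mem_stdSimplex {W : A → B → ℝ} (hW : ∀ a, W a ∈ stdSimplex ℝ B) :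
    output p W ∈ stdSimplex ℝ B := by
  refine ⟨fun b => mean_nonneg hp fun a => (hW a).1 b, ?_⟩
  simp only [output, ← mean_sum, (hW _).2, mean_const hp]

lemma joint_mem_stdSimplex {W : A → B → ℝ} (hW : ∀ a, W a ∈ stdSimplex ℝ B) :
    joint p W ∈ stdSimplex ℝ (A × B) := by
  refine ⟨fun c => mul_nonneg (hp.1 c.1) ((hW c.1).1 c.2), ?_⟩
  simp only [joint, Fintype.sum_prod_type, ← mul_sum, (hW _).2, mul_one, hp.2]

end Pmf

end Mean

section Product

variable {ι A B : Type*} [Fintype ι]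

/-- The law of independent coordinates with marginals `p i`. -/
def piPmf (p : ι → A → ℝ) (x : ι → A) : ℝ := ∏ i, p i (x i)

/-- The law of i.i.d. coordinates with common marginal `p`. -/
def iid (p : A → ℝ) : (ι → A) → ℝ := piPmf fun _ => p

/-- The memoryless extension of the channel `W` to blocks. -/
def memoryless (W : A → B → ℝ) (x : ι → A) : (ι → B) → ℝ := piPmf fun i => W (x i)

variable [DecidableEq ι] [Fintype A]

lemma piPmf_mem_stdSimplex {p : ι → A → ℝ} (hp : ∀ i, p i ∈ stdSimplex ℝ A) :
    piPmf p ∈ stdSimplex ℝ (ι → A) := by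
  refine ⟨fun x => prod_nonneg fun i _ => (hp i).1 _, ?_⟩
  simp only [piPmf, ← Fintype.prod_sum, (hp _).2, prod_const_one]

lemma iid_mem_stdSimplex {p : A → ℝ} (hp : p ∈ stdSimplex ℝ A) :
    iid p ∈ stdSimplex ℝ (ι → A) :=
  piPmf_mem_stdSimplex fun _ => hp

lemma mean_piPmf_prod (p f : ι → A → ℝ) :
    mean (piPmf p) (fun x => ∏ i, f i (x i)) = ∏ i, mean (p i) (f i) := by
  simp only [mean, piPmf, ← prod_mul_distrib, Fintype.prod_sum]

lemma output_piPmf_memoryless (p : ι → A → ℝ) (W : A → B → ℝ) :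
    output (piPmf p) (memoryless W) = piPmf fun i => output (p i) W :=
  funext fun y => mean_piPmf_prod p fun i a => W a (y i)

variable [Fintype B]

omit [Fintype A] in
lemma memoryless_mem_stdSimplex {W : A → B → ℝ} (hW : ∀ a, W a ∈ stdSimplex ℝ B) (x : ι → A) :
    memoryless W x ∈ stdSimplex ℝ (ι → B) :=
  piPmf_mem_stdSimplex fun i => hW (x i)

lemma mean_iid_memoryless (p : A → ℝ) (W : A → B → ℝ) (f : (ι → A) → (ι → B) → ℝ) :
    mean (iid p) (fun x => mean (memoryless W x) (f x))
      = mean (iid (joint p W)) fun c => f (fun i => (c i).1) fun i => (c i).2 := by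
  simp only [mean, mul_sum]
  rw [← Fintype.sum_prod_type',
    ← (Equiv.arrowProdEquivProdArrow ι (fun _ => A) fun _ => B).sum_comp]
  simp only [iid, memoryless, piPmf, joint, prod_mul_distrib, mul_assoc,
    Equiv.arrowProdEquivProdArrow_apply]

lemma mean_iid_eq_mean_update {q : A → ℝ} (hq : q ∈ stdSimplex ℝ A) (i : ι) (F : (ι → A) → ℝ) :
    mean (iid q) F = mean q fun a => mean (iid q) fun c => F (Function.update c i a) := by
  have swap_weight (a : A) (c : ι → A) :
      q a * iid q c = q (c i) * iid q (Function.update c i a) := by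
    simp only [iid, piPmf, Fintype.prod_eq_mul_prod_compl i, Function.update_self]
    rw [mul_left_comm]
    congr! 3 with k hk
    rw [Function.update_of_ne (by simpa using hk)]
  calc mean (iid q) F = ∑ z : A × (ι → A), q z.1 * iid q z.2 * F z.2 := by
        simp only [Fintype.sum_prod_type, mul_assoc, ← mul_sum, ← sum_mul, hq.2, one_mul, mean]
    _ = ∑ z : A × (ι → A), q z.1 * iid q z.2 * F (Function.update z.2 i z.1) := by
        let resample (z : A × (ι → A)) : A × (ι → A) := (z.2 i, Function.update z.2 i z.1)
        have involutive : Function.Involutive resample := fun z => by simp [resample]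
        refine Fintype.sum_equiv involutive.toPerm _ _ fun z => ?_
        simp [resample, swap_weight z.1 z.2]
    _ = _ := by simp only [Fintype.sum_prod_type, mean, mul_sum, mul_assoc]

lemma mean_iid_eval {q : A → ℝ} (hq : q ∈ stdSimplex ℝ A) (i : ι) (f : A → ℝ) :
    mean (iid q) (fun c => f (c i)) = mean q f := by
  rw [mean_iid_eq_mean_update hq i]
  simp only [Function.update_self, mean_const (iid_mem_stdSimplex hq)]

lemma mean_iid_eval₂ {q : A → ℝ} (hq : q ∈ stdSimplex ℝ A) {i j : ι} (hij : i ≠ j)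
    (f : A → A → ℝ) :
    mean (iid q) (fun c => f (c i) (c j)) = mean q fun a => mean q (f a) := by
  rw [mean_iid_eq_mean_update hq i]
  simp only [Function.update_self, Function.update_of_ne hij.symm, mean_iid_eval hq]

end Product

section EmpiricalMean

variable {ι A : Type*} [Fintype ι] [DecidableEq ι] [Nonempty ι] [Fintype A]
  {q : A → ℝ} (hq : q ∈ stdSimplex ℝ A)
include hq

lemma mean_iid_sq_mean_sub_expect_le (f : A → ℝ) :
    mean (iid q) (fun c : ι → A => (mean q f - 𝔼 i, f (c i)) ^ 2)
      ≤ mean q (fun a => f a ^ 2) / Fintype.card ι := by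
  let h (a : A) : ℝ := mean q f - f a
  have mean_h : mean q h = 0 := by simp only [h, mean_sub, mean_const hq, sub_self]
  have cross (i j : ι) : mean (iid q) (fun c => h (c i) * h (c j))
      = if i = j then mean q fun a => h a ^ 2 else 0 := by
    split_ifs with hij
    · subst hij
      simp only [← sq]
      exact mean_iid_eval hq i fun a => h a ^ 2
    · rw [mean_iid_eval₂ hq hij fun a b => h a * h b]
      simp only [mean_const_mul, mean_h, mul_zero, mean_const hq]
  calc mean (iid q) (fun c : ι → A => (mean q f - 𝔼 i, f (c i)) ^ 2)
      = mean (iid q) (fun c : ι → A => 𝔼 i, 𝔼 j, h (c i) * h (c j)) := by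
        congr! 2 with c
        rw [← expect_mul_expect, ← sq, expect_sub_distrib, Fintype.expect_const]
    _ = mean q (fun a => h a ^ 2) / Fintype.card ι := by
        simp only [mean_expect, cross]
        simp only [Fintype.expect_eq_sum_div_card, sum_ite_eq, mem_univ, if_true, sum_const,
          card_univ, nsmul_eq_mul]
        field_simp
    _ ≤ _ := by gcongr; exact mean_sq_sub_le hq f

lemma mean_iid_abs_mean_sub_expect_le (f : A → ℝ) :
    mean (iid q) (fun c : ι → A => |mean q f - 𝔼 i, f (c i)|)
      ≤ √(mean q (fun a => f a ^ 2) / Fintype.card ι) :=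
  (mean_abs_le_sqrt (iid_mem_stdSimplex hq) _).trans
    (Real.sqrt_le_sqrt (mean_iid_sq_mean_sub_expect_le hq f))

lemma mean_iid_abs_mean_sub_expect_le_of_nonneg {f : A → ℝ} (hf : ∀ a, 0 ≤ f a) {τ : ℝ}
    (hτ : 0 ≤ τ) :
    mean (iid q) (fun c : ι → A => |mean q f - 𝔼 i, f (c i)|)
      ≤ √(τ * mean q f / Fintype.card ι) + 2 * mean q ({a | τ < f a}.indicator f) := by
  let high : A → ℝ := {a | τ < f a}.indicator f
  let low : A → ℝ := {a | τ < f a}ᶜ.indicator f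
  have split (a : A) : f a = low a + high a :=
    congrFun (Set.indicator_compl_add_self {a | τ < f a} f).symm a
  have high_nonneg (a : A) : 0 ≤ high a := Set.indicator_nonneg (fun a _ => hf a) a
  have low_sq_le (a : A) : low a ^ 2 ≤ τ * f a := by
    by_cases ha : τ < f a
    · simpa [low, ha] using mul_nonneg hτ (hf a)
    · simpa [low, ha, sq] using mul_le_mul_of_nonneg_right (not_lt.1 ha) (hf a)
  have pointwise (c : ι → A) : |mean q f - 𝔼 i, f (c i)|
      ≤ |mean q low - 𝔼 i, low (c i)| + (mean q high + 𝔼 i, high (c i)) := by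
    have hm : mean q f = mean q low + mean q high := by rw [← mean_add]; simp only [← split]
    have he : 𝔼 i, f (c i) = 𝔼 i, low (c i) + 𝔼 i, high (c i) := by
      simp only [← expect_add_distrib, ← split]
    rw [hm, he, add_sub_add_comm]
    refine (abs_add_le _ _).trans (add_le_add_right ((abs_sub _ _).trans_eq ?_) _)
    rw [abs_of_nonneg (mean_nonneg hq high_nonneg),
      abs_of_nonneg (expect_nonneg fun i _ => high_nonneg (c i))]
  calc mean (iid q) (fun c : ι → A => |mean q f - 𝔼 i, f (c i)|)
      ≤ mean (iid q) (fun c : ι → A => |mean q low - 𝔼 i, low (c i)|)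
          + (mean q high + mean q high) := by
        refine (mean_mono (iid_mem_stdSimplex hq) pointwise).trans_eq ?_
        simp only [mean_add, mean_const (iid_mem_stdSimplex hq), mean_expect, mean_iid_eval hq,
          Fintype.expect_const]
    _ ≤ _ := by
        rw [← two_mul]
        gcongr
        refine (mean_iid_abs_mean_sub_expect_le hq low).trans ?_
        gcongr
        rw [← mean_const_mul]
        exact mean_mono hq low_sq_le

end EmpiricalMean

section SoftCovering

variable {ι A B : Type*} [Fintype ι] [DecidableEq ι] [Nonempty ι] [Fintype A] [Fintype B]

/-- The probability that the likelihood ratio of the channel `V` to its output pmf, under the input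
pmf `q`, exceeds `T`. -/
noncomputable def ratioUpperTail (q : B → ℝ) (V : B → A → ℝ) (T : ℝ) : ℝ :=
  mean q fun u => prob (V u) {x | T * output q V x < V u x}

lemma soft_covering {q : B → ℝ} (hq : q ∈ stdSimplex ℝ B) {V : B → A → ℝ}
    (hV : ∀ u, V u ∈ stdSimplex ℝ A) {T : ℝ} (hT : 0 ≤ T) :
    mean (iid q) (fun c : ι → B => ∑ x, |output q V x - 𝔼 i, V (c i) x|)
      ≤ √(T / Fintype.card ι) + 2 * ratioUpperTail q V T := by
  have hr := output_mem_stdSimplex hq hV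
  have coordinate (x : A) : mean (iid q) (fun c : ι → B => |output q V x - 𝔼 i, V (c i) x|)
      ≤ output q V x * √(T / Fintype.card ι)
        + 2 * mean q fun u => V u x * {x | T * output q V x < V u x}.indicator 1 x := by
    refine (mean_iid_abs_mean_sub_expect_le_of_nonneg hq (fun u => (hV u).1 x)
      (mul_nonneg hT (hr.1 x))).trans_eq ?_
    congr 1
    · change √(T * output q V x * output q V x / _) = _
      rw [show T * output q V x * output q V x / Fintype.card ι
        = output q V x ^ 2 * (T / Fintype.card ι) by ring, Real.sqrt_mul (sq_nonneg _),
        Real.sqrt_sq (hr.1 x)]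
    · congr 2 with u
      simp [Set.indicator_apply]
  calc _ = ∑ x, mean (iid q) (fun c : ι → B => |output q V x - 𝔼 i, V (c i) x|) :=
        mean_sum univ _ _
    _ ≤ _ := sum_le_sum fun x _ => coordinate x
    _ = _ := by
        rw [sum_add_distrib, ← sum_mul, hr.2, one_mul, ← mul_sum, ← mean_sum]
        rfl

end SoftCovering

section Bayes

variable {ι A B : Type*} [Fintype ι] [Fintype A] [Fintype B]

/-- The pmf proportional to the nonnegative weights `v`, taken to be uniform when they vanish. -/
noncomputable def normalizePmf (v : ι → ℝ) (i : ι) : ℝ :=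
  if ∑ j, v j = 0 then (Fintype.card ι : ℝ)⁻¹ else v i / ∑ j, v j

lemma normalizePmf_mem_stdSimplex [Nonempty ι] {v : ι → ℝ} (hv : ∀ i, 0 ≤ v i) :
    normalizePmf v ∈ stdSimplex ℝ ι := by
  by_cases h : ∑ j, v j = 0
  · rw [show normalizePmf v = fun _ => (Fintype.card ι : ℝ)⁻¹ from funext fun _ => if_pos h]
    exact ⟨fun _ => by positivity, by simp⟩
  · rw [show normalizePmf v = fun i => v i / ∑ j, v j from funext fun _ => if_neg h]
    exact ⟨fun i => div_nonneg (hv i) (sum_nonneg fun j _ => hv j),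
      by rw [← sum_div, div_self h]⟩

lemma sum_mul_normalizePmf {v : ι → ℝ} (hv : ∀ i, 0 ≤ v i) (i : ι) :
    (∑ j, v j) * normalizePmf v i = v i := by
  by_cases h : ∑ j, v j = 0
  · rw [h, zero_mul, (sum_eq_zero_iff_of_nonneg fun j _ => hv j).1 h i (mem_univ i)]
  · simp only [normalizePmf, h, if_false, mul_div_cancel₀ _ h]

lemma sum_abs_mul_normalizePmf_sub [Nonempty ι] {v : ι → ℝ} (hv : ∀ i, 0 ≤ v i) (r : ℝ) :
    ∑ i, |r * normalizePmf v i - v i| = |r - ∑ i, v i| := by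
  have hn := normalizePmf_mem_stdSimplex hv
  calc ∑ i, |r * normalizePmf v i - v i|
      = ∑ i, |r - ∑ i, v i| * normalizePmf v i := by
        refine sum_congr rfl fun i _ => ?_
        conv_lhs => rw [← sum_mul_normalizePmf hv i, ← sub_mul, abs_mul, abs_of_nonneg (hn.1 i)]
    _ = _ := by rw [← mul_sum, hn.2, mul_one]

/-- The two disintegrations of a joint pmf: `W` is the channel from a variable with pmf `p` to a
variable with pmf `q`, and `V` is the reverse channel. -/
structure BayesPair (p : A → ℝ) (W : A → B → ℝ) (q : B → ℝ) (V : B → A → ℝ) : Prop where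
  left_mem : p ∈ stdSimplex ℝ A
  forward_mem : ∀ a, W a ∈ stdSimplex ℝ B
  right_mem : q ∈ stdSimplex ℝ B
  backward_mem : ∀ b, V b ∈ stdSimplex ℝ A
  mul_eq_mul : ∀ a b, p a * W a b = q b * V b a

namespace BayesPair

variable {p : A → ℝ} {W : A → B → ℝ} {q : B → ℝ} {V : B → A → ℝ}

lemma symm (h : BayesPair p W q V) : BayesPair q V p W :=
  ⟨h.right_mem, h.backward_mem, h.left_mem, h.forward_mem, fun b a => (h.mul_eq_mul a b).symm⟩

lemma mean_comm (h : BayesPair p W q V) (f : A → B → ℝ) :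
    mean p (fun a => mean (W a) (f a)) = mean q fun b => mean (V b) fun a => f a b := by
  simp only [mean, mul_sum, ← mul_assoc, h.mul_eq_mul]
  exact sum_comm

lemma output_backward (h : BayesPair p W q V) : output q V = p :=
  funext fun a => by
    simp only [output, mean, ← h.mul_eq_mul, ← mul_sum, (h.forward_mem a).2, mul_one]

lemma iid [DecidableEq ι] (h : BayesPair p W q V) :
    BayesPair (BergerTung.iid p : (ι → A) → ℝ) (memoryless W) (BergerTung.iid q)
      (memoryless V) where
  left_mem := iid_mem_stdSimplex h.left_mem
  forward_mem := memoryless_mem_stdSimplex h.forward_mem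
  right_mem := iid_mem_stdSimplex h.right_mem
  backward_mem := memoryless_mem_stdSimplex h.backward_mem
  mul_eq_mul x u := by
    simp only [BergerTung.iid, memoryless, piPmf, ← prod_mul_distrib, h.mul_eq_mul]

end BayesPair

lemma exists_bayesPair {p : A → ℝ} (hp : p ∈ stdSimplex ℝ A) {W : A → B → ℝ}
    (hW : ∀ a, W a ∈ stdSimplex ℝ B) : ∃ V, BayesPair p W (output p W) V := by
  have := nonempty_of_mem_stdSimplex hp
  have hv (b : B) (a : A) : 0 ≤ p a * W a b := mul_nonneg (hp.1 a) ((hW a).1 b)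
  exact ⟨fun b => normalizePmf fun a => p a * W a b, hp, hW, output_mem_stdSimplex hp hW,
    fun b => normalizePmf_mem_stdSimplex (hv b), fun a b => (sum_mul_normalizePmf (hv b) a).symm⟩

lemma exists_joint_eq {P : A × B → ℝ} (hP : P ∈ stdSimplex ℝ (A × B)) :
    ∃ (p : A → ℝ) (K : A → B → ℝ),
      p ∈ stdSimplex ℝ A ∧ (∀ a, K a ∈ stdSimplex ℝ B) ∧ joint p K = P := by
  have : Nonempty B := (nonempty_of_mem_stdSimplex hP).map Prod.snd
  refine ⟨fun a => ∑ b, P (a, b), fun a => normalizePmf fun b => P (a, b),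
    ⟨fun a => sum_nonneg fun b _ => hP.1 _, ?_⟩,
    fun a => normalizePmf_mem_stdSimplex fun b => hP.1 _,
    funext fun c => sum_mul_normalizePmf (fun b => hP.1 (c.1, b)) c.2⟩
  rw [← Fintype.sum_prod_type', hP.2]

end Bayes

section LikelihoodEncoder

variable {ι A B : Type*} [Fintype ι]

/-- The likelihood encoder of the codebook `c`: it picks an index with probability proportional to
the likelihood of the codeword under the reverse channel `V`. -/
noncomputable def likelihoodEncoder (V : B → A → ℝ) (c : ι → B) (x : A) : ι → ℝ :=
  normalizePmf fun i => V (c i) x / Fintype.card ι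

lemma mean_likelihoodEncoder_le [Nonempty ι] [Fintype A] (p : A → ℝ) {V : B → A → ℝ}
    (hV : ∀ u x, 0 ≤ V u x) (c : ι → B) {g : A → ι → ℝ} {G : ℝ} (hg : ∀ x i, 0 ≤ g x i)
    (hgG : ∀ x i, g x i ≤ G) :
    mean p (fun x => mean (likelihoodEncoder V c x) (g x))
      ≤ (𝔼 i, mean (V (c i)) fun x => g x i) + G * ∑ x, |p x - 𝔼 i, V (c i) x| := by
  let v (x : A) (i : ι) : ℝ := V (c i) x / Fintype.card ι
  have hv (x : A) (i : ι) : 0 ≤ v x i := div_nonneg (hV _ _) (Nat.cast_nonneg _)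
  have replace (x : A) (i : ι) : p x * normalizePmf (v x) i * g x i
      ≤ v x i * g x i + |p x * normalizePmf (v x) i - v x i| * G := by
    have := mul_le_mul (le_abs_self (p x * normalizePmf (v x) i - v x i)) (hgG x i) (hg x i)
      (abs_nonneg _)
    linarith
  calc mean p (fun x => mean (likelihoodEncoder V c x) (g x))
      = ∑ x, ∑ i, p x * normalizePmf (v x) i * g x i := by
        simp only [mean, mul_sum, mul_assoc, likelihoodEncoder, v]
    _ ≤ ∑ x, ∑ i, (v x i * g x i + |p x * normalizePmf (v x) i - v x i| * G) :=
        sum_le_sum fun x _ => sum_le_sum fun i _ => replace x i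
    _ = (∑ i, ∑ x, v x i * g x i) + G * ∑ x, |p x - ∑ i, v x i| := by
        simp only [sum_add_distrib, ← sum_mul, sum_abs_mul_normalizePmf_sub (hv _)]
        rw [sum_comm, mul_comm G]
    _ = _ := by
        simp only [v, mean, Fintype.expect_eq_sum_div_card, sum_div, div_mul_eq_mul_div]

end LikelihoodEncoder

section Binning

variable {A B Z μ l : Type*} [Fintype l]

/-- The encoder that draws an index `(m, i)` from the likelihood encoder and sends only the
bin `m`. -/
noncomputable def binEncoder [Fintype μ] (V : B → A → ℝ) (c : μ × l → B) (x : A) (m : μ) : ℝ :=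
  ∑ i, likelihoodEncoder V c x (m, i)

/-- The decoder that returns a codeword of the bin `m` lying in `s`, and an arbitrary codeword of
the bin if there is none. -/
noncomputable def binDecoder [Nonempty l] (c : μ × l → B) (s : Set B) (m : μ) : B :=
  c (m, Classical.epsilon fun i => c (m, i) ∈ s)

lemma binEncoder_mem_stdSimplex [Fintype μ] [Nonempty μ] [Nonempty l] {V : B → A → ℝ}
    (hV : ∀ u x, 0 ≤ V u x) (c : μ × l → B) (x : A) : binEncoder V c x ∈ stdSimplex ℝ μ := by
  have h := normalizePmf_mem_stdSimplex (v := fun i => V (c i) x / Fintype.card (μ × l))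
    fun i => div_nonneg (hV _ _) (Nat.cast_nonneg _)
  exact ⟨fun m => sum_nonneg fun i _ => h.1 (m, i), by rw [← h.2, Fintype.sum_prod_type]; rfl⟩

lemma mean_binEncoder [Fintype μ] (V : B → A → ℝ) (c : μ × l → B) (x : A) (f : μ → ℝ) :
    mean (binEncoder V c x) f = mean (likelihoodEncoder V c x) fun j => f j.1 := by
  simp only [mean, binEncoder, Fintype.sum_prod_type, sum_mul]

lemma loss_binDecoder_le [Nonempty l] [DecidableEq l] (c : μ × l → B) (s : Set B) (j : μ × l)
    {g : B → ℝ} {G : ℝ} (hg : ∀ u, g u ∈ Set.Icc 0 G) :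
    g (binDecoder c s j.1) ≤ g (c j) + G * (sᶜ.indicator 1 (c j)
      + ∑ i ∈ univ.erase j.2, s.indicator 1 (c (j.1, i))) := by
  obtain ⟨m, i⟩ := j
  set found := Classical.epsilon fun i => c (m, i) ∈ s with found_def
  have hG : 0 ≤ G := (hg (c (m, i))).1.trans (hg (c (m, i))).2
  have miss_nonneg (t : Set B) (u : B) : (0 : ℝ) ≤ t.indicator 1 u :=
    Set.indicator_nonneg (fun _ _ => zero_le_one) u
  have others_nonneg : (0 : ℝ) ≤ ∑ i ∈ univ.erase i, s.indicator 1 (c (m, i)) :=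
    sum_nonneg fun i _ => miss_nonneg _ _
  by_cases hfound : found = i
  · simp only [binDecoder, ← found_def, hfound]
    exact le_add_of_nonneg_right (mul_nonneg hG (add_nonneg (miss_nonneg _ _) others_nonneg))
  · suffices (1 : ℝ) ≤ sᶜ.indicator 1 (c (m, i)) + ∑ i ∈ univ.erase i, s.indicator 1 (c (m, i)) from
      (hg _).2.trans ((le_mul_of_one_le_right hG this).trans (le_add_of_nonneg_left (hg _).1))
    by_cases hi : c (m, i) ∈ s
    · have found_mem : c (m, found) ∈ s :=
        Classical.epsilon_spec (p := fun i => c (m, i) ∈ s) ⟨i, hi⟩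
      have := single_le_sum (f := fun i => s.indicator (1 : B → ℝ) (c (m, i)))
        (fun i _ => miss_nonneg _ _) (mem_erase.2 ⟨hfound, mem_univ found⟩)
      simp only [Set.indicator_of_mem found_mem, Pi.one_apply] at this
      exact this.trans (le_add_of_nonneg_left (miss_nonneg _ _))
    · simpa [hi] using others_nonneg

variable [Fintype A] [Fintype B] {p : A → ℝ} {W : A → B → ℝ} {q : B → ℝ} {V : B → A → ℝ}

lemma BayesPair.mean_iid_codeword {ι : Type*} [Fintype ι] [DecidableEq ι]
    (h : BayesPair p W q V) (j : ι) (f : A → B → ℝ) :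
    mean (BergerTung.iid q) (fun c : ι → B => mean (V (c j)) fun x => f x (c j))
      = mean p fun x => mean (W x) (f x) := by
  rw [mean_iid_eval h.right_mem j fun u => mean (V u) fun x => f x u, h.mean_comm]

lemma BayesPair.mean_iid_other_codeword {ι : Type*} [Fintype ι] [DecidableEq ι]
    (h : BayesPair p W q V) {j k : ι} (hjk : j ≠ k) (f : A → B → ℝ) :
    mean (BergerTung.iid q) (fun c : ι → B => mean (V (c j)) fun x => f x (c k))
      = mean p fun x => mean q (f x) := by
  rw [mean_iid_eval₂ h.right_mem hjk fun u u' => mean (V u) fun x => f x u']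
  simp only [BergerTung.mean_comm q (V _)]
  rw [← mean_output, h.output_backward]

variable [Fintype Z] [Fintype μ] [Nonempty μ] [Nonempty l]

lemma BayesPair.mean_iid_binning_loss [DecidableEq μ] [DecidableEq l] (h : BayesPair p W q V)
    {K : A → Z → ℝ} (pass : Z → Set B) (g : A → Z → B → ℝ) (G : ℝ) :
    mean (BergerTung.iid q) (fun c : μ × l → B => 𝔼 j, mean (V (c j)) fun x => mean (K x) fun z =>
        g x z (c j) + G * ((pass z)ᶜ.indicator 1 (c j)
          + ∑ i ∈ univ.erase j.2, (pass z).indicator 1 (c (j.1, i))))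
      = (mean p fun x => mean (K x) fun z => mean (W x) (g x z))
        + G * mean p fun x => mean (K x) fun z =>
          prob (W x) (pass z)ᶜ + (Fintype.card l - 1) * prob q (pass z) := by
  have other (j : μ × l) (i : l) (hi : i ∈ univ.erase j.2) : j ≠ (j.1, i) := fun hj =>
    ne_of_mem_erase hi (congrArg Prod.snd hj).symm
  have average (j : μ × l) : mean (BergerTung.iid q) (fun c : μ × l → B =>
      mean (V (c j)) fun x => mean (K x) fun z =>
        g x z (c j) + G * ((pass z)ᶜ.indicator 1 (c j)
          + ∑ i ∈ univ.erase j.2, (pass z).indicator 1 (c (j.1, i))))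
      = (mean p fun x => mean (K x) fun z => mean (W x) (g x z))
        + G * mean p fun x => mean (K x) fun z =>
          prob (W x) (pass z)ᶜ + (Fintype.card l - 1) * prob q (pass z) := by
    simp only [mean_add, mean_const_mul, mean_sum]
    rw [h.mean_iid_codeword j fun x u => mean (K x) fun z => g x z u,
      h.mean_iid_codeword j fun x u => mean (K x) fun z => (pass z)ᶜ.indicator 1 u,
      sum_congr rfl fun i hi => h.mean_iid_other_codeword (other j i hi)
        fun x u => mean (K x) fun z => (pass z).indicator 1 u]
    simp only [BergerTung.mean_comm (W _), BergerTung.mean_comm q, sum_const,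
      card_erase_of_mem (mem_univ _), card_univ, nsmul_eq_mul, Nat.cast_pred Fintype.card_pos, prob]
  simp only [mean_expect, average, Fintype.expect_const]

lemma BayesPair.exists_binning_code (h : BayesPair p W q V) {K : A → Z → ℝ}
    (hK : ∀ x, K x ∈ stdSimplex ℝ Z) (pass : Z → Set B) {g : A → Z → B → ℝ} {G : ℝ}
    (hg : ∀ x z u, g x z u ∈ Set.Icc 0 G) {T : ℝ} (hT : 0 ≤ T) :
    ∃ c : μ × l → B,
      (mean p fun x => mean (binEncoder V c x) fun m => mean (K x) fun z =>
          g x z (binDecoder c (pass z) m))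
        ≤ (mean p fun x => mean (K x) fun z => mean (W x) (g x z))
          + G * ((mean p fun x => mean (K x) fun z =>
              prob (W x) (pass z)ᶜ + (Fintype.card l - 1) * prob q (pass z))
            + (√(T / Fintype.card (μ × l)) + 2 * ratioUpperTail q V T)) := by
  classical
  have hcodebook := iid_mem_stdSimplex (ι := μ × l) h.right_mem
  obtain ⟨x₀⟩ := nonempty_of_mem_stdSimplex h.left_mem
  obtain ⟨z₀⟩ := nonempty_of_mem_stdSimplex (hK x₀)
  obtain ⟨u₀⟩ := nonempty_of_mem_stdSimplex h.right_mem
  have hG : 0 ≤ G := (hg x₀ z₀ u₀).1.trans (hg x₀ z₀ u₀).2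
  refine exists_le_of_mean_le hcodebook ?_
  calc _ ≤ mean (BergerTung.iid q) (fun c : μ × l → B =>
          (𝔼 j, mean (V (c j)) fun x => mean (K x) fun z =>
            g x z (c j) + G * ((pass z)ᶜ.indicator 1 (c j)
              + ∑ i ∈ univ.erase j.2, (pass z).indicator 1 (c (j.1, i))))
          + G * ∑ x, |output q V x - 𝔼 j, V (c j) x|) := by
        refine mean_mono hcodebook fun c => ?_
        simp only [mean_binEncoder, h.output_backward]
        refine (mean_likelihoodEncoder_le p (fun u => (h.backward_mem u).1) c
          (fun x j => mean_nonneg (hK x) fun z => (hg x z _).1) (G := G) fun x j =>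
          (mean_mono (hK x) fun z => (hg x z _).2).trans_eq (mean_const (hK x) G)).trans ?_
        gcongr with j
        exact mean_mono (h.backward_mem _) fun x => mean_mono (hK x) fun z =>
          loss_binDecoder_le c (pass z) j (hg x z)
    _ = _ + G * mean (BergerTung.iid q) (fun c : μ × l → B =>
          ∑ x, |output q V x - 𝔼 j, V (c j) x|) := by
        rw [mean_add, mean_const_mul, h.mean_iid_binning_loss]
    _ ≤ _ := by
        rw [mul_add, ← add_assoc]
        gcongr
        exact soft_covering h.right_mem h.backward_mem hT

end Binning

section CornerCode

variable {A₁ A₂ B₁ B₂ μ₁ μ₂ : Type*} [Fintype A₁] [Fintype A₂]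

/-- A distributed code aimed at a corner point: the decoder first reconstructs a codeword of the
first source from `m₁` alone, then a codeword of the second source from that codeword and `m₂`. -/
structure CornerCode (A₁ A₂ B₁ B₂ μ₁ μ₂ : Type*) [Fintype μ₁] [Fintype μ₂] where
  enc₁ : A₁ → μ₁ → ℝ
  enc₂ : A₂ → μ₂ → ℝ
  dec₁ : μ₁ → B₁
  dec₂ : B₁ → μ₂ → B₂
  enc₁_mem : ∀ x, enc₁ x ∈ stdSimplex ℝ μ₁
  enc₂_mem : ∀ x, enc₂ x ∈ stdSimplex ℝ μ₂

/-- The expected loss of a corner code when the sources have law `joint p K`. -/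
noncomputable def CornerCode.cost [Fintype μ₁] [Fintype μ₂] (C : CornerCode A₁ A₂ B₁ B₂ μ₁ μ₂)
    (p : A₁ → ℝ) (K : A₁ → A₂ → ℝ) (g : A₁ → A₂ → B₁ → B₂ → ℝ) : ℝ :=
  mean p fun x₁ => mean (K x₁) fun x₂ => mean (C.enc₁ x₁) fun m₁ => mean (C.enc₂ x₂) fun m₂ =>
    g x₁ x₂ (C.dec₁ m₁) (C.dec₂ (C.dec₁ m₁) m₂)

section Cost

variable [Fintype μ₁] [Fintype μ₂] (C : CornerCode A₁ A₂ B₁ B₂ μ₁ μ₂) {p : A₁ → ℝ}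
  {K : A₁ → A₂ → ℝ} (hp : p ∈ stdSimplex ℝ A₁) (hK : ∀ x, K x ∈ stdSimplex ℝ A₂)
include hp hK

lemma CornerCode.cost_nonneg {g : A₁ → A₂ → B₁ → B₂ → ℝ} (hg : ∀ x₁ x₂ u₁ u₂, 0 ≤ g x₁ x₂ u₁ u₂) :
    0 ≤ C.cost p K g :=
  mean_nonneg hp fun x₁ => mean_nonneg (hK x₁) fun x₂ => mean_nonneg (C.enc₁_mem x₁) fun _ =>
    mean_nonneg (C.enc₂_mem x₂) fun _ => hg _ _ _ _

lemma CornerCode.cost_mono {g h : A₁ → A₂ → B₁ → B₂ → ℝ}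
    (hgh : ∀ x₁ x₂ u₁ u₂, g x₁ x₂ u₁ u₂ ≤ h x₁ x₂ u₁ u₂) : C.cost p K g ≤ C.cost p K h :=
  mean_mono hp fun x₁ => mean_mono (hK x₁) fun x₂ => mean_mono (C.enc₁_mem x₁) fun _ =>
    mean_mono (C.enc₂_mem x₂) fun _ => hgh _ _ _ _

lemma CornerCode.cost_const_add (r : ℝ) (g : A₁ → A₂ → B₁ → B₂ → ℝ) :
    C.cost p K (fun x₁ x₂ u₁ u₂ => r + g x₁ x₂ u₁ u₂) = r + C.cost p K g := by
  simp only [cost, mean_add, mean_const (C.enc₂_mem _), mean_const (C.enc₁_mem _),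
    mean_const (hK _), mean_const hp]

end Cost

variable [Fintype B₁] [Fintype B₂]

/-- The expected loss when the sources have law `joint p K` and the reconstructions are produced by
the test channels `W₁` and `W₂`. -/
noncomputable def testCost (p : A₁ → ℝ) (K : A₁ → A₂ → ℝ) (W₁ : A₁ → B₁ → ℝ) (W₂ : A₂ → B₂ → ℝ)
    (g : A₁ → A₂ → B₁ → B₂ → ℝ) : ℝ :=
  mean p fun x₁ => mean (K x₁) fun x₂ => mean (W₁ x₁) fun u₁ => mean (W₂ x₂) fun u₂ =>
    g x₁ x₂ u₁ u₂

/-- The probability that the likelihood ratio of the channel `V` to its output pmf, under the input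
pmf `q`, is at most `T`. -/
noncomputable def ratioLowerTail (q : B₁ → ℝ) (V : B₁ → A₁ → ℝ) (T : ℝ) : ℝ :=
  mean q fun u => prob (V u) {x | V u x ≤ T * output q V x}

/-- The channel from `B₁` to `B₂` along the Markov chain `B₁ - A₁ - A₂ - B₂`. -/
noncomputable def relay (V : B₁ → A₁ → ℝ) (K : A₁ → A₂ → ℝ) (W : A₂ → B₂ → ℝ) (u : B₁) : B₂ → ℝ :=
  output (output (V u) K) W

omit [Fintype B₁] in
lemma mean_relay (V : B₁ → A₁ → ℝ) (K : A₁ → A₂ → ℝ) (W : A₂ → B₂ → ℝ) (u : B₁) (f : B₂ → ℝ) :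
    mean (relay V K W u) f = mean (V u) fun x₁ => mean (K x₁) fun x₂ => mean (W x₂) f := by
  simp only [relay, mean_output]

lemma prob_ratio_lt_le_inv (q : B₂ → ℝ) {r : B₂ → ℝ} (hr : r ∈ stdSimplex ℝ B₂) {T : ℝ}
    (hT : 0 < T) : prob q {b | T * q b < r b} ≤ T⁻¹ := by
  have pointwise (b : B₂) : q b * {b | T * q b < r b}.indicator 1 b ≤ T⁻¹ * r b := by
    by_cases hb : T * q b < r b
    · simpa [hb] using (le_inv_mul_iff₀ hT).2 hb.le
    · simpa [hb] using mul_nonneg (inv_nonneg.2 hT.le) (hr.1 b)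
  refine (sum_le_sum fun b _ => pointwise b).trans_eq ?_
  rw [← mul_sum, hr.2, mul_one]

variable {p₁ : A₁ → ℝ} {K : A₁ → A₂ → ℝ} {p₂ : A₂ → ℝ} {K' : A₂ → A₁ → ℝ}
  {W₁ : A₁ → B₁ → ℝ} {q₁ : B₁ → ℝ} {V₁ : B₁ → A₁ → ℝ}
  {W₂ : A₂ → B₂ → ℝ} {q₂ : B₂ → ℝ} {V₂ : B₂ → A₂ → ℝ}

lemma BayesPair.mean_side (hK : BayesPair p₁ K p₂ K') (W₁ : A₁ → B₁ → ℝ) (f : A₁ → A₂ → B₁ → ℝ) :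
    (mean p₁ fun x₁ => mean (K x₁) fun x₂ => mean (W₁ x₁) (f x₁ x₂))
      = mean p₂ fun x₂ => mean (joint (K' x₂) W₁) fun z => f z.1 x₂ z.2 := by
  simp only [mean_joint, hK.mean_comm]

lemma BayesPair.mean_side_relay (h₁ : BayesPair p₁ W₁ q₁ V₁) (hK : BayesPair p₁ K p₂ K')
    (W₂ : A₂ → B₂ → ℝ) (f : B₁ → B₂ → ℝ) :
    (mean p₂ fun x₂ => mean (joint (K' x₂) W₁) fun z => mean (W₂ x₂) (f z.2))
      = mean q₁ fun u₁ => mean (relay V₁ K W₂ u₁) (f u₁) := by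
  rw [← hK.mean_side W₁ fun _ x₂ u₁ => mean (W₂ x₂) (f u₁)]
  simp only [mean_relay, ← h₁.mean_comm, BergerTung.mean_comm (W₁ _)]

lemma output_relay (h₁ : BayesPair p₁ W₁ q₁ V₁) (hK : BayesPair p₁ K p₂ K')
    (h₂ : BayesPair p₂ W₂ q₂ V₂) : output q₁ (relay V₁ K W₂) = q₂ := by
  funext u₂
  change mean q₁ (fun u₁ => mean (output (V₁ u₁) K) fun x₂ => W₂ x₂ u₂) = q₂ u₂
  simp only [mean_output]
  rw [← mean_output, h₁.output_backward, ← mean_output, hK.symm.output_backward]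
  exact congrFun h₂.symm.output_backward u₂

lemma mean_prob_compl_pass (h₁ : BayesPair p₁ W₁ q₁ V₁) (hK : BayesPair p₁ K p₂ K')
    (h₂ : BayesPair p₂ W₂ q₂ V₂) (T : ℝ) :
    (mean p₂ fun x₂ => mean (joint (K' x₂) W₁) fun z =>
        prob (W₂ x₂) {u₂ | T * q₂ u₂ < relay V₁ K W₂ z.2 u₂}ᶜ)
      = ratioLowerTail q₁ (relay V₁ K W₂) T := by
  simp only [ratioLowerTail, output_relay h₁ hK h₂, Set.compl_ofPred, not_lt]
  exact h₁.mean_side_relay hK W₂ fun u₁ => {u₂ | relay V₁ K W₂ u₁ u₂ ≤ T * q₂ u₂}.indicator 1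

lemma mean_prob_pass_le (h₁ : BayesPair p₁ W₁ q₁ V₁) (hK : BayesPair p₁ K p₂ K')
    (h₂ : BayesPair p₂ W₂ q₂ V₂) {T : ℝ} (hT : 0 < T) :
    (mean p₂ fun x₂ => mean (joint (K' x₂) W₁) fun z =>
        prob q₂ {u₂ | T * q₂ u₂ < relay V₁ K W₂ z.2 u₂}) ≤ T⁻¹ := by
  have relay_mem (u₁ : B₁) : relay V₁ K W₂ u₁ ∈ stdSimplex ℝ B₂ :=
    output_mem_stdSimplex (output_mem_stdSimplex (h₁.backward_mem u₁) hK.forward_mem) h₂.forward_mem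
  have side_mem (x₂ : A₂) : joint (K' x₂) W₁ ∈ stdSimplex ℝ (A₁ × B₁) :=
    joint_mem_stdSimplex (hK.backward_mem x₂) h₁.forward_mem
  calc _ ≤ mean p₂ fun x₂ => mean (joint (K' x₂) W₁) fun _ => T⁻¹ :=
        mean_mono h₂.left_mem fun x₂ => mean_mono (side_mem x₂) fun z =>
          prob_ratio_lt_le_inv q₂ (relay_mem z.2) hT
    _ = _ := by simp only [mean_const (side_mem _), mean_const h₂.left_mem]

lemma exists_code_second_source {l : Type*} [Fintype l] [Nonempty l] [Fintype μ₂] [Nonempty μ₂]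
    (h₁ : BayesPair p₁ W₁ q₁ V₁) (hK : BayesPair p₁ K p₂ K') (h₂ : BayesPair p₂ W₂ q₂ V₂)
    {g : A₁ → A₂ → B₁ → B₂ → ℝ} {G : ℝ} (hG : 0 ≤ G)
    (hg : ∀ x₁ x₂ u₁ u₂, g x₁ x₂ u₁ u₂ ∈ Set.Icc 0 G)
    {T T' : ℝ} (hT : 0 ≤ T) (hT' : 0 < T') :
    ∃ (E : A₂ → μ₂ → ℝ) (dec : B₁ → μ₂ → B₂), (∀ x, E x ∈ stdSimplex ℝ μ₂) ∧
      (mean p₁ fun x₁ => mean (K x₁) fun x₂ => mean (W₁ x₁) fun u₁ => mean (E x₂) fun m =>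
          g x₁ x₂ u₁ (dec u₁ m))
        ≤ testCost p₁ K W₁ W₂ g
          + G * ((ratioLowerTail q₁ (relay V₁ K W₂) T' + (Fintype.card l - 1) * T'⁻¹)
            + (√(T / Fintype.card (μ₂ × l)) + 2 * ratioUpperTail q₂ V₂ T)) := by
  let pass (u₁ : B₁) : Set B₂ := {u₂ | T' * q₂ u₂ < relay V₁ K W₂ u₁ u₂}
  obtain ⟨c, hc⟩ := h₂.exists_binning_code (μ := μ₂) (l := l)
    (fun x₂ => joint_mem_stdSimplex (hK.backward_mem x₂) h₁.forward_mem) (fun z => pass z.2)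
    (g := fun x₂ z u₂ => g z.1 x₂ z.2 u₂) (fun _ _ _ => hg _ _ _ _) hT
  refine ⟨binEncoder V₂ c, fun u₁ => binDecoder c (pass u₁),
    binEncoder_mem_stdSimplex (fun u => (h₂.backward_mem u).1) c, ?_⟩
  have card_sub_one_nonneg : (0 : ℝ) ≤ Fintype.card l - 1 :=
    sub_nonneg.2 (Nat.one_le_cast.2 Fintype.card_pos)
  simp only [BergerTung.mean_comm (binEncoder V₂ c _), mean_add, mean_const_mul, pass,
    mean_prob_compl_pass h₁ hK h₂] at hc
  rw [hK.mean_side W₁ fun x₁ x₂ u₁ => mean (binEncoder V₂ c x₂) fun m =>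
    g x₁ x₂ u₁ (binDecoder c (pass u₁) m), testCost,
    hK.mean_side W₁ fun x₁ x₂ u₁ => mean (W₂ x₂) fun u₂ => g x₁ x₂ u₁ u₂]
  refine hc.trans ?_
  gcongr
  exact mean_prob_pass_le h₁ hK h₂ hT'

lemma exists_code_first_source [Fintype μ₁] [Nonempty μ₁]
    (h₁ : BayesPair p₁ W₁ q₁ V₁) (hK : ∀ x, K x ∈ stdSimplex ℝ A₂)
    {g : A₁ → A₂ → B₁ → ℝ} {G : ℝ} (hg : ∀ x₁ x₂ u₁, g x₁ x₂ u₁ ∈ Set.Icc 0 G)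
    {T : ℝ} (hT : 0 ≤ T) :
    ∃ (E : A₁ → μ₁ → ℝ) (dec : μ₁ → B₁), (∀ x, E x ∈ stdSimplex ℝ μ₁) ∧
      (mean p₁ fun x₁ => mean (K x₁) fun x₂ => mean (E x₁) fun m => g x₁ x₂ (dec m))
        ≤ (mean p₁ fun x₁ => mean (K x₁) fun x₂ => mean (W₁ x₁) (g x₁ x₂))
          + G * (√(T / Fintype.card μ₁) + 2 * ratioUpperTail q₁ V₁ T) := by
  obtain ⟨c, hc⟩ := h₁.exists_binning_code (μ := μ₁) (l := Unit) hK (fun _ => Set.univ) hg hT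
  refine ⟨binEncoder V₁ c, binDecoder c Set.univ,
    binEncoder_mem_stdSimplex (fun u => (h₁.backward_mem u).1) c, ?_⟩
  have no_confusion (x₁ : A₁) : prob (W₁ x₁) Set.univᶜ
      + (Fintype.card Unit - 1) * prob q₁ Set.univ = 0 := by simp [prob, mean]
  simp only [BergerTung.mean_comm (binEncoder V₁ c _), no_confusion, mean_const (hK _),
    mean_const h₁.left_mem, zero_add] at hc
  simpa only [Fintype.card_prod, Fintype.card_unit, mul_one] using hc

lemma exists_cornerCode {l : Type*} [Fintype l] [Nonempty l] [Fintype μ₁] [Nonempty μ₁]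
    [Fintype μ₂] [Nonempty μ₂]
    (h₁ : BayesPair p₁ W₁ q₁ V₁) (hK : BayesPair p₁ K p₂ K') (h₂ : BayesPair p₂ W₂ q₂ V₂)
    {g : A₁ → A₂ → B₁ → B₂ → ℝ} {G : ℝ} (hG : 0 ≤ G)
    (hg : ∀ x₁ x₂ u₁ u₂, g x₁ x₂ u₁ u₂ ∈ Set.Icc 0 G)
    {T₁ T₂ T₃ : ℝ} (hT₁ : 0 ≤ T₁) (hT₂ : 0 ≤ T₂) (hT₃ : 0 < T₃) :
    ∃ C : CornerCode A₁ A₂ B₁ B₂ μ₁ μ₂, C.cost p₁ K g ≤ testCost p₁ K W₁ W₂ g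
      + G * ((ratioLowerTail q₁ (relay V₁ K W₂) T₃ + (Fintype.card l - 1) * T₃⁻¹)
        + (√(T₂ / Fintype.card (μ₂ × l)) + 2 * ratioUpperTail q₂ V₂ T₂)
        + (√(T₁ / Fintype.card μ₁) + 2 * ratioUpperTail q₁ V₁ T₁)) := by
  obtain ⟨E₂, dec₂, hE₂, cost₂⟩ :=
    exists_code_second_source (l := l) (μ₂ := μ₂) h₁ hK h₂ hG hg hT₂ hT₃
  obtain ⟨E₁, dec₁, hE₁, cost₁⟩ := exists_code_first_source (μ₁ := μ₁) h₁ hK.forward_mem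
    (g := fun x₁ x₂ u₁ => mean (E₂ x₂) fun m₂ => g x₁ x₂ u₁ (dec₂ u₁ m₂)) (G := G)
    (fun x₁ x₂ u₁ => ⟨mean_nonneg (hE₂ x₂) fun _ => (hg _ _ _ _).1,
      (mean_mono (hE₂ x₂) fun _ => (hg _ _ _ _).2).trans_eq (mean_const (hE₂ x₂) G)⟩) hT₁
  refine ⟨⟨E₁, E₂, dec₁, dec₂, hE₁, hE₂⟩, cost₁.trans ?_⟩
  rw [mul_add G (_ + _), ← add_assoc]
  gcongr

end CornerCode

section Information

variable {A B C : Type*} [Fintype A] [Fintype B] [Fintype C]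

/-- The mutual information, in bits, between the input of the channel `V` under the input pmf `q`
and its output. -/
noncomputable def channelInfo (q : B → ℝ) (V : B → A → ℝ) : ℝ :=
  mean q fun u => mean (V u) fun x => Real.logb 2 (V u x / output q V x)

lemma mutInf_eq_channelInfo (q : B → ℝ) {V : B → A → ℝ} (hV : ∀ u, V u ∈ stdSimplex ℝ A) :
    mutInf (fun x u => q u * V u x) = channelInfo q V := by
  have input_marginal (u : B) : ∑ x, q u * V u x = q u := by rw [← mul_sum, (hV u).2, mul_one]
  have cancel (u : B) (x : A) :
      q u * V u x * Real.logb 2 (q u * V u x / ((∑ u, q u * V u x) * q u))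
        = q u * (V u x * Real.logb 2 (V u x / output q V x)) := by
    rcases eq_or_ne (q u) 0 with hu | hu
    · simp only [hu, zero_mul]
    · rw [mul_comm (∑ u, _), mul_div_mul_left _ _ hu, mul_assoc]
      rfl
  simp only [mutInf, channelInfo, input_marginal, cancel, mean, mul_sum]
  exact sum_comm

lemma BayesPair.channelInfo_comm {p : A → ℝ} {W : A → B → ℝ} {q : B → ℝ} {V : B → A → ℝ}
    (h : BayesPair p W q V) : channelInfo p W = channelInfo q V := by
  rw [← mutInf_eq_channelInfo q h.backward_mem, ← mutInf_eq_channelInfo p h.forward_mem]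
  simp only [mutInf, h.mul_eq_mul]
  rw [sum_comm]
  exact sum_congr rfl fun b _ => sum_congr rfl fun a _ => by rw [mul_comm (∑ b, _)]

omit [Fintype B] in
lemma output_pos {p : A → ℝ} {W : A → B → ℝ} {a : A} {b : B} (hp : ∀ a, 0 ≤ p a)
    (hW : ∀ a, 0 ≤ W a b) (ha : 0 < p a) (hab : 0 < W a b) : 0 < output p W b :=
  sum_pos' (fun a _ => mul_nonneg (hp a) (hW a)) ⟨a, mem_univ a, mul_pos ha hab⟩

lemma condMutInf_markov (q : C → ℝ) {K : C → A → ℝ} {W : A → B → ℝ} (hq : ∀ c, 0 ≤ q c)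
    (hK : ∀ c, K c ∈ stdSimplex ℝ A) (hW : ∀ a, W a ∈ stdSimplex ℝ B) :
    condMutInf (fun a b c => q c * K c a * W a b)
      = channelInfo (output q K) W - channelInfo q fun c => output (K c) W := by
  have marginal_ac (a : A) (c : C) : ∑ b, q c * K c a * W a b = q c * K c a := by
    rw [← mul_sum, (hW a).2, mul_one]
  have marginal_bc (b : B) (c : C) : ∑ a, q c * K c a * W a b = q c * output (K c) W b := by
    simp only [output, mean, mul_sum, mul_assoc]
  have marginal_c (c : C) : ∑ a, ∑ b, q c * K c a * W a b = q c := by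
    simp only [marginal_ac, ← mul_sum, (hK c).2, mul_one]
  let r : B → ℝ := output q fun c => output (K c) W
  have r_eq : output (output q K) W = r := funext fun b => mean_output q K fun a => W a b
  have chain (a : A) (b : B) (c : C) : q c * K c a * W a b *
        Real.logb 2 (q c * K c a * W a b * q c / (q c * K c a * (q c * output (K c) W b)))
      = q c * K c a * W a b *
        (Real.logb 2 (W a b / r b) - Real.logb 2 (output (K c) W b / r b)) := by
    rcases (mul_nonneg (mul_nonneg (hq c) ((hK c).1 a)) ((hW a).1 b)).eq_or_lt with hz | hpos
    · rw [← hz, zero_mul, zero_mul]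
    have hW_pos : 0 < W a b := pos_of_mul_pos_right hpos (mul_nonneg (hq c) ((hK c).1 a))
    have hqK_pos : 0 < q c * K c a := pos_of_mul_pos_left hpos hW_pos.le
    have hK_pos : 0 < K c a := pos_of_mul_pos_right hqK_pos (hq c)
    have hq_pos : 0 < q c := pos_of_mul_pos_left hqK_pos hK_pos.le
    have relay_pos : 0 < output (K c) W b :=
      output_pos (hK c).1 (fun a => (hW a).1 b) hK_pos hW_pos
    have r_pos : 0 < r b := output_pos hq
      (fun c => (output_mem_stdSimplex (hK c) hW).1 b) hq_pos relay_pos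
    rw [← Real.logb_div (by positivity) (by positivity)]
    congr 2
    field_simp
  calc condMutInf (fun a b c => q c * K c a * W a b)
      = mean q fun c => mean (K c) fun a => mean (W a) fun b =>
          Real.logb 2 (W a b / r b) - Real.logb 2 (output (K c) W b / r b) := by
        simp only [condMutInf, marginal_c]
        simp only [marginal_ac, marginal_bc, chain]
        simp only [mean, mul_sum, ← mul_assoc]
        exact (sum_congr rfl fun a _ => sum_comm).trans sum_comm
    _ = _ := by
        simp only [channelInfo, mean_output, mean_sub, r_eq, r]

end Information

section WeakLaw

variable {A B : Type*} [Fintype A] [Fintype B]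

lemma tendsto_mean_iid_abs_mean_sub_expect {q : A → ℝ} (hq : q ∈ stdSimplex ℝ A) (f : A → ℝ) :
    Tendsto (fun n : ℕ => mean (iid q) fun c : Fin n → A => |mean q f - 𝔼 t, f (c t)|)
      atTop (𝓝 0) := by
  have bound : Tendsto (fun n : ℕ => √(mean q (fun a => f a ^ 2) / n)) atTop (𝓝 0) := by
    simpa using (tendsto_const_div_atTop_nhds_zero_nat (mean q fun a => f a ^ 2)).sqrt
  refine squeeze_zero' (.of_forall fun n => mean_nonneg (iid_mem_stdSimplex hq) fun _ =>
    abs_nonneg _) ?_ bound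
  filter_upwards [eventually_gt_atTop 0] with n hn
  have : Nonempty (Fin n) := Fin.pos_iff_nonempty.1 hn
  simpa using mean_iid_abs_mean_sub_expect_le (ι := Fin n) hq f

/-- The information density of the channel `V` under the input pmf `q`. -/
noncomputable def infoDensity (q : B → ℝ) (V : B → A → ℝ) (c : B × A) : ℝ :=
  Real.logb 2 (V c.1 c.2 / output q V c.2)

lemma mean_infoDensity (q : B → ℝ) (V : B → A → ℝ) :
    mean (joint q V) (infoDensity q V) = channelInfo q V :=
  mean_joint q V _

variable {ι : Type*} [Fintype ι] [DecidableEq ι] {q : B → ℝ} (hq : q ∈ stdSimplex ℝ B)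
  {V : B → A → ℝ} (hV : ∀ u, V u ∈ stdSimplex ℝ A)
include hq hV

lemma output_iid_memoryless_pos {c : ι → B × A} (hc : 0 < iid (joint q V) c) :
    0 < output (iid q) (memoryless V) fun i => (c i).2 := by
  have factor : iid (joint q V) c = iid q (fun i => (c i).1) *
      memoryless V (fun i => (c i).1) fun i => (c i).2 := prod_mul_distrib
  have channel_nonneg (u : ι → B) := (memoryless_mem_stdSimplex hV u).1 fun i => (c i).2
  have input_nonneg := (iid_mem_stdSimplex (ι := ι) hq).1
  rw [factor] at hc
  exact output_pos input_nonneg channel_nonneg (pos_of_mul_pos_left hc (channel_nonneg _))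
    (pos_of_mul_pos_right hc (input_nonneg _))

lemma memoryless_eq_rpow_mul_output {c : ι → B × A} (hc : 0 < iid (joint q V) c) :
    memoryless V (fun i => (c i).1) (fun i => (c i).2)
      = 2 ^ (Fintype.card ι * 𝔼 i, infoDensity q V (c i))
        * output (iid q) (memoryless V) fun i => (c i).2 := by
  have letter (i : ι) : V (c i).1 (c i).2 = 2 ^ infoDensity q V (c i) * output q V (c i).2 := by
    have joint_pos : 0 < q (c i).1 * V (c i).1 (c i).2 :=
      ((joint_mem_stdSimplex hq hV).1 _).lt_of_ne' (prod_ne_zero_iff.1 hc.ne' i (mem_univ i))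
    have hV_pos : 0 < V (c i).1 (c i).2 := pos_of_mul_pos_right joint_pos (hq.1 _)
    have output_pos : 0 < output q V (c i).2 := output_pos hq.1 (fun u => (hV u).1 _)
      (pos_of_mul_pos_left joint_pos hV_pos.le) hV_pos
    rw [infoDensity, Real.rpow_logb two_pos (by norm_num) (div_pos hV_pos output_pos),
      div_mul_cancel₀ _ output_pos.ne']
  rw [Fintype.card_mul_expect, Real.rpow_sum_of_pos two_pos, iid, output_piPmf_memoryless, piPmf,
    ← prod_mul_distrib]
  exact prod_congr rfl fun i _ => letter i

lemma mean_prob_memoryless_le {s : (ι → B) → Set (ι → A)} {δ : ℝ} (hδ : 0 < δ)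
    (h : ∀ c : ι → B × A, (fun i => (c i).2) ∈ s (fun i => (c i).1) → 0 < iid (joint q V) c →
      δ ≤ |channelInfo q V - 𝔼 i, infoDensity q V (c i)|) :
    (mean (iid q) fun u => prob (memoryless V u) (s u))
      ≤ δ⁻¹ * mean (iid (joint q V)) fun c : ι → B × A =>
        |mean (joint q V) (infoDensity q V) - 𝔼 i, infoDensity q V (c i)| := by
  simp only [mean_infoDensity]
  refine Eq.trans_le ?_ (prob_le_inv_mul_mean (iid_mem_stdSimplex (joint_mem_stdSimplex hq hV))
    (fun _ => abs_nonneg _) hδ h)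
  exact mean_iid_memoryless q V fun u => (s u).indicator 1

omit [Fintype ι] [DecidableEq ι]

lemma tendsto_ratioUpperTail {a : ℝ} (ha : channelInfo q V < a) :
    Tendsto (fun n : ℕ => ratioUpperTail (iid q : (Fin n → B) → ℝ) (memoryless V) (2 ^ (n * a)))
      atTop (𝓝 0) := by
  have law := (tendsto_mean_iid_abs_mean_sub_expect (joint_mem_stdSimplex hq hV)
    (infoDensity q V)).const_mul (a - channelInfo q V)⁻¹
  rw [mul_zero] at law
  refine squeeze_zero (fun n => mean_nonneg (iid_mem_stdSimplex hq) fun u =>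
    prob_nonneg (memoryless_mem_stdSimplex hV u) _) (fun n => ?_) law
  refine mean_prob_memoryless_le hq hV (sub_pos.2 ha) fun c hc hpos => ?_
  rw [Set.mem_ofPred_eq, memoryless_eq_rpow_mul_output hq hV hpos, Fintype.card_fin,
    mul_lt_mul_iff_left₀ (output_iid_memoryless_pos hq hV hpos),
    Real.rpow_lt_rpow_left_iff one_lt_two] at hc
  rw [abs_sub_comm]
  exact (sub_le_sub_right (lt_of_mul_lt_mul_left hc n.cast_nonneg).le _).trans (le_abs_self _)

lemma tendsto_ratioLowerTail {a : ℝ} (ha : a < channelInfo q V) :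
    Tendsto (fun n : ℕ => ratioLowerTail (iid q : (Fin n → B) → ℝ) (memoryless V) (2 ^ (n * a)))
      atTop (𝓝 0) := by
  have law := (tendsto_mean_iid_abs_mean_sub_expect (joint_mem_stdSimplex hq hV)
    (infoDensity q V)).const_mul (channelInfo q V - a)⁻¹
  rw [mul_zero] at law
  refine squeeze_zero' (.of_forall fun n => mean_nonneg (iid_mem_stdSimplex hq) fun u =>
    prob_nonneg (memoryless_mem_stdSimplex hV u) _) ?_ law
  filter_upwards [eventually_gt_atTop 0] with n hn
  refine mean_prob_memoryless_le hq hV (sub_pos.2 ha) fun c hc hpos => ?_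
  rw [Set.mem_ofPred_eq, memoryless_eq_rpow_mul_output hq hV hpos, Fintype.card_fin,
    mul_le_mul_iff_left₀ (output_iid_memoryless_pos hq hV hpos),
    Real.rpow_le_rpow_left_iff one_lt_two] at hc
  exact (sub_le_sub_left (le_of_mul_le_mul_left hc (Nat.cast_pos.2 hn)) _).trans (le_abs_self _)

end WeakLaw

section BlockCode

lemma tendsto_two_rpow_mul_neg {a : ℝ} (ha : a < 0) :
    Tendsto (fun n : ℕ => (2 : ℝ) ^ (n * a)) atTop (𝓝 0) := by
  have base_lt_one : (2 : ℝ) ^ a < 1 := Real.rpow_lt_one_of_one_lt_of_neg one_lt_two ha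
  simpa only [mul_comm _ a, Real.rpow_mul_natCast two_pos.le] using
    tendsto_pow_atTop_nhds_zero_of_lt_one (Real.rpow_nonneg two_pos.le a) base_lt_one

lemma tendsto_sqrt_two_rpow_div {a b : ℝ} (hab : a < b) {M : ℕ → ℝ}
    (hM : ∀ n : ℕ, (2 : ℝ) ^ (n * b) ≤ M n) :
    Tendsto (fun n : ℕ => √(2 ^ (n * a) / M n)) atTop (𝓝 0) := by
  have bound (n : ℕ) : (2 : ℝ) ^ (n * a) / M n ≤ 2 ^ (n * (a - b)) := by
    rw [mul_sub, Real.rpow_sub two_pos]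
    gcongr
    exact hM n
  have limit := (tendsto_two_rpow_mul_neg (sub_neg.2 hab)).sqrt
  rw [Real.sqrt_zero] at limit
  exact squeeze_zero (fun n => Real.sqrt_nonneg _) (fun n => Real.sqrt_le_sqrt (bound n)) limit

lemma tendsto_ceil_sub_one_mul_inv {a b : ℝ} (hab : a < b) :
    Tendsto (fun n : ℕ => ((⌈(2 : ℝ) ^ (n * a)⌉₊ : ℝ) - 1) * ((2 : ℝ) ^ (n * b))⁻¹)
      atTop (𝓝 0) := by
  refine squeeze_zero (fun n => ?_) (fun n => ?_) (tendsto_two_rpow_mul_neg (sub_neg.2 hab))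
  · have : (1 : ℝ) ≤ ⌈(2 : ℝ) ^ (n * a)⌉₊ := Nat.one_le_cast.2 (Nat.ceil_pos.2 (by positivity))
    exact mul_nonneg (sub_nonneg.2 this) (by positivity)
  · rw [mul_sub, Real.rpow_sub two_pos, div_eq_mul_inv]
    gcongr
    exact (sub_lt_iff_lt_add.2 (Nat.ceil_lt_add_one (by positivity))).le

lemma relay_memoryless {ι A₁ A₂ B₁ B₂ : Type*} [Fintype ι] [DecidableEq ι] [Fintype A₁]
    [Fintype A₂] (V : B₁ → A₁ → ℝ) (K : A₁ → A₂ → ℝ) (W : A₂ → B₂ → ℝ) :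
    relay (memoryless V) (memoryless K) (memoryless W)
      = (memoryless (relay V K W) : (ι → B₁) → (ι → B₂) → ℝ) :=
  funext fun u => by
    rw [relay, memoryless, output_piPmf_memoryless, output_piPmf_memoryless]
    rfl

variable {A₁ A₂ B₁ B₂ : Type*} [Fintype A₁] [Fintype A₂] [Fintype B₁] [Fintype B₂]
  {p₁ : A₁ → ℝ} {K : A₁ → A₂ → ℝ} {p₂ : A₂ → ℝ} {K' : A₂ → A₁ → ℝ}
  {W₁ : A₁ → B₁ → ℝ} {q₁ : B₁ → ℝ} {V₁ : B₁ → A₁ → ℝ}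
  {W₂ : A₂ → B₂ → ℝ} {q₂ : B₂ → ℝ} {V₂ : B₂ → A₂ → ℝ}

lemma exists_cornerCode_block_of_exponents
    (h₁ : BayesPair p₁ W₁ q₁ V₁) (hK : BayesPair p₁ K p₂ K') (h₂ : BayesPair p₂ W₂ q₂ V₂)
    {R₁ R₂ b a₁ a₂ a₃ : ℝ} (hI₁ : channelInfo q₁ V₁ < a₁) (hR₁ : a₁ < R₁)
    (hI₂ : channelInfo q₂ V₂ < a₂) (hR₂ : a₂ < R₂ + b)
    (hb : b < a₃) (hI₁₂ : a₃ < channelInfo q₁ (relay V₁ K W₂))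
    {g : ∀ n, (Fin n → A₁) → (Fin n → A₂) → (Fin n → B₁) → (Fin n → B₂) → ℝ} {G : ℝ} (hG : 0 ≤ G)
    (hg : ∀ n x₁ x₂ u₁ u₂, g n x₁ x₂ u₁ u₂ ∈ Set.Icc 0 G) :
    ∃ δ : ℕ → ℝ, Tendsto δ atTop (𝓝 0) ∧ ∀ n : ℕ,
      ∃ C : CornerCode (Fin n → A₁) (Fin n → A₂) (Fin n → B₁) (Fin n → B₂)
          (Fin ⌈(2 : ℝ) ^ (n * R₁)⌉₊) (Fin ⌈(2 : ℝ) ^ (n * R₂)⌉₊),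
        C.cost (iid p₁) (memoryless K) (g n)
          ≤ testCost (iid p₁) (memoryless K) (memoryless W₁) (memoryless W₂) (g n) + δ n := by
  let M (R : ℝ) (n : ℕ) : ℕ := ⌈(2 : ℝ) ^ (n * R)⌉₊
  have M_pos (R : ℝ) (n : ℕ) : Nonempty (Fin (M R n)) :=
    Fin.pos_iff_nonempty.1 (Nat.ceil_pos.2 (by positivity))
  have le_M (R : ℝ) (n : ℕ) : (2 : ℝ) ^ (n * R) ≤ M R n := Nat.le_ceil _
  have le_codewords (n : ℕ) : (2 : ℝ) ^ (n * (R₂ + b)) ≤ M R₂ n * M b n := by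
    rw [mul_add, Real.rpow_add two_pos]
    exact mul_le_mul (le_M _ n) (le_M _ n) (by positivity) (by positivity)
  have relay_mem (u : B₁) : relay V₁ K W₂ u ∈ stdSimplex ℝ B₂ :=
    output_mem_stdSimplex (output_mem_stdSimplex (h₁.backward_mem u) hK.forward_mem) h₂.forward_mem
  refine ⟨fun n => G *
    ((ratioLowerTail (iid q₁ : (Fin n → B₁) → ℝ) (memoryless (relay V₁ K W₂)) (2 ^ (n * a₃))
        + (M b n - 1) * (2 ^ (n * a₃))⁻¹)
      + (√(2 ^ (n * a₂) / (M R₂ n * M b n))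
        + 2 * ratioUpperTail (iid q₂ : (Fin n → B₂) → ℝ) (memoryless V₂) (2 ^ (n * a₂)))
      + (√(2 ^ (n * a₁) / M R₁ n)
        + 2 * ratioUpperTail (iid q₁ : (Fin n → B₁) → ℝ) (memoryless V₁) (2 ^ (n * a₁)))),
    ?_, fun n => ?_⟩
  · have miss := tendsto_ratioLowerTail h₁.right_mem relay_mem hI₁₂
    have confusion := tendsto_ceil_sub_one_mul_inv hb
    have covering₂ := (tendsto_sqrt_two_rpow_div hR₂ le_codewords).add
      ((tendsto_ratioUpperTail h₂.right_mem h₂.backward_mem hI₂).const_mul 2)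
    have covering₁ := (tendsto_sqrt_two_rpow_div hR₁ (le_M R₁)).add
      ((tendsto_ratioUpperTail h₁.right_mem h₁.backward_mem hI₁).const_mul 2)
    simpa using (((miss.add confusion).add covering₂).add covering₁).const_mul G
  · obtain ⟨C, hC⟩ := exists_cornerCode
      (μ₁ := Fin (M R₁ n)) (μ₂ := Fin (M R₂ n)) (l := Fin (M b n)) h₁.iid hK.iid h₂.iid hG (hg n)
      (T₁ := 2 ^ (n * a₁)) (T₂ := 2 ^ (n * a₂)) (T₃ := 2 ^ (n * a₃))
      (by positivity) (by positivity) (by positivity)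
    refine ⟨C, ?_⟩
    simpa only [relay_memoryless, Fintype.card_prod, Fintype.card_fin, Nat.cast_mul] using hC

lemma exists_cornerCode_block
    (h₁ : BayesPair p₁ W₁ q₁ V₁) (hK : BayesPair p₁ K p₂ K') (h₂ : BayesPair p₂ W₂ q₂ V₂)
    {R₁ R₂ : ℝ} (hR₁ : channelInfo q₁ V₁ < R₁)
    (hR₂ : channelInfo q₂ V₂ - channelInfo q₁ (relay V₁ K W₂) < R₂)
    {g : ∀ n, (Fin n → A₁) → (Fin n → A₂) → (Fin n → B₁) → (Fin n → B₂) → ℝ} {G : ℝ} (hG : 0 ≤ G)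
    (hg : ∀ n x₁ x₂ u₁ u₂, g n x₁ x₂ u₁ u₂ ∈ Set.Icc 0 G) :
    ∃ δ : ℕ → ℝ, Tendsto δ atTop (𝓝 0) ∧ ∀ n : ℕ,
      ∃ C : CornerCode (Fin n → A₁) (Fin n → A₂) (Fin n → B₁) (Fin n → B₂)
          (Fin ⌈(2 : ℝ) ^ (n * R₁)⌉₊) (Fin ⌈(2 : ℝ) ^ (n * R₂)⌉₊),
        C.cost (iid p₁) (memoryless K) (g n)
          ≤ testCost (iid p₁) (memoryless K) (memoryless W₁) (memoryless W₂) (g n) + δ n := by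
  obtain ⟨a₁, hI₁, ha₁⟩ := exists_between hR₁
  obtain ⟨a₂, hI₂, ha₂⟩ := exists_between (sub_lt_iff_lt_add.1 hR₂)
  obtain ⟨b, hb, hbI⟩ := exists_between (sub_lt_iff_lt_add'.2 ha₂)
  obtain ⟨a₃, hba, hI₁₂⟩ := exists_between hbI
  exact exists_cornerCode_block_of_exponents h₁ hK h₂ hI₁ ha₁ hI₂ (sub_lt_iff_lt_add'.1 hb) hba hI₁₂
    hG hg

end BlockCode

section Achievability

variable {A₁ A₂ B₁ B₂ : Type*} [Fintype A₁] [Fintype A₂] [Fintype B₁] [Fintype B₂]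
  {p₁ : A₁ → ℝ} {K : A₁ → A₂ → ℝ} {W₁ : A₁ → B₁ → ℝ} {W₂ : A₂ → B₂ → ℝ}

/-- The joint law of the sources and of the outputs of the test channels. -/
def testLaw (p₁ : A₁ → ℝ) (K : A₁ → A₂ → ℝ) (W₁ : A₁ → B₁ → ℝ) (W₂ : A₂ → B₂ → ℝ) :
    ((A₁ × A₂) × B₁) × B₂ → ℝ :=
  joint (joint (joint p₁ K) fun x => W₁ x.1) fun z => W₂ z.1.2

lemma testLaw_mem_stdSimplex (hp₁ : p₁ ∈ stdSimplex ℝ A₁) (hK : ∀ x, K x ∈ stdSimplex ℝ A₂)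
    (hW₁ : ∀ x, W₁ x ∈ stdSimplex ℝ B₁) (hW₂ : ∀ x, W₂ x ∈ stdSimplex ℝ B₂) :
    testLaw p₁ K W₁ W₂ ∈ stdSimplex ℝ (((A₁ × A₂) × B₁) × B₂) :=
  joint_mem_stdSimplex (joint_mem_stdSimplex (joint_mem_stdSimplex hp₁ hK) fun x => hW₁ x.1)
    fun z => hW₂ z.1.2

lemma mean_testLaw (g : A₁ → A₂ → B₁ → B₂ → ℝ) :
    mean (testLaw p₁ K W₁ W₂) (fun c => g c.1.1.1 c.1.1.2 c.1.2 c.2) = testCost p₁ K W₁ W₂ g := by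
  simp only [testLaw, testCost, mean_joint]

lemma testCost_iid {ι : Type*} [Fintype ι] [DecidableEq ι] (F : (ι → ((A₁ × A₂) × B₁) × B₂) → ℝ) :
    testCost (iid p₁) (memoryless K) (memoryless W₁) (memoryless W₂)
        (fun x₁ x₂ u₁ u₂ => F fun t => (((x₁ t, x₂ t), u₁ t), u₂ t))
      = mean (iid (testLaw p₁ K W₁ W₂)) F := by
  calc _ = mean (iid (joint p₁ K)) fun x => mean (memoryless (fun x => W₁ x.1) x) fun u₁ =>
          mean (memoryless W₂ fun t => (x t).2) fun u₂ => F fun t => ((x t, u₁ t), u₂ t) :=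
        mean_iid_memoryless p₁ K fun x₁ x₂ => mean (memoryless W₁ x₁) fun u₁ =>
          mean (memoryless W₂ x₂) fun u₂ => F fun t => (((x₁ t, x₂ t), u₁ t), u₂ t)
    _ = mean (iid (joint (joint p₁ K) fun x => W₁ x.1)) fun z =>
          mean (memoryless (fun z => W₂ z.1.2) z) fun u₂ => F fun t => (z t, u₂ t) :=
        mean_iid_memoryless (joint p₁ K) (fun x => W₁ x.1) fun x u₁ =>
          mean (memoryless W₂ fun t => (x t).2) fun u₂ => F fun t => ((x t, u₁ t), u₂ t)
    _ = _ := mean_iid_memoryless (joint (joint p₁ K) fun x => W₁ x.1) (fun z => W₂ z.1.2)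
        fun z u₂ => F fun t => (z t, u₂ t)

/-- The distance of the empirical mean of the loss `e` from its expectation under the test law. -/
noncomputable def lossDeviation (p₁ : A₁ → ℝ) (K : A₁ → A₂ → ℝ) (W₁ : A₁ → B₁ → ℝ)
    (W₂ : A₂ → B₂ → ℝ) (e : A₁ → A₂ → B₁ → B₂ → ℝ) {n : ℕ} (x₁ : Fin n → A₁) (x₂ : Fin n → A₂)
    (u₁ : Fin n → B₁) (u₂ : Fin n → B₂) : ℝ :=
  |testCost p₁ K W₁ W₂ e - 𝔼 t, e (x₁ t) (x₂ t) (u₁ t) (u₂ t)|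

lemma lossDeviation_nonneg (e : A₁ → A₂ → B₁ → B₂ → ℝ) {n : ℕ} (x₁ : Fin n → A₁)
    (x₂ : Fin n → A₂) (u₁ : Fin n → B₁) (u₂ : Fin n → B₂) :
    0 ≤ lossDeviation p₁ K W₁ W₂ e x₁ x₂ u₁ u₂ :=
  abs_nonneg _

lemma expect_le_testCost_add_lossDeviation (e : A₁ → A₂ → B₁ → B₂ → ℝ) {n : ℕ} (x₁ : Fin n → A₁)
    (x₂ : Fin n → A₂) (u₁ : Fin n → B₁) (u₂ : Fin n → B₂) :
    𝔼 t, e (x₁ t) (x₂ t) (u₁ t) (u₂ t)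
      ≤ testCost p₁ K W₁ W₂ e + lossDeviation p₁ K W₁ W₂ e x₁ x₂ u₁ u₂ :=
  sub_le_iff_le_add'.1 ((le_abs_self _).trans_eq (abs_sub_comm _ _))

lemma tendsto_testCost_lossDeviation (hp₁ : p₁ ∈ stdSimplex ℝ A₁)
    (hK : ∀ x, K x ∈ stdSimplex ℝ A₂) (hW₁ : ∀ x, W₁ x ∈ stdSimplex ℝ B₁)
    (hW₂ : ∀ x, W₂ x ∈ stdSimplex ℝ B₂) (e : A₁ → A₂ → B₁ → B₂ → ℝ) :
    Tendsto (fun n : ℕ => testCost (iid p₁ : (Fin n → A₁) → ℝ) (memoryless K) (memoryless W₁)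
      (memoryless W₂) (lossDeviation p₁ K W₁ W₂ e)) atTop (𝓝 0) := by
  have law := tendsto_mean_iid_abs_mean_sub_expect (testLaw_mem_stdSimplex hp₁ hK hW₁ hW₂)
    fun c => e c.1.1.1 c.1.1.2 c.1.2 c.2
  simp only [mean_testLaw, ← testCost_iid] at law
  exact law

lemma exists_lossDeviation_le (e : A₁ → A₂ → B₁ → B₂ → ℝ) :
    ∃ G : ℝ, ∀ {n : ℕ} (x₁ : Fin n → A₁) (x₂ : Fin n → A₂) (u₁ : Fin n → B₁) (u₂ : Fin n → B₂),
      lossDeviation p₁ K W₁ W₂ e x₁ x₂ u₁ u₂ ≤ G := by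
  let B : ℝ := ∑ c : A₁ × A₂ × B₁ × B₂, |e c.1 c.2.1 c.2.2.1 c.2.2.2|
  have B_nonneg : 0 ≤ B := sum_nonneg fun _ _ => abs_nonneg _
  refine ⟨|testCost p₁ K W₁ W₂ e| + B, fun {n} x₁ x₂ u₁ u₂ => (abs_sub _ _).trans ?_⟩
  have loss_le (t : Fin n) : |e (x₁ t) (x₂ t) (u₁ t) (u₂ t)| ≤ B :=
    single_le_sum (f := fun c : A₁ × A₂ × B₁ × B₂ => |e c.1 c.2.1 c.2.2.1 c.2.2.2|)
      (fun _ _ => abs_nonneg _) (mem_univ (x₁ t, x₂ t, u₁ t, u₂ t))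
  refine add_le_add_right ((abs_expect_le _ _).trans ?_) _
  rw [Fintype.expect_eq_sum_div_card]
  exact div_le_of_le_mul₀ (Nat.cast_nonneg _) B_nonneg
    ((sum_le_card_nsmul _ _ B fun t _ => loss_le t).trans_eq (by simp [mul_comm]))

lemma testCost_sum {κ : Type*} [Fintype κ] (g : κ → A₁ → A₂ → B₁ → B₂ → ℝ) :
    testCost p₁ K W₁ W₂ (fun x₁ x₂ u₁ u₂ => ∑ k, g k x₁ x₂ u₁ u₂)
      = ∑ k, testCost p₁ K W₁ W₂ (g k) := by
  simp only [testCost, mean_sum]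

lemma limsup_le_of_le_add {u δ : ℕ → ℝ} {D : ℝ} (hu : ∀ n, 0 ≤ u n) (h : ∀ n, u n ≤ D + δ n)
    (hδ : Tendsto δ atTop (𝓝 0)) : atTop.limsup u ≤ D := by
  have limit : Tendsto (fun n => D + δ n) atTop (𝓝 D) := by simpa using hδ.const_add D
  exact (limsup_le_limsup (Eventually.of_forall h) (isCoboundedUnder_le_of_le atTop hu)
    limit.isBoundedUnder_le).trans_eq limit.limsup_eq

variable {κ : Type*} [Finite κ] {p₂ : A₂ → ℝ} {K' : A₂ → A₁ → ℝ} {q₁ : B₁ → ℝ} {V₁ : B₁ → A₁ → ℝ}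
  {q₂ : B₂ → ℝ} {V₂ : B₂ → A₂ → ℝ}

lemma exists_cornerCode_seq_of_bayesPair
    (h₁ : BayesPair p₁ W₁ q₁ V₁) (hK : BayesPair p₁ K p₂ K') (h₂ : BayesPair p₂ W₂ q₂ V₂)
    {R₁ R₂ : ℝ} (hR₁ : channelInfo q₁ V₁ < R₁)
    (hR₂ : channelInfo q₂ V₂ - channelInfo q₁ (relay V₁ K W₂) < R₂)
    {e : κ → A₁ → A₂ → B₁ → B₂ → ℝ} (he : ∀ k x₁ x₂ u₁ u₂, 0 ≤ e k x₁ x₂ u₁ u₂) :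
    ∃ C : ∀ n : ℕ, CornerCode (Fin n → A₁) (Fin n → A₂) (Fin n → B₁) (Fin n → B₂)
        (Fin ⌈(2 : ℝ) ^ (n * R₁)⌉₊) (Fin ⌈(2 : ℝ) ^ (n * R₂)⌉₊),
      ∀ k, atTop.limsup (fun n => (C n).cost (iid p₁) (memoryless K) fun x₁ x₂ u₁ u₂ =>
          𝔼 t, e k (x₁ t) (x₂ t) (u₁ t) (u₂ t)) ≤ testCost p₁ K W₁ W₂ (e k) := by
  cases nonempty_fintype κ
  let dev (k : κ) {n : ℕ} := lossDeviation p₁ K W₁ W₂ (e k) (n := n)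
  choose G dev_le using fun k =>
    exists_lossDeviation_le (p₁ := p₁) (K := K) (W₁ := W₁) (W₂ := W₂) (e k)
  have G_nonneg (k : κ) : 0 ≤ G k := (lossDeviation_nonneg _ _ _ _ _).trans
    (dev_le k Fin.elim0 Fin.elim0 Fin.elim0 Fin.elim0)
  obtain ⟨δ, hδ, hcode⟩ := exists_cornerCode_block h₁ hK h₂ hR₁ hR₂
    (g := fun n x₁ x₂ u₁ u₂ => ∑ k, dev k x₁ x₂ u₁ u₂) (sum_nonneg fun k _ => G_nonneg k)
    fun n x₁ x₂ u₁ u₂ => ⟨sum_nonneg fun k _ => lossDeviation_nonneg _ _ _ _ _,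
      sum_le_sum fun k _ => dev_le k _ _ _ _⟩
  choose C hC using hcode
  simp only [testCost_sum] at hC
  have law := tendsto_finsetSum univ fun k _ => tendsto_testCost_lossDeviation h₁.left_mem
    hK.forward_mem h₁.forward_mem h₂.forward_mem (e k)
  have loss_le (k : κ) {n : ℕ} (x₁ : Fin n → A₁) x₂ u₁ u₂ : 𝔼 t, e k (x₁ t) (x₂ t) (u₁ t) (u₂ t)
      ≤ testCost p₁ K W₁ W₂ (e k) + ∑ k, dev k x₁ x₂ u₁ u₂ := by
    refine (expect_le_testCost_add_lossDeviation (e k) x₁ x₂ u₁ u₂).trans (add_le_add_right ?_ _)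
    exact single_le_sum (f := fun k => dev k x₁ x₂ u₁ u₂)
      (fun k _ => lossDeviation_nonneg _ _ _ _ _) (mem_univ k)
  have iid_mem (n : ℕ) : (iid p₁ : (Fin n → A₁) → ℝ) ∈ _ := iid_mem_stdSimplex h₁.left_mem
  have memoryless_mem (n : ℕ) := memoryless_mem_stdSimplex (ι := Fin n) hK.forward_mem
  refine ⟨C, fun k => limsup_le_of_le_add (fun n => ?_) (fun n => ?_) (by simpa using law.add hδ)⟩
  · exact (C n).cost_nonneg (iid_mem n) (memoryless_mem n) fun _ _ _ _ =>
      expect_nonneg fun _ _ => he k _ _ _ _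
  · refine ((C n).cost_mono (iid_mem n) (memoryless_mem n) (loss_le k)).trans ?_
    rw [(C n).cost_const_add (iid_mem n) (memoryless_mem n)]
    exact add_le_add_right (hC n) _

omit [Fintype A₂] in
lemma BayesPair.joint_mul_eq (h₁ : BayesPair p₁ W₁ q₁ V₁) (K : A₁ → A₂ → ℝ) (x₁ : A₁) (x₂ : A₂)
    (u₁ : B₁) : joint p₁ K (x₁, x₂) * W₁ x₁ u₁ = q₁ u₁ * (V₁ u₁ x₁ * K x₁ x₂) := by
  rw [← mul_assoc, ← h₁.mul_eq_mul, joint, mul_right_comm]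

lemma mutInf_source (h₁ : BayesPair p₁ W₁ q₁ V₁) (hK : ∀ x, K x ∈ stdSimplex ℝ A₂)
    (hW₂ : ∀ x, W₂ x ∈ stdSimplex ℝ B₂) :
    mutInf (fun x₁ u₁ => ∑ x₂, ∑ u₂, joint p₁ K (x₁, x₂) * W₁ x₁ u₁ * W₂ x₂ u₂)
      = channelInfo q₁ V₁ := by
  simp only [h₁.joint_mul_eq, ← mul_sum, (hW₂ _).2, mul_one, (hK _).2]
  exact mutInf_eq_channelInfo q₁ h₁.backward_mem

lemma condMutInf_source (h₁ : BayesPair p₁ W₁ q₁ V₁) (hK : BayesPair p₁ K p₂ K')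
    (h₂ : BayesPair p₂ W₂ q₂ V₂) :
    condMutInf (fun x₂ u₂ u₁ => ∑ x₁, joint p₁ K (x₁, x₂) * W₁ x₁ u₁ * W₂ x₂ u₂)
      = channelInfo q₂ V₂ - channelInfo q₁ (relay V₁ K W₂) := by
  have markov (x₂ : A₂) (u₂ : B₂) (u₁ : B₁) :
      ∑ x₁, joint p₁ K (x₁, x₂) * W₁ x₁ u₁ * W₂ x₂ u₂
        = q₁ u₁ * output (V₁ u₁) K x₂ * W₂ x₂ u₂ := by
    simp only [h₁.joint_mul_eq, ← sum_mul, ← mul_sum, output, mean]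
  have second_marginal : output q₁ (fun u₁ => output (V₁ u₁) K) = p₂ := by
    rw [← hK.symm.output_backward, ← h₁.output_backward]
    exact funext fun x₂ => (mean_output q₁ V₁ fun x₁ => K x₁ x₂).symm
  simp only [markov]
  rw [condMutInf_markov q₁ h₁.right_mem.1 (fun u₁ => output_mem_stdSimplex (h₁.backward_mem u₁)
    hK.forward_mem) h₂.forward_mem, second_marginal, h₂.channelInfo_comm]
  rfl

lemma sum_eq_testCost (g : A₁ → A₂ → B₁ → B₂ → ℝ) :
    ∑ u₁, ∑ x₁, ∑ x₂, ∑ u₂, joint p₁ K (x₁, x₂) * W₁ x₁ u₁ * W₂ x₂ u₂ * g x₁ x₂ u₁ u₂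
      = testCost p₁ K W₁ W₂ g := by
  simp only [testCost, mean, mul_sum, ← mul_assoc, joint]
  rw [sum_comm]
  exact sum_congr rfl fun x₁ _ => sum_comm

lemma exists_cornerCode_seq (hp₁ : p₁ ∈ stdSimplex ℝ A₁) (hK : ∀ x, K x ∈ stdSimplex ℝ A₂)
    (hW₁ : ∀ x, W₁ x ∈ stdSimplex ℝ B₁) (hW₂ : ∀ x, W₂ x ∈ stdSimplex ℝ B₂) {R₁ R₂ : ℝ}
    (hR₁ : mutInf (fun x₁ u₁ => ∑ x₂, ∑ u₂, joint p₁ K (x₁, x₂) * W₁ x₁ u₁ * W₂ x₂ u₂) < R₁)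
    (hR₂ : condMutInf (fun x₂ u₂ u₁ => ∑ x₁, joint p₁ K (x₁, x₂) * W₁ x₁ u₁ * W₂ x₂ u₂) < R₂)
    {e : κ → A₁ → A₂ → B₁ → B₂ → ℝ} (he : ∀ k x₁ x₂ u₁ u₂, 0 ≤ e k x₁ x₂ u₁ u₂) :
    ∃ C : ∀ n : ℕ, CornerCode (Fin n → A₁) (Fin n → A₂) (Fin n → B₁) (Fin n → B₂)
        (Fin ⌈(2 : ℝ) ^ (n * R₁)⌉₊) (Fin ⌈(2 : ℝ) ^ (n * R₂)⌉₊),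
      ∀ k, atTop.limsup (fun n => (C n).cost (iid p₁) (memoryless K) fun x₁ x₂ u₁ u₂ =>
          𝔼 t, e k (x₁ t) (x₂ t) (u₁ t) (u₂ t)) ≤ testCost p₁ K W₁ W₂ (e k) := by
  obtain ⟨V₁, h₁⟩ := exists_bayesPair hp₁ hW₁
  obtain ⟨K', hK'⟩ := exists_bayesPair hp₁ hK
  obtain ⟨V₂, h₂⟩ := exists_bayesPair hK'.right_mem hW₂
  rw [mutInf_source h₁ hK hW₂] at hR₁
  rw [condMutInf_source h₁ hK' h₂] at hR₂
  exact exists_cornerCode_seq_of_bayesPair h₁ hK' h₂ hR₁ hR₂ he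

end Achievability

section Decoder

variable {μ₁ μ₂ B₁ B₂ Y : Type*} [Fintype μ₁] [Fintype μ₂] [DecidableEq Y]

/-- The deterministic decoder, as a channel, that outputs the function `φ` of the two codewords
reconstructed by a corner code. -/
def CornerCode.decoder {A₁ A₂ : Type*} (C : CornerCode A₁ A₂ B₁ B₂ μ₁ μ₂) (φ : B₁ → B₂ → Y)
    (m₁ : μ₁) (m₂ : μ₂) : Y → ℝ :=
  Pi.single (φ (C.dec₁ m₁) (C.dec₂ (C.dec₁ m₁) m₂)) 1

lemma CornerCode.decoder_mem_stdSimplex {A₁ A₂ : Type*} [Fintype Y]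
    (C : CornerCode A₁ A₂ B₁ B₂ μ₁ μ₂) (φ : B₁ → B₂ → Y) (m₁ : μ₁) (m₂ : μ₂) :
    C.decoder φ m₁ m₂ ∈ stdSimplex ℝ Y :=
  single_mem_stdSimplex ℝ _

lemma CornerCode.sum_eq_cost_decoder {A₁ A₂ : Type*} [Fintype A₁] [Fintype A₂] [Fintype Y] {n : ℕ}
    (C : CornerCode (Fin n → A₁) (Fin n → A₂) B₁ B₂ μ₁ μ₂) (p : A₁ → ℝ) (K : A₁ → A₂ → ℝ)
    (φ : B₁ → B₂ → Y) (f : (Fin n → A₁) → (Fin n → A₂) → Y → Fin n → ℝ) :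
    ∑ x₁, ∑ x₂, (∏ t, joint p K (x₁ t, x₂ t)) * ∑ m₁, ∑ m₂, C.enc₁ x₁ m₁ * C.enc₂ x₂ m₂ *
        ∑ y, C.decoder φ m₁ m₂ y * ((n : ℝ)⁻¹ * ∑ t, f x₁ x₂ y t)
      = C.cost (iid p) (memoryless K) fun x₁ x₂ u₁ u₂ => 𝔼 t, f x₁ x₂ (φ u₁ u₂) t := by
  have decode (m₁ : μ₁) (m₂ : μ₂) (g : Y → ℝ) : ∑ y, C.decoder φ m₁ m₂ y * g y
      = g (φ (C.dec₁ m₁) (C.dec₂ (C.dec₁ m₁) m₂)) := by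
    simp only [decoder, Pi.single_apply, ite_mul, one_mul, zero_mul, sum_ite_eq', mem_univ, if_true]
  simp only [decode]
  simp only [cost, mean, iid, memoryless, piPmf, joint, prod_mul_distrib, mul_sum,
    mul_assoc, Fintype.expect_eq_sum_div_card, Fintype.card_fin, div_eq_inv_mul]

end Decoder

end BergerTung

/-- Berger–Tung corner point achievability: Let `P̄_{X₁X₂}` be a
joint source pmf on the finite set `X₁ × X₂`, `P̄_{U₁|X₁}`, `P̄_{U₂|X₂}`
conditional pmfs (so `U₁ − X₁ − X₂ − U₂` is Markov under
`P̄(u₁,x₁,x₂,u₂) = P̄_{X₁X₂}(x₁,x₂) P̄_{U₁|X₁}(u₁|x₁) P̄_{U₂|X₂}(u₂|x₂)`), and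
`φ_k : U₁ × U₂ → Y_k` reconstruction functions with
`E_{P̄}[d_k(X_k, φ_k(U₁,U₂))] ≤ D_k` for `k = 1,2`.  Then any rate pair with
`R₁ > I(X₁;U₁)` and `R₂ > I(X₂;U₂|U₁)` is achievable under distortions
`(D₁,D₂)`: there are message sets of sizes `≤ ⌈2^{nR₁}⌉` and `≤ ⌈2^{nR₂}⌉`,
separate stochastic encoders and a joint stochastic decoder (Markov kernels)
with `limsup_n E[(1/n) ∑ₜ d_k(X_{k,t}, Y_{k,t})] ≤ D_k`, `k = 1,2`, for the
i.i.d. sources `(X₁ₜ, X₂ₜ) ∼ P̄_{X₁X₂}`. -/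
theorem berger_tung_corner_point_achievability
    {X1 X2 U1 U2 Y1 Y2 : Type*}
    [Fintype X1] [Fintype X2] [Fintype U1] [Fintype U2] [Fintype Y1] [Fintype Y2]
    (Px : X1 × X2 → ℝ)
    (hPx0 : ∀ p, 0 ≤ Px p) (hPx1 : ∑ p, Px p = 1)
    (W1 : U1 → X1 → ℝ) (hW10 : ∀ u x, 0 ≤ W1 u x) (hW11 : ∀ x, ∑ u, W1 u x = 1)
    (W2 : U2 → X2 → ℝ) (hW20 : ∀ u x, 0 ≤ W2 u x) (hW21 : ∀ x, ∑ u, W2 u x = 1)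
    (d1 : X1 → Y1 → ℝ) (hd1 : ∀ x y, 0 ≤ d1 x y)
    (d2 : X2 → Y2 → ℝ) (hd2 : ∀ x y, 0 ≤ d2 x y)
    (φ1 : U1 → U2 → Y1) (φ2 : U1 → U2 → Y2)
    (D1 D2 : ℝ)
    (hD1 : ∑ u1, ∑ x1, ∑ x2, ∑ u2,
        Px (x1, x2) * W1 u1 x1 * W2 u2 x2 * d1 x1 (φ1 u1 u2) ≤ D1)
    (hD2 : ∑ u1, ∑ x1, ∑ x2, ∑ u2,
        Px (x1, x2) * W1 u1 x1 * W2 u2 x2 * d2 x2 (φ2 u1 u2) ≤ D2)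
    (R1 R2 : ℝ)
    (hR1 : R1 > mutInf (fun x1 u1 =>
        ∑ x2, ∑ u2, Px (x1, x2) * W1 u1 x1 * W2 u2 x2))
    (hR2 : R2 > condMutInf (fun x2 u2 u1 =>
        ∑ x1, Px (x1, x2) * W1 u1 x1 * W2 u2 x2)) :
    ∃ M1 M2 : ℕ → ℕ,
      (∀ n, M1 n ≤ Nat.ceil ((2 : ℝ) ^ ((n : ℝ) * R1))) ∧
      (∀ n, M2 n ≤ Nat.ceil ((2 : ℝ) ^ ((n : ℝ) * R2))) ∧
      ∃ (enc1 : ∀ n : ℕ, (Fin n → X1) → Fin (M1 n) → ℝ)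
        (enc2 : ∀ n : ℕ, (Fin n → X2) → Fin (M2 n) → ℝ)
        (dec : ∀ n : ℕ, Fin (M1 n) → Fin (M2 n) →
          ((Fin n → Y1) × (Fin n → Y2)) → ℝ),
        (∀ n x1n, (∀ m1, 0 ≤ enc1 n x1n m1) ∧ ∑ m1, enc1 n x1n m1 = 1) ∧
        (∀ n x2n, (∀ m2, 0 ≤ enc2 n x2n m2) ∧ ∑ m2, enc2 n x2n m2 = 1) ∧
        (∀ n m1 m2, (∀ y, 0 ≤ dec n m1 m2 y) ∧ ∑ y, dec n m1 m2 y = 1) ∧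
        Filter.atTop.limsup
          (fun n : ℕ =>
            ∑ x1n : Fin n → X1, ∑ x2n : Fin n → X2,
              (∏ t, Px (x1n t, x2n t)) *
                ∑ m1, ∑ m2, enc1 n x1n m1 * enc2 n x2n m2 *
                  ∑ y : (Fin n → Y1) × (Fin n → Y2), dec n m1 m2 y *
                    ((n : ℝ)⁻¹ * ∑ t, d1 (x1n t) (y.1 t)))
          ≤ D1 ∧
        Filter.atTop.limsup
          (fun n : ℕ =>
            ∑ x1n : Fin n → X1, ∑ x2n : Fin n → X2,
              (∏ t, Px (x1n t, x2n t)) *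
                ∑ m1, ∑ m2, enc1 n x1n m1 * enc2 n x2n m2 *
                  ∑ y : (Fin n → Y1) × (Fin n → Y2), dec n m1 m2 y *
                    ((n : ℝ)⁻¹ * ∑ t, d2 (x2n t) (y.2 t)))
          ≤ D2 := by
  classical
  obtain ⟨p, K, hp, hK, rfl⟩ := BergerTung.exists_joint_eq ⟨hPx0, hPx1⟩
  obtain ⟨C, hC⟩ := BergerTung.exists_cornerCode_seq hp hK
    (fun x => ⟨fun u => hW10 u x, hW11 x⟩) (fun x => ⟨fun u => hW20 u x, hW21 x⟩) hR1 hR2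
    (e := ![fun x₁ _ u₁ u₂ => d1 x₁ (φ1 u₁ u₂), fun _ x₂ u₁ u₂ => d2 x₂ (φ2 u₁ u₂)])
    (Fin.forall_fin_two.2 ⟨fun _ _ _ _ => hd1 _ _, fun _ _ _ _ => hd2 _ _⟩)
  let φ (n : ℕ) (u₁ : Fin n → U1) (u₂ : Fin n → U2) : (Fin n → Y1) × (Fin n → Y2) :=
    (fun t => φ1 (u₁ t) (u₂ t), fun t => φ2 (u₁ t) (u₂ t))
  refine ⟨_, _, fun _ => le_rfl, fun _ => le_rfl, fun n => (C n).enc₁, fun n => (C n).enc₂,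
    fun n => (C n).decoder (φ n), fun n => (C n).enc₁_mem, fun n => (C n).enc₂_mem,
    fun n => (C n).decoder_mem_stdSimplex (φ n), ?_, ?_⟩
  · simp only [BergerTung.CornerCode.sum_eq_cost_decoder]
    exact (hC 0).trans ((BergerTung.sum_eq_testCost _).symm.trans_le hD1)
  · simp only [BergerTung.CornerCode.sum_eq_cost_decoder]
    exact (hC 1).trans ((BergerTung.sum_eq_testCost _).symm.trans_le hD2)
end
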